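/- arXiv:math/0110223 — 2 statements merged into one kernel-verified Lean document; each statement's English description precedes it below -/
import Mathlib

section
/- Let p be an odd prime and H a non-semisimple Hopf algebra over k of dimension p² with antipode S. Then S^{2p} = id_H, and the order of S² (the smallest positive integer m with S^{2m} = id_H) equals p. -/
open scoped TensorProduct

/-- A group-like element of a coalgebra: a nonzero element `a` with `Δ a = a ⊗ a`. -/
def IsGroupLike (k : Type*) {H : Type*} [CommSemiring k] [AddCommMonoid H] [Module k H]
    [Coalgebra k H] (a : H) : Prop :=
  a ≠ 0 ∧ Coalgebra.comul (R := k) a = a ⊗ₜ[k] a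

/-- The convolution product on the dual of a coalgebra. -/
noncomputable def conv {k H : Type*} [CommSemiring k] [AddCommMonoid H] [Module k H]
    [Coalgebra k H] (f g : Module.Dual k H) : Module.Dual k H :=
  LinearMap.mul' k k ∘ₗ TensorProduct.map f g ∘ₗ Coalgebra.comul

/-- `l ∈ H*` is a right integral of `H*`: `l * β = β(1) • l` for the convolution product. -/
def IsRightIntegralDual (k : Type*) {H : Type*} [CommSemiring k] [Semiring H]
    [HopfAlgebra k H] (l : Module.Dual k H) : Prop :=
  ∀ f : Module.Dual k H, conv l f = f 1 • l

/-- `Λ ∈ H` is a left integral of `H`: `a * Λ = ε(a) • Λ` for all `a`. -/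
def IsLeftIntegral (k : Type*) {H : Type*} [CommSemiring k] [Semiring H]
    [HopfAlgebra k H] (L : H) : Prop :=
  ∀ a : H, a * L = Coalgebra.counit (R := k) a • L

/-- `Λ ∈ H` is a right integral of `H`: `Λ * a = ε(a) • Λ` for all `a`. -/
def IsRightIntegral (k : Type*) {H : Type*} [CommSemiring k] [Semiring H]
    [HopfAlgebra k H] (L : H) : Prop :=
  ∀ a : H, L * a = Coalgebra.counit (R := k) a • L

/-- `g` is the distinguished group-like element of `H`: it is group-like and
`β * λ = β(g) • λ` for some nonzero right integral `λ` of `H*`. -/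
def IsDistinguishedGroupLike (k : Type*) {H : Type*} [CommSemiring k] [Semiring H]
    [HopfAlgebra k H] (g : H) : Prop :=
  IsGroupLike k g ∧ ∃ l : Module.Dual k H, l ≠ 0 ∧ IsRightIntegralDual k l ∧
    ∀ f : Module.Dual k H, conv f l = f g • l

/-- `α` is the distinguished group-like element of `H*`: an algebra map `H → k` with
`Λ * a = α(a) • Λ` for some nonzero left integral `Λ` of `H`. -/
def IsDistinguishedGroupLikeDual (k : Type*) {H : Type*} [CommSemiring k] [Semiring H]
    [HopfAlgebra k H] (α : H →ₐ[k] k) : Prop :=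
  ∃ L : H, L ≠ 0 ∧ IsLeftIntegral k L ∧ ∀ a : H, L * a = α a • L

/-- `IsHopfIndex k g n` : `n` is the index of the Hopf algebra `H` with distinguished
group-like element `g`, i.e. the smallest positive integer `n` with `S ^ (4 n) = id` and
`g ^ n = 1`, where `S` is the antipode. -/
def IsHopfIndex (k : Type*) {H : Type*} [CommSemiring k] [Semiring H] [HopfAlgebra k H]
    (g : H) (n : ℕ) : Prop :=
  0 < n ∧ (HopfAlgebra.antipode (R := k) (A := H) : Module.End k H) ^ (4 * n) = 1 ∧ g ^ n = 1 ∧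
    ∀ m : ℕ, 0 < m → (HopfAlgebra.antipode (R := k) (A := H) : Module.End k H) ^ (4 * m) = 1 →
      g ^ m = 1 → n ≤ m

/-- The simultaneous eigenspace `H^ω_{a,i,j} = {u ∈ H | S² u = (-1)^a ω^i • u, u * g = ω^j • u}`
for `(a,i,j) ∈ ℤ/2 × ℤ/n × ℤ/n`. -/
noncomputable def hopfEigenspace {k H : Type*} [CommRing k] [Ring H] [HopfAlgebra k H]
    (g : H) (ω : k) {n : ℕ} (t : ZMod 2 × ZMod n × ZMod n) : Submodule k H :=
  Module.End.eigenspace ((HopfAlgebra.antipode (R := k) (A := H) : Module.End k H) ^ 2)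
      ((-1 : k) ^ t.1.val * ω ^ t.2.1.val) ⊓
    Module.End.eigenspace (LinearMap.mulRight k g : Module.End k H) (ω ^ t.2.2.val)

/-- Convolution powers of an element of the dual; the zeroth power is the counit,
the unit of the convolution algebra. -/
noncomputable def convPow {k H : Type*} [CommSemiring k] [AddCommMonoid H] [Module k H]
    [Coalgebra k H] (f : Module.Dual k H) : ℕ → Module.Dual k H
  | 0 => Coalgebra.counit
  | m + 1 => conv f (convPow f m)

namespace HopfDimPSq

set_option linter.unusedSimpArgs false
set_option linter.unusedSectionVars false

open Coalgebra HopfAlgebra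

section Sweedler

variable {k H V : Type*} [Field k] [Ring H] [HopfAlgebra k H] [AddCommGroup V] [Module k V]

/-- `F` is `k`-linear. -/
structure Lin (k : Type*) {H V : Type*} [Field k] [AddCommGroup H] [Module k H]
    [AddCommGroup V] [Module k V] (F : H → V) : Prop where
  add : ∀ x y, F (x + y) = F x + F y
  smul : ∀ (c : k) x, F (c • x) = c • F x

/-- `F` is `k`-linear in each of its two arguments. -/
structure Bilin (k : Type*) {H V : Type*} [Field k] [AddCommGroup H] [Module k H]
    [AddCommGroup V] [Module k V] (F : H → H → V) : Prop where
  add₁ : ∀ x x' y, F (x + x') y = F x y + F x' y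
  smul₁ : ∀ (c : k) x y, F (c • x) y = c • F x y
  add₂ : ∀ x y y', F x (y + y') = F x y + F x y'
  smul₂ : ∀ (c : k) x y, F x (c • y) = c • F x y

/-- `F` is `k`-linear in each of its three arguments. -/
structure Trilin (k : Type*) {H V : Type*} [Field k] [AddCommGroup H] [Module k H]
    [AddCommGroup V] [Module k V] (F : H → H → H → V) : Prop where
  add₁ : ∀ x x' y z, F (x + x') y z = F x y z + F x' y z
  smul₁ : ∀ (c : k) x y z, F (c • x) y z = c • F x y z
  add₂ : ∀ x y y' z, F x (y + y') z = F x y z + F x y' z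
  smul₂ : ∀ (c : k) x y z, F x (c • y) z = c • F x y z
  add₃ : ∀ x y z z', F x y (z + z') = F x y z + F x y z'
  smul₃ : ∀ (c : k) x y z, F x y (c • z) = c • F x y z

/-- The linear map underlying a linear function. -/
def Lin.toMap {F : H → V} (hF : Lin k F) : H →ₗ[k] V := ⟨⟨F, hF.add⟩, hF.smul⟩

/-- The bilinear map underlying a bilinear function. -/
def Bilin.toMap {F : H → H → V} (hF : Bilin k F) : H →ₗ[k] H →ₗ[k] V :=
  LinearMap.mk₂ k F hF.add₁ hF.smul₁ hF.add₂ hF.smul₂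

/-- The trilinear map underlying a trilinear function. -/
def Trilin.toMap {F : H → H → H → V} (hF : Trilin k F) : H →ₗ[k] H →ₗ[k] H →ₗ[k] V :=
  LinearMap.mk₂ k (fun x y => (⟨⟨F x y, hF.add₃ x y⟩, fun c => hF.smul₃ c x y⟩ : H →ₗ[k] V))
    (fun x x' y => LinearMap.ext (hF.add₁ x x' y)) (fun c x y => LinearMap.ext (hF.smul₁ c x y))
    (fun x y y' => LinearMap.ext (hF.add₂ x y y')) (fun c x y => LinearMap.ext (hF.smul₂ c x y))

/-- The Sweedler sum `∑ F a₁ a₂`. -/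
noncomputable def sw (k : Type*) {H V : Type*} [Field k] [Ring H] [HopfAlgebra k H]
    [AddCommGroup V] (a : H) (F : H → H → V) : V :=
  ∑ i ∈ (ℛ k a).index, F ((ℛ k a).left i) ((ℛ k a).right i)

lemma sw_add_fun (a : H) (F G : H → H → V) :
    sw k a (fun x y => F x y + G x y) = sw k a F + sw k a G := Finset.sum_add_distrib

lemma smul_sw (a : H) (F : H → H → V) (c : k) :
    c • sw k a F = sw k a (fun x y => c • F x y) := Finset.smul_sum

lemma sw_eq_lift (a : H) {F : H → H → V} (hF : Bilin k F) :
    sw k a F = TensorProduct.lift hF.toMap (comul a) := by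
  rw [← (ℛ k a).eq, map_sum]; rfl

lemma Bilin.sw {F : H → H → V} (hF : Bilin k F) : Lin k (fun a => sw k a F) where
  add x y := by simp only [sw_eq_lift _ hF, map_add]
  smul c x := by simp only [sw_eq_lift _ hF, map_smul]

lemma sw_congr (a : H) {F G : H → H → V} (h : ∀ x y, F x y = G x y) : sw k a F = sw k a G := by
  rw [show F = G from funext fun x => funext (h x)]

lemma map_sw {W : Type*} [AddCommGroup W] [Module k W] (f : V →ₗ[k] W) (a : H) (F : H → H → V) :
    f (sw k a F) = sw k a (fun x y => f (F x y)) := map_sum f _ _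

lemma sw_mul {A : Type*} [Ring A] (a : H) (F : H → H → A) (c : A) :
    sw k a F * c = sw k a (fun x y => F x y * c) := Finset.sum_mul _ _ _

lemma mul_sw {A : Type*} [Ring A] (a : H) (F : H → H → A) (c : A) :
    c * sw k a F = sw k a (fun x y => c * F x y) := Finset.mul_sum _ _ _

lemma sw_comm (a b : H) (F : H → H → H → H → V) :
    sw k a (fun x y => sw k b (F x y)) = sw k b (fun z w => sw k a (fun x y => F x y z w)) :=
  Finset.sum_comm

lemma sw_assoc (a : H) {F : H → H → H → V} (hF : Trilin k F := by
      constructor <;> intros <;> simp [add_mul, mul_add, add_smul, smul_smul, mul_assoc,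
      mul_comm, mul_left_comm, TensorProduct.add_tmul, TensorProduct.tmul_add,
      ← TensorProduct.smul_tmul', sw_add_fun, smul_sw]) :
    sw k a (fun x y => sw k x (fun x₁ x₂ => F x₁ x₂ y)) =
      sw k a (fun x y => sw k y (F x)) := by
  have h := congrArg (TensorProduct.lift (TensorProduct.uncurry (.id k) H H V ∘ₗ hF.toMap))
    (sum_tmul_tmul_eq (ℛ k a) (fun _ => ℛ k _) (fun _ => ℛ k _))
  simp only [map_sum, TensorProduct.lift.tmul] at h
  exact h

lemma sw_prod (a b : H) {F : H → H → V} (hF : Bilin k F := by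
      constructor <;> intros <;> simp [add_mul, mul_add, add_smul, smul_smul, mul_assoc,
      mul_comm, mul_left_comm, TensorProduct.add_tmul, TensorProduct.tmul_add,
      ← TensorProduct.smul_tmul', sw_add_fun, smul_sw]) :
    sw k (a * b) F = sw k a (fun a₁ a₂ => sw k b (fun b₁ b₂ => F (a₁ * b₁) (a₂ * b₂))) := by
  rw [sw_eq_lift _ hF, Bialgebra.comul_mul, ← (ℛ k a).eq, ← (ℛ k b).eq, Finset.sum_mul_sum]
  simp only [map_sum, Algebra.TensorProduct.tmul_mul_tmul, TensorProduct.lift.tmul]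
  rfl

lemma sw_one {F : H → H → V} (hF : Bilin k F := by
      constructor <;> intros <;> simp [add_mul, mul_add, add_smul, smul_smul, mul_assoc,
      mul_comm, mul_left_comm, TensorProduct.add_tmul, TensorProduct.tmul_add,
      ← TensorProduct.smul_tmul', sw_add_fun, smul_sw]) : sw k (1 : H) F = F 1 1 := by
  rw [sw_eq_lift _ hF, Bialgebra.comul_one]; rfl

lemma sw_groupLike {g : H} (hg : IsGroupLikeElem k g) {F : H → H → V} (hF : Bilin k F := by
      constructor <;> intros <;> simp [add_mul, mul_add, add_smul, smul_smul, mul_assoc,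
      mul_comm, mul_left_comm, TensorProduct.add_tmul, TensorProduct.tmul_add,
      ← TensorProduct.smul_tmul', sw_add_fun, smul_sw]) :
    sw k g F = F g g := by
  rw [sw_eq_lift _ hF, hg.comul_eq_tmul_self]; rfl

lemma sw_tmul (a : H) : sw k a (fun x y => x ⊗ₜ[k] y) = comul a := (ℛ k a).eq

lemma sw_counit_left (a : H) {F : H → V} (hF : Lin k F := by
      constructor <;> intros <;> simp [add_mul, mul_add, add_smul, smul_smul, mul_assoc,
      mul_comm, mul_left_comm, TensorProduct.add_tmul, TensorProduct.tmul_add,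
      ← TensorProduct.smul_tmul', sw_add_fun, smul_sw]) :
    sw k a (fun x y => counit (R := k) x • F y) = F a := by
  have h := congrArg hF.toMap (sum_counit_smul (ℛ k a))
  simp only [map_sum, map_smul] at h
  exact h

lemma sw_counit_right (a : H) {F : H → V} (hF : Lin k F := by
      constructor <;> intros <;> simp [add_mul, mul_add, add_smul, smul_smul, mul_assoc,
      mul_comm, mul_left_comm, TensorProduct.add_tmul, TensorProduct.tmul_add,
      ← TensorProduct.smul_tmul', sw_add_fun, smul_sw]) :
    sw k a (fun x y => counit (R := k) y • F x) = F a := by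
  have h := congrArg (TensorProduct.lift ((LinearMap.lsmul k V).flip ∘ₗ hF.toMap))
    (sum_tmul_counit_eq (ℛ k a))
  simp only [map_sum, TensorProduct.lift.tmul] at h
  exact h.trans (one_smul k _)

lemma sw_antipode_mul (a : H) {F : H → V} (hF : Lin k F := by
      constructor <;> intros <;> simp [add_mul, mul_add, add_smul, smul_smul, mul_assoc,
      mul_comm, mul_left_comm, TensorProduct.add_tmul, TensorProduct.tmul_add,
      ← TensorProduct.smul_tmul', sw_add_fun, smul_sw]) :
    sw k a (fun x y => F (antipode k x * y)) = counit (R := k) a • F 1 := by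
  have h := congrArg hF.toMap (sum_antipode_mul_eq_smul (ℛ k a))
  simp only [map_sum, map_smul] at h
  exact h

lemma sw_mul_antipode (a : H) {F : H → V} (hF : Lin k F := by
      constructor <;> intros <;> simp [add_mul, mul_add, add_smul, smul_smul, mul_assoc,
      mul_comm, mul_left_comm, TensorProduct.add_tmul, TensorProduct.tmul_add,
      ← TensorProduct.smul_tmul', sw_add_fun, smul_sw]) :
    sw k a (fun x y => F (x * antipode k y)) = counit (R := k) a • F 1 := by
  have h := congrArg hF.toMap (sum_mul_antipode_eq_smul (ℛ k a))
  simp only [map_sum, map_smul] at h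
  exact h

lemma Bilin.flip {F : H → H → V} (hF : Bilin k F) : Bilin k (fun x y => F y x) :=
  ⟨fun _ _ _ => hF.add₂ _ _ _, fun _ _ _ => hF.smul₂ _ _ _,
    fun _ _ _ => hF.add₁ _ _ _, fun _ _ _ => hF.smul₁ _ _ _⟩

lemma Bilin.lin₁ {F : H → H → V} (hF : Bilin k F) (y : H) : Lin k (fun x => F x y) :=
  ⟨fun _ _ => hF.add₁ _ _ _, fun _ _ => hF.smul₁ _ _ _⟩

lemma Bilin.lin₂ {F : H → H → V} (hF : Bilin k F) (x : H) : Lin k (F x) :=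
  ⟨fun _ _ => hF.add₂ _ _ _, fun _ _ => hF.smul₂ _ _ _⟩

/-- `∑ F a₁ (S(a₂) a₃) = F a 1`. -/
lemma sw_right_antipode_mul (a : H) {F : H → H → V} (hF : Bilin k F := by
      constructor <;> intros <;> simp [add_mul, mul_add, add_smul, smul_smul, mul_assoc,
      mul_comm, mul_left_comm, TensorProduct.add_tmul, TensorProduct.tmul_add,
      ← TensorProduct.smul_tmul', sw_add_fun, smul_sw]) :
    sw k a (fun x y => sw k y (fun y₁ y₂ => F x (antipode k y₁ * y₂))) = F a 1 := by
  simp only [sw_antipode_mul _ (hF.lin₂ _), sw_counit_right a (hF.lin₁ 1)]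

/-- `∑ F a₁ (a₂ S(a₃)) = F a 1`. -/
lemma sw_right_mul_antipode (a : H) {F : H → H → V} (hF : Bilin k F := by
      constructor <;> intros <;> simp [add_mul, mul_add, add_smul, smul_smul, mul_assoc,
      mul_comm, mul_left_comm, TensorProduct.add_tmul, TensorProduct.tmul_add,
      ← TensorProduct.smul_tmul', sw_add_fun, smul_sw]) :
    sw k a (fun x y => sw k y (fun y₁ y₂ => F x (y₁ * antipode k y₂))) = F a 1 := by
  simp only [sw_mul_antipode _ (hF.lin₂ _), sw_counit_right a (hF.lin₁ 1)]

/-- `∑ F (S(a₁) a₂) a₃ = F 1 a`. -/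
lemma sw_left_antipode_mul (a : H) {F : H → H → V} (hF : Bilin k F := by
      constructor <;> intros <;> simp [add_mul, mul_add, add_smul, smul_smul, mul_assoc,
      mul_comm, mul_left_comm, TensorProduct.add_tmul, TensorProduct.tmul_add,
      ← TensorProduct.smul_tmul', sw_add_fun, smul_sw]) :
    sw k a (fun x y => sw k x (fun x₁ x₂ => F (antipode k x₁ * x₂) y)) = F 1 a := by
  simp only [sw_antipode_mul _ (hF.lin₁ _), sw_counit_left a (hF.lin₂ 1)]

/-- `∑ F (a₁ S(a₂)) a₃ = F 1 a`. -/
lemma sw_left_mul_antipode (a : H) {F : H → H → V} (hF : Bilin k F := by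
      constructor <;> intros <;> simp [add_mul, mul_add, add_smul, smul_smul, mul_assoc,
      mul_comm, mul_left_comm, TensorProduct.add_tmul, TensorProduct.tmul_add,
      ← TensorProduct.smul_tmul', sw_add_fun, smul_sw]) :
    sw k a (fun x y => sw k x (fun x₁ x₂ => F (x₁ * antipode k x₂) y)) = F 1 a := by
  simp only [sw_mul_antipode _ (hF.lin₁ _), sw_counit_left a (hF.lin₂ 1)]

lemma comul_antipode (a : H) :
    comul (antipode k a) = sw k a (fun x y => antipode k y ⊗ₜ[k] antipode k x) := by
  have hG : Bilin k (fun x y : H => antipode k y ⊗ₜ[k] antipode k x) := by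
    constructor <;> intros <;> simp [add_mul, mul_add, add_smul, smul_smul, mul_assoc,
      mul_comm, mul_left_comm, TensorProduct.add_tmul, TensorProduct.tmul_add,
      ← TensorProduct.smul_tmul', sw_add_fun, smul_sw]
  have key : WithConv.toConv (comul ∘ₗ antipode k (A := H)) =
      WithConv.toConv (hG.sw.toMap) := by
    refine (left_inv_eq_right_inv ?_ LinearMap.comul_right_inv).symm
    ext a
    rw [(ℛ k a).convMul_apply, LinearMap.convOne_apply]
    change sw k a (fun x y => sw k x (fun x₁ x₂ => antipode k x₂ ⊗ₜ[k] antipode k x₁) *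
      comul y) = _
    simp only [sw_mul]
    rw [sw_assoc a (F := fun x₁ x₂ y => (antipode k x₂ ⊗ₜ[k] antipode k x₁) * comul y)]
    have inner : ∀ x y : H, sw k y (fun y₁ y₂ => (antipode k y₁ ⊗ₜ[k] antipode k x) *
        comul (R := k) y₂) = 1 ⊗ₜ[k] (antipode k x * y) := fun x y => by
      simp only [← sw_tmul, mul_sw, Algebra.TensorProduct.tmul_mul_tmul]
      rw [← sw_assoc y (F := fun y₁ z₁ z₂ =>
        (antipode k y₁ * z₁) ⊗ₜ[k] (antipode k x * z₂))]
      exact sw_left_antipode_mul y (F := fun u v => u ⊗ₜ[k] (antipode k x * v))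
    simp only [inner]
    rw [sw_antipode_mul a (F := fun u => (1 : H) ⊗ₜ[k] u)]
    rw [Algebra.algebraMap_eq_smul_one]; rfl
  exact LinearMap.congr_fun (WithConv.toConv_injective key) a

lemma sw_antipode (a : H) {F : H → H → V} (hF : Bilin k F := by
      constructor <;> intros <;> simp [add_mul, mul_add, add_smul, smul_smul, mul_assoc,
      mul_comm, mul_left_comm, TensorProduct.add_tmul, TensorProduct.tmul_add,
      ← TensorProduct.smul_tmul', sw_add_fun, smul_sw]) :
    sw k (antipode k a) F = sw k a (fun x y => F (antipode k y) (antipode k x)) := by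
  rw [sw_eq_lift _ hF, comul_antipode, map_sw]
  rfl

end Sweedler

section Integrals

variable {k H V : Type*} [Field k] [Ring H] [HopfAlgebra k H] [AddCommGroup V] [Module k V]

/-- The right hit action `a ↦ ∑ f(a₁) a₂` of the dual. -/
noncomputable def hitL (f : H →ₗ[k] k) : H →ₗ[k] H :=
  Lin.toMap (F := fun a => sw k a (fun x y => f x • y)) (Bilin.sw (by
    constructor <;> intros <;> simp [add_smul, smul_smul, mul_comm]))

lemma hitL_apply (f : H →ₗ[k] k) (a : H) : hitL f a = sw k a (fun x y => f x • y) := rfl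

/-- The left hit action `a ↦ ∑ f(a₂) a₁` of the dual. -/
noncomputable def hitR (f : H →ₗ[k] k) : H →ₗ[k] H :=
  Lin.toMap (F := fun a => sw k a (fun x y => f y • x)) (Bilin.sw (by
    constructor <;> intros <;> simp [add_smul, smul_smul, mul_comm]))

lemma hitR_apply (f : H →ₗ[k] k) (a : H) : hitR f a = sw k a (fun x y => f y • x) := rfl

/-- The square of the antipode. -/
noncomputable def S2 (k H : Type*) [Field k] [Ring H] [HopfAlgebra k H] : H →ₗ[k] H :=
  antipode k ∘ₗ antipode k

lemma S2_apply (a : H) : S2 k H a = antipode k (antipode k a) := rfl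

lemma S2_mul (a b : H) : S2 k H (a * b) = S2 k H a * S2 k H b := by
  simp only [S2_apply, antipode_mul_antidistrib]

lemma sw_S2 (a : H) {F : H → H → V} (hF : Bilin k F) :
    sw k (S2 k H a) F = sw k a (fun x y => F (S2 k H x) (S2 k H y)) := by
  have hF' : Bilin k (fun x y => F (antipode k y) (antipode k x)) := by
    constructor <;> intros <;> simp [hF.add₁, hF.add₂, hF.smul₁, hF.smul₂]
  rw [S2_apply, sw_antipode _ hF, sw_antipode _ hF']
  rfl

lemma S2_hitL_comp_mulLeft (f : H →ₗ[k] k) (a y : H) :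
    S2 k H (hitL (f ∘ₗ LinearMap.mulLeft k a) y) =
      sw k a (fun a₁ a₂ => antipode k a₂ * S2 k H (hitL f (a₁ * y))) := by
  have h : ∀ a₁ : H, hitL f (a₁ * y) =
      sw k a₁ (fun u v => sw k y (fun y₁ y₂ => f (u * y₁) • (v * y₂))) := fun a₁ => by
    rw [hitL_apply, sw_prod]
  simp only [h, map_sw, mul_sw, map_smul, S2_mul, mul_smul_comm]
  rw [sw_assoc a (F := fun u v w => sw k y (fun y₁ y₂ =>
    f (u * y₁) • (antipode k w * (S2 k H v * S2 k H y₂))))]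
  have h' : ∀ v w z : H, antipode k w * (S2 k H v * z) = antipode k (antipode k v * w) * z :=
    fun v w z => by rw [antipode_mul_antidistrib, S2_apply, mul_assoc]
  simp only [h']
  rw [sw_right_antipode_mul a (F := fun u v => sw k y (fun y₁ y₂ =>
    f (u * y₁) • (antipode k v * S2 k H y₂)))]
  simp [hitL_apply, map_sw]

variable [FiniteDimensional k H]

/-- The functional `f ↦ tr (y ↦ ∑ f(y₁) S²(y₂) x)`. -/
noncomputable def traceForm (f : H →ₗ[k] k) (x : H) : k :=
  LinearMap.trace k H (LinearMap.mulRight k x ∘ₗ S2 k H ∘ₗ hitL f)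

lemma traceForm_comp_mulLeft (f : H →ₗ[k] k) (a x : H) :
    traceForm (f ∘ₗ LinearMap.mulLeft k a) x = counit (R := k) a • traceForm f x := by
  have h : LinearMap.mulRight k x ∘ₗ S2 k H ∘ₗ hitL (f ∘ₗ LinearMap.mulLeft k a) =
      sw k a (fun a₁ a₂ => (LinearMap.mulRight k x ∘ₗ LinearMap.mulLeft k (antipode k a₂) ∘ₗ
        S2 k H ∘ₗ hitL f) ∘ₗ LinearMap.mulLeft k a₁) := by
    ext y
    simp only [LinearMap.comp_apply, S2_hitL_comp_mulLeft]
    simp [sw, Finset.sum_mul]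
  have h' : ∀ a₁ a₂ : H, LinearMap.trace k H ((LinearMap.mulRight k x ∘ₗ
      LinearMap.mulLeft k (antipode k a₂) ∘ₗ S2 k H ∘ₗ hitL f) ∘ₗ LinearMap.mulLeft k a₁) =
      LinearMap.trace k H (LinearMap.mulLeft k (a₁ * antipode k a₂) ∘ₗ LinearMap.mulRight k x ∘ₗ
        S2 k H ∘ₗ hitL f) := fun a₁ a₂ => by
    rw [LinearMap.trace_comp_comm']
    congr 1
    ext y
    simp [mul_assoc]
  have hF : Lin k (fun b => LinearMap.trace k H (LinearMap.mulLeft k b ∘ₗ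
      LinearMap.mulRight k x ∘ₗ S2 k H ∘ₗ hitL f)) := by
    constructor
    · intro b c
      rw [← map_add]; congr 1; ext y; simp [add_mul]
    · intro r b
      rw [← map_smul]; congr 1; ext y; simp
  rw [traceForm, h, map_sw]
  simp only [h']
  rw [sw_mul_antipode a hF]
  congr 2
  ext y
  simp

lemma exists_traceForm_ne_zero : ∃ (f : H →ₗ[k] k) (x : H), traceForm f x ≠ 0 := by
  by_contra! h0
  let b := Module.finBasis k H
  let e : H →ₗ[k] k := counit
  have hB : ∀ i, Bilin k (fun x y : H => e x * b.coord i y) := fun i => by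
    constructor <;> intros <;> simp [add_mul, mul_add, mul_assoc, mul_left_comm]
  have hsum : ∑ i, LinearMap.mulRight k (antipode k (b i)) ∘ₗ S2 k H ∘ₗ hitL (hB i).sw.toMap =
      e.smulRight (1 : H) := by
    ext z
    have h1 : ∀ i, hitL (hB i).sw.toMap z =
        sw k z (fun u v => sw k v (fun v₁ v₂ => (e u * b.coord i v₁) • v₂)) := fun i => by
      rw [← sw_assoc z (F := fun u v₁ v₂ => (e u * b.coord i v₁) • v₂), hitL_apply]
      exact sw_congr z fun x y => Finset.sum_smul
    have h2 : ∀ u v₁ v₂ : H, ∑ i, (e u * b.coord i v₁) • (S2 k H v₂ * antipode k (b i)) =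
        e u • antipode k (v₁ * antipode k v₂) := fun u v₁ v₂ => by
      have hv : antipode k v₁ = ∑ i, b.repr v₁ i • antipode k (b i) := by
        conv_lhs => rw [← b.sum_repr v₁]
        simp only [map_sum, map_smul]
      rw [antipode_mul_antidistrib, ← S2_apply, hv]
      simp [Finset.mul_sum, Finset.smul_sum, smul_smul]
    simp only [LinearMap.sum_apply, LinearMap.comp_apply, h1, map_sw, map_smul,
      LinearMap.mulRight_apply]
    simp only [sw]
    rw [Finset.sum_comm]
    simp_rw [Finset.sum_comm (s := Finset.univ), h2]
    have := sw_right_mul_antipode (k := k) z (F := fun u v => e u • antipode k v)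
    simpa [sw] using this
  have ht := congrArg (LinearMap.trace k H) hsum
  have h0' : ∀ i, LinearMap.trace k H (LinearMap.mulRight k (antipode k (b i)) ∘ₗ S2 k H ∘ₗ
      hitL (hB i).sw.toMap) = 0 := fun i => h0 _ _
  simp only [map_sum, h0', Finset.sum_const_zero] at ht
  rw [LinearMap.trace_smulRight] at ht
  simp [e] at ht

lemma exists_leftIntegral : ∃ t : H, t ≠ 0 ∧ ∀ a : H, a * t = counit (R := k) a • t := by
  obtain ⟨f, x, hfx⟩ := exists_traceForm_ne_zero (k := k) (H := H)
  have hlin : ∀ y, Lin k (fun f : H →ₗ[k] k => hitL f y) := fun y => by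
    constructor <;> intros <;> simp [hitL_apply, add_smul, sw_add_fun, smul_sw, smul_smul]
  let Φ : Module.Dual k (Module.Dual k H) :=
    { toFun := fun f => traceForm f x
      map_add' := fun f f' => by
        rw [traceForm, traceForm, traceForm, ← map_add]
        congr 1; ext y
        simp [(hlin y).add, add_mul]
      map_smul' := fun c f => by
        rw [traceForm, traceForm, RingHom.id_apply, ← map_smul]
        congr 1; ext y
        simp [(hlin y).smul] }
  obtain ⟨t, ht⟩ := (Module.evalEquiv k H).surjective Φ
  have ht' : ∀ f : H →ₗ[k] k, f t = traceForm f x := fun f => LinearMap.congr_fun ht f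
  refine ⟨t, fun h => hfx (by rw [← ht', h, map_zero]), fun a => ?_⟩
  rw [← sub_eq_zero, ← Module.forall_dual_apply_eq_zero_iff k]
  intro f
  have h1 := ht' (f ∘ₗ LinearMap.mulLeft k a)
  rw [traceForm_comp_mulLeft, ← ht'] at h1
  simpa [sub_eq_zero] using h1

end Integrals

section Frobenius

variable {k H V : Type*} [Field k] [Ring H] [HopfAlgebra k H] [AddCommGroup V] [Module k V]

lemma sw_smul_left (c : k) (a : H) {F : H → H → V} (hF : Bilin k F := by
      constructor <;> intros <;> simp [add_mul, mul_add, add_smul, smul_smul, mul_assoc,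
      mul_comm, mul_left_comm, TensorProduct.add_tmul, TensorProduct.tmul_add,
      ← TensorProduct.smul_tmul', sw_add_fun, smul_sw]) :
    sw k (c • a) F = c • sw k a F := hF.sw.smul c a

/-- The Casimir identity `∑ a t₁ ⊗ S(t₂) = ∑ t₁ ⊗ S(t₂) a` for a left integral `t`. -/
lemma sw_integral_mul {t : H} (ht : ∀ a : H, a * t = counit (R := k) a • t) (a : H)
    {F : H → H → V} (hF : Bilin k F := by
      constructor <;> intros <;> simp [add_mul, mul_add, add_smul, smul_smul, mul_assoc,
      mul_comm, mul_left_comm, TensorProduct.add_tmul, TensorProduct.tmul_add,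
      ← TensorProduct.smul_tmul', sw_add_fun, smul_sw]) :
    sw k t (fun x y => F (a * x) (antipode k y)) = sw k t (fun x y => F x (antipode k y * a)) := by
  obtain ⟨G, rfl⟩ : ∃ G : H →ₗ[k] H →ₗ[k] V, F = fun x y => G x y := ⟨hF.toMap, rfl⟩
  have h1 := sw_right_antipode_mul (k := k) a
    (F := fun u v => sw k t (fun x y => G (u * x) (antipode k y * v)))
  rw [← sw_assoc a (F := fun u v w => sw k t (fun x y => G (u * x)
    (antipode k y * (antipode k v * w))))] at h1
  have h2 : ∀ u w : H, sw k u (fun u₁ u₂ => sw k t (fun x y => G (u₁ * x)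
      (antipode k y * (antipode k u₂ * w)))) =
      counit (R := k) u • sw k t (fun x y => G x (antipode k y * w)) := fun u w => by
    rw [← sw_smul_left _ _ (F := fun x y => G x (antipode k y * w)), ← ht, sw_prod _ _]
    simp only [antipode_mul_antidistrib, mul_assoc]
  simp only [h2] at h1
  rw [sw_counit_left a (F := fun w => sw k t (fun x y => G x (antipode k y * w)))] at h1
  simpa using h1.symm

/-- The map `φ ↦ ∑ φ(S(t₂)) t₁` from the dual. -/
noncomputable def theta (t : H) : (H →ₗ[k] k) →ₗ[k] H where
  toFun φ := sw k t (fun x y => φ (antipode k y) • x)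
  map_add' φ ψ := by simp [add_smul, sw_add_fun]
  map_smul' c φ := by simp [smul_sw, smul_smul]

lemma theta_apply (t : H) (φ : H →ₗ[k] k) :
    theta t φ = sw k t (fun x y => φ (antipode k y) • x) := rfl

lemma mul_theta {t : H} (ht : ∀ a : H, a * t = counit (R := k) a • t) (φ : H →ₗ[k] k) (a : H) :
    a * theta t φ = sw k t (fun x y => φ (antipode k y * a) • x) := by
  rw [← sw_integral_mul ht a (F := fun x y => φ y • x), theta_apply, mul_sw]
  simp

variable [FiniteDimensional k H]

lemma sw_eq_sum_hitR {ι : Type*} [Fintype ι] (b : Module.Basis ι k H) (u : H)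
    (G : H →ₗ[k] H →ₗ[k] V) :
    sw k u (fun x y => G x y) = ∑ i, G (hitR (b.coord i) u) (b i) := by
  have h : ∀ x y : H, G x y = ∑ i, b.coord i y • G x (b i) := fun x y => by
    conv_lhs => rw [← b.sum_repr y]
    simp only [map_sum, map_smul, Module.Basis.coord_apply]
  refine (sw_congr u h).trans ?_
  simp only [hitR_apply, sw, map_sum, map_smul, LinearMap.sum_apply, LinearMap.smul_apply]
  rw [Finset.sum_comm]

lemma theta_injective {t : H} (ht : ∀ a : H, a * t = counit (R := k) a • t) (ht0 : t ≠ 0) :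
    Function.Injective (theta (k := k) t) := by
  rw [injective_iff_map_eq_zero]
  intro φ hφ
  ext x
  let b := Module.finBasis k H
  have h0 : ∀ y, sw k t (fun u v => φ (antipode k v * y) • u) = 0 := fun y => by
    rw [← mul_theta ht, hφ, mul_zero]
  have h1 : ∀ u v : H, sw k u (fun u₁ u₂ => φ (antipode k v * (S2 k H u₂ * x)) • u₁) =
      ∑ i, hitR (b.coord i) (φ (antipode k v * (S2 k H (b i) * x)) • u) := fun u v => by
    have hB : Bilin k (fun u₁ u₂ : H => φ (antipode k v * (S2 k H u₂ * x)) • u₁) := by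
      constructor <;> intros <;> simp [add_mul, mul_add, add_smul, smul_smul, mul_comm]
    refine (sw_eq_sum_hitR b u hB.toMap).trans (Finset.sum_congr rfl fun i _ => ?_)
    rw [map_smul]; rfl
  have h2 : sw k t (fun u v => sw k u (fun u₁ u₂ =>
      φ (antipode k v * (S2 k H u₂ * x)) • u₁)) = 0 := by
    simp only [h1]
    rw [sw, Finset.sum_comm]
    refine Finset.sum_eq_zero fun i _ => ?_
    rw [← map_sum]
    exact (congrArg _ (h0 _)).trans (map_zero _)
  rw [sw_assoc t (F := fun u v w => φ (antipode k w * (S2 k H v * x)) • u)] at h2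
  have h' : ∀ v w z : H, antipode k w * (S2 k H v * z) = antipode k (antipode k v * w) * z :=
    fun v w z => by rw [antipode_mul_antidistrib, S2_apply, mul_assoc]
  simp only [h'] at h2
  rw [sw_right_antipode_mul t (F := fun u v => φ (antipode k v * x) • u)] at h2
  simpa [ht0] using h2

/-- A left integral `t` of `H` together with a functional `l` normalised by `∑ l(S(t₂)) t₁ = 1`. -/
structure IntegralPair (t : H) (l : H →ₗ[k] k) : Prop where
  mul_left : ∀ a : H, a * t = counit (R := k) a • t
  theta_eq : theta t l = 1

variable (k H) in
lemma exists_integralPair : ∃ (t : H) (l : H →ₗ[k] k), IntegralPair t l := by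
  obtain ⟨t, ht0, ht⟩ := exists_leftIntegral (k := k) (H := H)
  have hs : Function.Surjective (theta (k := k) t) :=
    (LinearMap.injective_iff_surjective_of_finrank_eq_finrank
      (Subspace.dual_finrank_eq (K := k) (V := H))).1 (theta_injective ht ht0)
  obtain ⟨l, hl⟩ := hs 1
  exact ⟨t, l, ht, hl⟩

namespace IntegralPair

variable {t : H} {l : H →ₗ[k] k}

lemma sw_antipode_mul_smul (h : IntegralPair t l) (a : H) :
    sw k t (fun x y => l (antipode k y * a) • x) = a := by
  rw [← mul_theta h.mul_left, h.theta_eq, mul_one]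

lemma eq_smul (h : IntegralPair t l) {t' : H} (ht' : ∀ a : H, a * t' = counit (R := k) a • t') :
    t' = l t' • t := by
  conv_lhs => rw [← h.sw_antipode_mul_smul t']
  simp only [ht', map_smul, counit_antipode, smul_eq_mul, mul_smul]
  exact sw_counit_right t (F := fun x => l t' • x)

lemma apply_eq_one (h : IntegralPair t l) : l t = 1 := by
  have ht := h.eq_smul h.mul_left
  have h1 : t ≠ 0 := by
    rintro rfl
    have h0 := h.theta_eq
    have hz := (Bilin.sw (k := k) (F := fun x y : H => l (antipode k y) • x) (by
      constructor <;> intros <;> simp [add_smul, smul_smul, mul_comm])).toMap.map_zero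
    have := congrArg (counit (R := k)) (hz.symm.trans h0)
    simp at this
  by_contra hne
  have : (1 - l t) • t = 0 := by rw [sub_smul, one_smul, ← ht, sub_self]
  rcases smul_eq_zero.1 this with h2 | h2
  · exact hne (sub_eq_zero.1 h2).symm
  · exact h1 h2

lemma sw_mul_smul_antipode (h : IntegralPair t l) (a : H) :
    sw k t (fun x y => l (a * x) • antipode k y) = a := by
  let B : H →ₗ[k] (H →ₗ[k] k) :=
    { toFun := fun a => l ∘ₗ LinearMap.mulRight k a
      map_add' := fun a b => by ext; simp [mul_add]
      map_smul' := fun c a => by ext; simp }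
  have hBT : ∀ a, theta t (B a) = a := fun a => by
    rw [theta_apply]; exact h.sw_antipode_mul_smul a
  have hinj : Function.Injective (theta (k := k) t) :=
    (LinearMap.injective_iff_surjective_of_finrank_eq_finrank
      (Subspace.dual_finrank_eq (K := k) (V := H))).2 fun a => ⟨_, hBT a⟩
  rw [← sub_eq_zero, ← Module.forall_dual_apply_eq_zero_iff k]
  intro φ
  have h1 : B (theta t φ) = φ := hinj (hBT _)
  have h2 := LinearMap.congr_fun h1 a
  rw [map_sub, sub_eq_zero, ← h2]
  simp [B, theta_apply, sw, Finset.mul_sum, mul_comm]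

lemma antipode_injective (h : IntegralPair t l) : Function.Injective (antipode k (A := H)) := by
  refine LinearMap.injective_iff_surjective.2 fun a => ⟨sw k t (fun x y => l (a * x) • y), ?_⟩
  rw [map_sw]
  simpa using h.sw_mul_smul_antipode a

lemma sw_left (h : IntegralPair t l) (x : H) : sw k x (fun x₁ x₂ => l x₁ • x₂) = l x • 1 := by
  have hB : Bilin k (fun x₁ x₂ : H => l x₁ • x₂) := by
    constructor <;> intros <;> simp [add_smul, smul_smul, mul_comm]
  have hQ : Bilin k (fun z₁ z₂ : H => l (x * z₁) • antipode k z₂) := by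
    constructor <;> intros <;> simp [add_smul, mul_add, smul_smul, mul_comm]
  have h1 : hB.sw.toMap x = hQ.sw.toMap (theta t l) := by
    conv_lhs => rw [← h.sw_mul_smul_antipode x]
    rw [theta_apply, map_sw, map_sw]
    simp only [map_smul]
    have e1 : ∀ v, hB.sw.toMap (antipode k v) = sw k v (fun v₁ v₂ =>
      l (antipode k v₂) • antipode k v₁) := fun v => sw_antipode v hB
    have e2 : ∀ v, hQ.sw.toMap v = sw k v (fun z₁ z₂ => l (x * z₁) • antipode k z₂) :=
      fun v => rfl
    simp only [e1, e2, smul_sw]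
    rw [← sw_assoc t (F := fun u v w => l (x * u) • l (antipode k w) • antipode k v)]
    refine sw_congr t fun u v => sw_congr u fun u₁ u₂ => smul_comm _ _ _
  rw [h.theta_eq] at h1
  refine h1.trans ((sw_one hQ).trans ?_)
  simp

end IntegralPair

/-- A right integral on `H`. -/
def IsDualIntegral (μ : H →ₗ[k] k) : Prop := ∀ z, sw k z (fun z₁ z₂ => μ z₁ • z₂) = μ z • 1

lemma IsDualIntegral.sw_mul_left {μ : H →ₗ[k] k} (hμ : IsDualIntegral μ) (x y : H) :
    sw k x (fun x₁ x₂ => μ (x₁ * y) • x₂) = sw k y (fun y₁ y₂ => μ (x * y₁) • antipode k y₂) := by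
  have h1 : ∀ y₁ y₂ : H, μ (x * y₁) • antipode k y₂ =
      sw k x (fun x₁ x₂ => sw k y₁ (fun u v => μ (x₁ * u) • (x₂ * (v * antipode k y₂)))) :=
    fun y₁ y₂ => by
      have h2 := congrArg (· * antipode k y₂) (hμ (x * y₁))
      simp only [smul_mul_assoc, one_mul] at h2
      rw [← h2, sw_prod _ _, sw_mul]
      simp only [sw_mul, smul_mul_assoc, mul_assoc]
  simp only [h1]
  rw [sw_comm]
  refine sw_congr x fun x₁ x₂ => ?_
  rw [sw_assoc y (F := fun u v w => μ (x₁ * u) • (x₂ * (v * antipode k w))),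
    sw_right_mul_antipode y (F := fun u v => μ (x₁ * u) • (x₂ * v)), mul_one]

namespace IntegralPair

variable {t : H} {l : H →ₗ[k] k}

lemma apply_dualIntegral (h : IntegralPair t l) {μ : H →ₗ[k] k} (hμ : IsDualIntegral μ) (x : H) :
    μ x = μ t * l x := by
  have h1 := hμ.sw_mul_left x t
  simp only [h.mul_left, map_smul, smul_eq_mul, mul_smul] at h1
  rw [sw_counit_left x (F := fun z => μ t • z)] at h1
  have h2 := congrArg l h1
  rw [map_smul, map_sw, smul_eq_mul] at h2
  rw [h2]
  have h3 := congrArg (fun z => μ (x * z)) h.theta_eq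
  simp only [theta_apply, mul_sw, map_sw, mul_one] at h3
  rw [← h3]
  exact sw_congr t fun u v => by simp [mul_comm]

lemma sw_right (h : IntegralPair t l) (z : H) :
    sw k z (fun x y => l y • x) = l z • sw k t (fun x y => l y • x) := by
  rw [← sub_eq_zero, ← Module.forall_dual_apply_eq_zero_iff k]
  intro f
  have hB : Bilin k (fun x y : H => f x * l y) := by
    constructor <;> intros <;> simp [add_mul, mul_add, mul_assoc, mul_left_comm]
  have hμ : IsDualIntegral hB.sw.toMap := fun z => by
    have e : ∀ z, hB.sw.toMap z = sw k z (fun x y => f x * l y) := fun _ => rfl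
    have e1 : ∀ x y : H, sw k x (fun u v => f u * l v) • y =
        sw k x (fun u v => (f u * l v) • y) := fun x y => Finset.sum_smul
    simp only [e, e1]
    rw [sw_assoc z (F := fun u v w => (f u * l v) • w)]
    refine sw_congr z fun x y => ?_
    simp only [mul_smul]
    rw [← smul_sw, h.sw_left]
  have h2 := h.apply_dualIntegral hμ z
  have e : ∀ z, hB.sw.toMap z = f (sw k z (fun x y => l y • x)) := fun z => by
    rw [map_sw]; change sw k z (fun x y => f x * l y) = _
    exact sw_congr (k := k) z fun x y => by simp [mul_comm]
  rw [e, e] at h2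
  rw [map_sub, h2, map_smul, smul_eq_mul, mul_comm, sub_self]

lemma isGroupLikeElem (h : IntegralPair t l) : IsGroupLikeElem k (sw k t (fun x y => l y • x)) where
  counit_eq_one := by
    rw [map_sw]
    simp only [map_smul, smul_eq_mul]
    have := sw_counit_left (k := k) t (F := l)
    simp only [smul_eq_mul] at this
    rw [← h.apply_eq_one, ← this]
    exact sw_congr t fun u v => by simp [mul_comm]
  comul_eq_tmul_self := by
    rw [map_sw]
    simp only [map_smul, ← sw_tmul, smul_sw]
    rw [sw_assoc t (F := fun u v w => l w • (u ⊗ₜ[k] v))]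
    have : ∀ u w : H, sw k w (fun x y => l y • (u ⊗ₜ[k] x)) =
        l w • (u ⊗ₜ[k] sw k t (fun x y => l y • x)) := fun u w => by
      rw [← TensorProduct.tmul_smul, ← h.sw_right]
      exact ((map_sw (TensorProduct.mk k H H u) w _).trans
        (sw_congr w fun x y => by simp)).symm
    simp only [this]
    exact ((map_sw ((TensorProduct.mk k H H).flip (sw k t (fun x y => l y • x))) t _).trans
        (sw_congr t fun x y => by simp)).symm

end IntegralPair
end Frobenius

section Radford

variable {k H V : Type*} [Field k] [Ring H] [HopfAlgebra k H] [AddCommGroup V] [Module k V]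

lemma antipode_mul_groupLike {g : H} (hg : IsGroupLikeElem k g) : antipode k g * g = 1 := by
  have := sw_antipode_mul (k := k) g (F := fun x => x)
  rwa [sw_groupLike hg (F := fun x y => antipode k x * y), hg.counit_eq_one, one_smul] at this

lemma groupLike_mul_antipode {g : H} (hg : IsGroupLikeElem k g) : g * antipode k g = 1 := by
  have := sw_mul_antipode (k := k) g (F := fun x => x)
  rwa [sw_groupLike hg (F := fun x y => x * antipode k y), hg.counit_eq_one, one_smul] at this

lemma S2_groupLike {g : H} (hg : IsGroupLikeElem k g) : S2 k H g = g := by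
  have h := congrArg (antipode k) (antipode_mul_groupLike hg)
  rw [antipode_mul_antidistrib, antipode_one] at h
  exact (left_inv_eq_right_inv (groupLike_mul_antipode hg) h).symm

lemma hitL_mul (α : H →ₐ[k] k) (a b : H) :
    hitL α.toLinearMap (a * b) = hitL α.toLinearMap a * hitL α.toLinearMap b := by
  rw [hitL_apply, sw_prod _ _]
  simp only [hitL_apply, sw_mul, mul_sw]
  rw [sw_comm]
  refine sw_congr b fun _ _ => sw_congr a fun _ _ => ?_
  simp [smul_smul, mul_comm]

lemma hitL_one (α : H →ₐ[k] k) : hitL α.toLinearMap (1 : H) = 1 := by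
  rw [hitL_apply, sw_one]; simp

lemma hitL_groupLike (f : H →ₗ[k] k) {g : H} (hg : IsGroupLikeElem k g) :
    hitL f g = f g • g := by
  rw [hitL_apply, sw_groupLike hg]

lemma algHom_S2 (α : H →ₐ[k] k) (a : H) : α (S2 k H a) = α a := by
  have h1 := sw_right_mul_antipode (k := k) a (F := fun u v => α u * α (antipode k v))
  have h2 := sw_left_mul_antipode (k := k) a (F := fun u v => α u * α (S2 k H v))
  rw [sw_assoc a (F := fun u v w => α (u * antipode k v) * α (S2 k H w))] at h2
  simp only [map_mul, antipode_mul_antidistrib, ← S2_apply, map_one, antipode_one, one_mul,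
    mul_one] at h1 h2
  rw [← h1, ← h2]
  refine sw_congr a fun u v => sw_congr v fun v₁ v₂ => ?_
  ring

lemma hitL_S2 (α : H →ₐ[k] k) (a : H) :
    hitL α.toLinearMap (S2 k H a) = S2 k H (hitL α.toLinearMap a) := by
  rw [hitL_apply, hitL_apply, map_sw, sw_S2 a]
  · simp [algHom_S2]
  · constructor <;> intros <;> simp [add_smul, smul_smul, mul_comm]

lemma hitL_antipode (f : H →ₗ[k] k) (a : H) :
    hitL f (antipode k a) = antipode k (hitR (f ∘ₗ antipode k) a) := by
  rw [hitL_apply, hitR_apply, map_sw, sw_antipode a]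
  simp

lemma hitL_hitR (f f' : H →ₗ[k] k) (a : H) : hitL f (hitR f' a) = hitR f' (hitL f a) := by
  rw [hitR_apply, map_sw, hitL_apply, map_sw]
  simp only [map_smul, hitL_apply, hitR_apply, smul_sw]
  rw [sw_assoc a (F := fun u v w => f' w • f u • v)]
  exact sw_congr a fun u v => sw_congr v fun v₁ v₂ => smul_comm _ _ _

lemma mulRight_S2 {g : H} (hg : IsGroupLikeElem k g) :
    Commute (LinearMap.mulRight k g : Module.End k H) (S2 k H) := by
  ext x
  simp [S2_mul, S2_groupLike hg]

lemma commute_hitL_S2 (α : H →ₐ[k] k) :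
    Commute (hitL α.toLinearMap : Module.End k H) (S2 k H) := by
  ext x
  exact hitL_S2 α x

variable [FiniteDimensional k H]

/-- The distinguished group-like element attached to an integral pair. -/
noncomputable def modularElem (t : H) (l : H →ₗ[k] k) : H := sw k t (fun x y => l y • x)

namespace IntegralPair

variable {t : H} {l : H →ₗ[k] k}

lemma isGroupLike_modularElem (h : IntegralPair t l) : IsGroupLikeElem k (modularElem t l) :=
  h.isGroupLikeElem

lemma apply_antipode_mul_modularElem (h : IntegralPair t l) (u : H) :
    l (antipode k u * modularElem t l) = l u := by
  have h1 : sw k t (fun x y => l (antipode k u * x) • y) = u := h.antipode_injective (by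
    rw [map_sw]; simpa using h.sw_mul_smul_antipode (antipode k u))
  conv_rhs => rw [← h1]
  rw [modularElem, mul_sw, map_sw, map_sw]
  exact sw_congr t fun x y => by simp [mul_comm]

lemma ext_left (h : IntegralPair t l) {c d : H} (hcd : ∀ z, l (c * z) = l (d * z)) : c = d := by
  rw [← h.sw_mul_smul_antipode c, ← h.sw_mul_smul_antipode d]
  simp only [hcd]

lemma mul_right (h : IntegralPair t l) (a : H) : t * a = l (t * a) • t :=
  h.eq_smul fun b => by rw [← mul_assoc, h.mul_left, smul_mul_assoc]

/-- The distinguished character of an integral pair. -/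
noncomputable def modularChar (h : IntegralPair t l) : H →ₐ[k] k :=
  AlgHom.ofLinearMap (l ∘ₗ LinearMap.mulLeft k t) (by simp [h.apply_eq_one]) fun a b => by
    simp only [LinearMap.comp_apply, LinearMap.mulLeft_apply]
    rw [← mul_assoc, h.mul_right a, smul_mul_assoc, map_smul, map_smul, h.apply_eq_one]
    simp

lemma mul_right' (h : IntegralPair t l) (a : H) : t * a = h.modularChar a • t := h.mul_right a

lemma sw_mul_right (h : IntegralPair t l) (a : H) {F : H → H → V} (hF : Bilin k F) :
    sw k t (fun u v => F (u * a) v) =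
      sw k t (fun u v => F u (v * antipode k (hitL h.modularChar.toLinearMap a))) := by
  obtain ⟨G, rfl⟩ : ∃ G : H →ₗ[k] H →ₗ[k] V, F = fun x y => G x y := ⟨hF.toMap, rfl⟩
  have h1 : sw k t (fun u v => G u (v * antipode k (hitL h.modularChar.toLinearMap a))) =
      sw k a (fun a₁ a₂ => sw k (t * a₁) (fun u v => G u (v * antipode k a₂))) := by
    have e : ∀ a₁ a₂ : H, sw k (t * a₁) (fun u v => G u (v * antipode k a₂)) =
        sw k t (fun u v => h.modularChar a₁ • G u (v * antipode k a₂)) := fun a₁ a₂ => by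
      rw [h.mul_right', sw_smul_left _ _ (F := fun u v => G u (v * antipode k a₂)), smul_sw]
    simp only [e]
    rw [sw_comm]
    refine sw_congr t fun u v => ?_
    rw [hitL_apply, map_sw, mul_sw, map_sw]
    simp
  have h2 : ∀ a₁ a₂ : H, sw k (t * a₁) (fun u v => G u (v * antipode k a₂)) =
      sw k t (fun u v => sw k a₁ (fun x y => G (u * x) (v * (y * antipode k a₂)))) :=
    fun a₁ a₂ => by
      rw [sw_prod _ _]; simp only [mul_assoc]
  rw [h1]
  simp only [h2]
  rw [sw_comm]
  refine sw_congr t fun u v => ?_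
  rw [sw_assoc a (F := fun x y z => G (u * x) (v * (y * antipode k z))),
    sw_right_mul_antipode a (F := fun x y => G (u * x) (v * y)), mul_one]

lemma apply_mul_comm (h : IntegralPair t l) (w a : H) :
    l (w * a) = l (S2 k H (hitL h.modularChar.toLinearMap a) * w) := by
  have h1 := h.sw_mul_right a (F := fun u v => l (w * u) • antipode k v) (by
    constructor <;> intros <;> simp [mul_add, add_smul, smul_smul, mul_comm])
  have h2 : sw k t (fun u v => l (w * u) • antipode k (v * antipode k
      (hitL h.modularChar.toLinearMap a))) = S2 k H (hitL h.modularChar.toLinearMap a) * w := by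
    conv_rhs => rw [← h.sw_mul_smul_antipode w]
    rw [mul_sw]
    simp only [antipode_mul_antidistrib, ← S2_apply, mul_smul_comm]
  rw [← h2, ← h1, map_sw]
  have h3 := congrArg (fun z => l (w * (z * a))) h.theta_eq
  simp only [theta_apply, sw_mul, mul_sw, map_sw, one_mul] at h3
  rw [← h3]
  exact sw_congr t fun u v => by simp [mul_comm]

/-- Radford's formula for the fourth power of the antipode. -/
lemma radford (h : IntegralPair t l) (a : H) :
    a = antipode k (modularElem t l) * S2 k H (S2 k H (hitR (h.modularChar.toLinearMap ∘ₗ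
      antipode k) (hitL h.modularChar.toLinearMap a))) * modularElem t l := by
  set g := modularElem t l with hg_def
  set α := h.modularChar with hα
  have hg : IsGroupLikeElem k g := h.isGroupLike_modularElem
  have hgg := antipode_mul_groupLike hg
  have hgg' := groupLike_mul_antipode hg
  have hS2S : ∀ x : H, S2 k H (antipode k x) = antipode k (S2 k H x) := fun x => rfl
  have hsurj : Function.Surjective (antipode k (A := H)) :=
    LinearMap.injective_iff_surjective.1 h.antipode_injective
  have h1 : antipode k a = S2 k H (hitL α.toLinearMap (antipode k g *
      antipode k (S2 k H (hitL α.toLinearMap a)) * g)) := by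
    refine h.ext_left fun z => ?_
    obtain ⟨w, hw⟩ := hsurj (z * antipode k g)
    have hz : z = antipode k w * g := by rw [hw, mul_assoc, hgg, mul_one]
    rw [hz, ← h.apply_mul_comm]
    have e1 := h.apply_antipode_mul_modularElem (w * a)
    have e2 := h.apply_antipode_mul_modularElem (S2 k H (hitL α.toLinearMap a) * w)
    rw [antipode_mul_antidistrib, mul_assoc] at e1 e2
    rw [e1, h.apply_mul_comm, ← e2]
    congr 1
    rw [mul_assoc (antipode k w) g, ← mul_assoc g, ← mul_assoc g, hgg', one_mul]
  have hαg : α (antipode k g) * α g = 1 := by rw [← map_mul, hgg, map_one]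
  have hg' : hitL α.toLinearMap (antipode k g) = α (antipode k g) • antipode k g := by
    rw [hitL_antipode, hitR_apply, sw_groupLike hg]; simp
  rw [hitL_mul, hitL_mul, hg', hitL_groupLike _ hg, hitL_antipode, S2_mul, S2_mul] at h1
  simp only [map_smul, hS2S, S2_groupLike hg] at h1
  have hR : hitR (α.toLinearMap ∘ₗ antipode k) (S2 k H (hitL α.toLinearMap a)) =
      S2 k H (hitR (α.toLinearMap ∘ₗ antipode k) (hitL α.toLinearMap a)) := by
    refine h.antipode_injective ?_
    rw [← hitL_antipode, ← hS2S, hitL_S2, hitL_antipode, hS2S]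
  rw [hR] at h1
  refine h.antipode_injective (h1.trans ?_)
  rw [antipode_mul_antidistrib, antipode_mul_antidistrib, ← S2_apply, S2_groupLike hg, ← mul_assoc]
  simp only [smul_mul_assoc, mul_smul_comm, smul_smul, AlgHom.toLinearMap_apply]
  rw [mul_comm, hαg, one_smul]

/-- If `N` kills the distinguished group-like elements then `S^{4N} = 1`. -/
lemma S2_pow_eq_one (h : IntegralPair t l) {N : ℕ} (hg : modularElem t l ^ N = 1)
    (hα : (hitL h.modularChar.toLinearMap : Module.End k H) ^ N = 1) :
    (S2 k H : Module.End k H) ^ (2 * N) = 1 := by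
  have hgl : IsGroupLikeElem k (modularElem t l) := h.isGroupLike_modularElem
  have hgg := antipode_mul_groupLike hgl
  have hgg' := groupLike_mul_antipode hgl
  have hrad := h.radford
  set g := modularElem t l with hg_def
  set α := h.modularChar with hα'
  let C : Module.End k H := LinearMap.mulLeft k (antipode k g) * LinearMap.mulRight k g
  let L : Module.End k H := hitL α.toLinearMap
  let R : Module.End k H := hitR (α.toLinearMap ∘ₗ antipode k)
  let S : Module.End k H := antipode k
  let T : Module.End k H := S2 k H
  have hSinj : ∀ A B : Module.End k H, S * A = S * B → A = B := fun A B hAB =>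
    LinearMap.ext fun x => h.antipode_injective (LinearMap.congr_fun hAB x)
  have hTS : T = S * S := rfl
  have hone : C * T ^ 2 * R * L = 1 := by
    ext x
    simpa [C, T, R, L, pow_two, mul_assoc] using (hrad x).symm
  have hSR : S * R = L * S := LinearMap.ext fun x => (hitL_antipode _ x).symm
  have hLT : Commute L T := commute_hitL_S2 α
  have hLR : Commute L R := LinearMap.ext fun x => hitL_hitR _ _ x
  have hRT : Commute R T := hSinj _ _ (by
    rw [← mul_assoc, hSR, mul_assoc, show S * T = T * S from rfl, ← mul_assoc, hLT.eq, mul_assoc,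
      ← hSR, ← mul_assoc, ← mul_assoc]; rfl)
  have hCT : Commute C T := by
    ext x
    have e : S2 k H (antipode k g) = antipode k g := congrArg (antipode k) (S2_groupLike hgl)
    simp [C, T, S2_mul, S2_groupLike hgl, e]
  have hCS : C * S = S * C := by
    ext x
    have e : antipode k (antipode k g) = g := S2_groupLike hgl
    simp [C, S, antipode_mul_antidistrib, e, mul_assoc]
  have hαg : α (antipode k g) * α g = 1 := by rw [← map_mul, hgg, map_one]
  have hg' : hitL α.toLinearMap (antipode k g) = α (antipode k g) • antipode k g := by
    rw [hitL_antipode, hitR_apply, sw_groupLike hgl]; simp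
  have hCL : Commute C L := by
    ext x
    simp only [C, L, Module.End.mul_apply, LinearMap.mulLeft_apply, LinearMap.mulRight_apply,
      hitL_mul, hg', hitL_groupLike _ hgl, smul_mul_assoc, mul_smul_comm, smul_smul,
      AlgHom.toLinearMap_apply, mul_comm (α g), hαg, one_smul]
  have hCR : Commute C R := hSinj _ _ (by
    rw [← mul_assoc, ← hCS, mul_assoc, hSR, ← mul_assoc, hCL.eq, mul_assoc, hCS, ← mul_assoc,
      ← hSR, mul_assoc])
  have hRN : R ^ N = 1 := hSinj _ _ (by
    have : ∀ n : ℕ, S * R ^ n = L ^ n * S := fun n => by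
      induction n with
      | zero => simp
      | succ n ih => rw [pow_succ, ← mul_assoc, ih, mul_assoc, hSR, ← mul_assoc, pow_succ]
    rw [this, show L ^ N = 1 from hα, one_mul, mul_one])
  have hCN : C ^ N = 1 := by
    have hcomm : Commute (LinearMap.mulLeft k (antipode k g) : Module.End k H)
        (LinearMap.mulRight k g) := LinearMap.ext fun x => by simp [mul_assoc]
    have hg'N : antipode k g ^ N = 1 := by
      have hc : Commute (antipode k g) g := hgg.trans hgg'.symm
      have := hc.mul_pow N
      rw [hgg, one_pow, hg, mul_one] at this
      exact this.symm
    rw [hcomm.mul_pow, LinearMap.pow_mulLeft, LinearMap.pow_mulRight, hg, hg'N]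
    ext x; simp
  have := congrArg (· ^ N) hone
  simp only [one_pow] at this
  rw [Commute.mul_pow, Commute.mul_pow, Commute.mul_pow, hCN, hRN, show L ^ N = 1 from hα,
    one_mul, mul_one, mul_one, ← pow_mul] at this
  · exact this
  · exact hCT.pow_right 2
  · exact hCR.mul_left (hRT.symm.pow_left 2)
  · exact (hCL.mul_left (hLT.symm.pow_left 2)).mul_left hLR.symm

end IntegralPair
end Radford

section Traces

variable {k H V : Type*} [Field k] [Ring H] [HopfAlgebra k H] [AddCommGroup V] [Module k V]

/-- Maschke's theorem: a left integral with nonzero counit forces semisimplicity. -/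
lemma isSemisimpleRing_of_counit_ne_zero {t : H} (ht : ∀ a : H, a * t = counit (R := k) a • t)
    (hε : counit (R := k) t ≠ 0) : IsSemisimpleRing H := by
  refine (isSemisimpleModule_iff H H).2 ⟨fun W => ?_⟩
  obtain ⟨π₀, hπ₀⟩ := (W.restrictScalars k).subtype.exists_leftInverse_of_injective
    (LinearMap.ker_eq_bot.2 (Submodule.injective_subtype _))
  let π : H →ₗ[k] H := (W.restrictScalars k).subtype ∘ₗ π₀
  have hπW : ∀ x, π x ∈ W := fun x => (π₀ x).2
  have hπ : ∀ x ∈ W, π x = x := fun x hx =>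
    congrArg (W.restrictScalars k).subtype (LinearMap.congr_fun hπ₀ ⟨x, hx⟩)
  let P : H →ₗ[H] W :=
    { toFun := fun m => ⟨(counit (R := k) t)⁻¹ • sw k t (fun x y => x * π (antipode k y * m)),
        (W.restrictScalars k).smul_mem _ (W.sum_mem fun i _ => W.smul_mem _ (hπW _))⟩
      map_add' := fun m m' => by
        ext
        simp [mul_add, sw_add_fun]
      map_smul' := fun a m => by
        ext
        have := sw_integral_mul ht a (F := fun x y => x * π (y * m))
        simp only [mul_assoc] at this
        simp [← this, mul_sw] }
  refine ⟨LinearMap.ker P, LinearMap.isCompl_of_proj fun w => Subtype.ext ?_⟩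
  change (counit (R := k) t)⁻¹ • sw k t (fun x y => x * π (antipode k y * w)) = w
  have h1 : ∀ x y : H, x * π (antipode k y * w) = x * antipode k y * w := fun x y => by
    rw [hπ (antipode k y * w) (W.smul_mem (antipode k y) w.2), mul_assoc]
  simp only [h1]
  rw [sw_mul_antipode t (F := fun x => x * (w : H)), one_mul, inv_smul_smul₀ hε]

/-- The Galois map `x ⊗ y ↦ ∑ x y₁ ⊗ y₂`. -/
noncomputable def galoisMap (k H : Type*) [Field k] [Ring H] [HopfAlgebra k H] :
    H ⊗[k] H →ₗ[k] H ⊗[k] H :=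
  LinearMap.rTensor H (LinearMap.mul' k H) ∘ₗ (TensorProduct.assoc k H H H).symm.toLinearMap ∘ₗ
    LinearMap.lTensor H comul

lemma galoisMap_tmul (x y : H) :
    galoisMap k H (x ⊗ₜ y) = sw k y (fun y₁ y₂ => (x * y₁) ⊗ₜ[k] y₂) := by
  simp only [galoisMap, LinearMap.comp_apply, LinearMap.lTensor_tmul, ← sw_tmul]
  simp [sw, TensorProduct.tmul_sum]

/-- The inverse `x ⊗ y ↦ ∑ x S(y₁) ⊗ y₂` of the Galois map. -/
noncomputable def galoisInv (k H : Type*) [Field k] [Ring H] [HopfAlgebra k H] :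
    H ⊗[k] H →ₗ[k] H ⊗[k] H :=
  LinearMap.rTensor H (LinearMap.mul' k H) ∘ₗ (TensorProduct.assoc k H H H).symm.toLinearMap ∘ₗ
    LinearMap.lTensor H (LinearMap.rTensor H (antipode k) ∘ₗ comul)

lemma galoisInv_tmul (x y : H) :
    galoisInv k H (x ⊗ₜ y) = sw k y (fun y₁ y₂ => (x * antipode k y₁) ⊗ₜ[k] y₂) := by
  simp only [galoisInv, LinearMap.comp_apply, LinearMap.lTensor_tmul, ← sw_tmul]
  simp [sw, TensorProduct.tmul_sum]

/-- The Galois map as a linear equivalence. -/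
noncomputable def galoisEquiv (k H : Type*) [Field k] [Ring H] [HopfAlgebra k H] :
    H ⊗[k] H ≃ₗ[k] H ⊗[k] H :=
  LinearEquiv.ofLinearMap (galoisMap k H) (galoisInv k H)
    (by
      ext x y
      simp only [TensorProduct.AlgebraTensorModule.curry_apply, TensorProduct.curry_apply,
        LinearMap.coe_restrictScalars, LinearMap.comp_apply, LinearMap.id_apply, galoisInv_tmul,
        map_sw, galoisMap_tmul, mul_assoc]
      rw [← sw_assoc y (F := fun u v w => (x * (antipode k u * v)) ⊗ₜ[k] w),
        sw_left_antipode_mul y (F := fun u v => (x * u) ⊗ₜ[k] v), mul_one])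
    (by
      ext x y
      simp only [TensorProduct.AlgebraTensorModule.curry_apply, TensorProduct.curry_apply,
        LinearMap.coe_restrictScalars, LinearMap.comp_apply, LinearMap.id_apply, galoisInv_tmul,
        map_sw, galoisMap_tmul, mul_assoc]
      rw [← sw_assoc y (F := fun u v w => (x * (u * antipode k v)) ⊗ₜ[k] w),
        sw_left_mul_antipode y (F := fun u v => (x * u) ⊗ₜ[k] v), mul_one])

lemma comul_hitL (f : H →ₗ[k] k) {F : H → H → V} (hF : Bilin k F) (a : H) :
    sw k (hitL f a) F = sw k a (fun x y => F (hitL f x) y) := by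
  obtain ⟨G, rfl⟩ : ∃ G : H →ₗ[k] H →ₗ[k] V, F = fun x y => G x y := ⟨hF.toMap, rfl⟩
  have h := map_sw hF.sw.toMap a (fun x y => f x • y)
  simp only [map_smul] at h
  refine (hitL_apply f a ▸ h).trans ?_
  have e : ∀ z, hF.sw.toMap z = sw k z (fun x y => G x y) := fun _ => rfl
  have e' : ∀ x y : H, G (hitL f x) y = sw k x (fun u v => f u • G v y) := fun x y => by
    rw [hitL_apply]; simp [sw]
  simp only [e', e, smul_sw]
  rw [sw_assoc a (F := fun u v w => f u • G v w)]

/-- The functional `ε ∘ (a ↦ ∑ f(a₁) a₂)` is `f`. -/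
lemma counit_hitL (f : H →ₗ[k] k) (a : H) : counit (R := k) (hitL f a) = f a := by
  rw [hitL_apply, map_sw]
  rw [← sw_counit_right (k := k) a (F := fun x => f x) ⟨map_add f, map_smul f⟩]
  exact sw_congr a fun x y => by simp [mul_comm]

variable [FiniteDimensional k H]

lemma trace_eq_of_comp_eq (e : H ⊗[k] H ≃ₗ[k] H ⊗[k] H) {A B : H ⊗[k] H →ₗ[k] H ⊗[k] H}
    (hAB : e.toLinearMap ∘ₗ A = B ∘ₗ e.toLinearMap) :
    LinearMap.trace k _ A = LinearMap.trace k _ B := by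
  rw [← LinearMap.trace_conj' A e]
  congr 1
  rw [LinearEquiv.conj_apply, hAB, LinearMap.comp_assoc, LinearEquiv.comp_symm, LinearMap.comp_id]

lemma trace_mulRight_sq {g : H} (hg : IsGroupLikeElem k g) :
    LinearMap.trace k H (LinearMap.mulRight k g) ^ 2 =
      Module.finrank k H * LinearMap.trace k H (LinearMap.mulRight k g) := by
  have h := trace_eq_of_comp_eq (galoisEquiv k H)
    (A := TensorProduct.map LinearMap.id (LinearMap.mulRight k g))
    (B := TensorProduct.map (LinearMap.mulRight k g) (LinearMap.mulRight k g)) (by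
      ext x y
      change galoisMap k H (x ⊗ₜ[k] (y * g)) = TensorProduct.map (LinearMap.mulRight k g)
        (LinearMap.mulRight k g) (galoisMap k H (x ⊗ₜ[k] y))
      rw [galoisMap_tmul, galoisMap_tmul, map_sw, sw_prod y g]
      refine sw_congr y fun u v => ?_
      rw [sw_groupLike hg]
      simp [mul_assoc])
  rw [LinearMap.trace_tensorProduct', LinearMap.trace_tensorProduct', LinearMap.trace_id] at h
  rw [sq, h]

lemma trace_hitL_sq (β : H →ₐ[k] k) :
    LinearMap.trace k H (hitL β.toLinearMap) ^ 2 =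
      Module.finrank k H * LinearMap.trace k H (hitL β.toLinearMap) := by
  have h := trace_eq_of_comp_eq (galoisEquiv k H)
    (A := TensorProduct.map (hitL β.toLinearMap) (hitL β.toLinearMap))
    (B := TensorProduct.map (hitL β.toLinearMap) LinearMap.id) (by
      ext x y
      change galoisMap k H (hitL β.toLinearMap x ⊗ₜ[k] hitL β.toLinearMap y) =
        TensorProduct.map (hitL β.toLinearMap) LinearMap.id (galoisMap k H (x ⊗ₜ[k] y))
      rw [galoisMap_tmul, galoisMap_tmul, map_sw, comul_hitL _ (by
        constructor <;> intros <;> simp [mul_add, TensorProduct.add_tmul, TensorProduct.tmul_add,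
          ← TensorProduct.smul_tmul'])]
      exact sw_congr y fun u v => by simp [hitL_mul])
  rw [LinearMap.trace_tensorProduct', LinearMap.trace_tensorProduct', LinearMap.trace_id] at h
  rw [sq, h, mul_comm]

namespace IntegralPair

variable {t : H} {l : H →ₗ[k] k}

lemma trace_eq (h : IntegralPair t l) (f : H →ₗ[k] H) :
    LinearMap.trace k H f = sw k t (fun x y => l (antipode k y * f x)) := by
  have hf : f = sw k t (fun x y =>
      (l ∘ₗ LinearMap.mulLeft k (antipode k y)).smulRight (f x)) := by
    ext a
    conv_lhs => rw [← h.sw_antipode_mul_smul a, map_sw]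
    simp [sw]
  conv_lhs => rw [hf, map_sw]
  simp only [LinearMap.trace_smulRight]
  rfl

lemma trace_mulRight_S2 (h : IntegralPair t l) (z : H) :
    LinearMap.trace k H (LinearMap.mulRight k z ∘ₗ S2 k H) = counit (R := k) t * l z := by
  rw [h.trace_eq]
  have h' : ∀ v w : H, antipode k w * (S2 k H v * z) = antipode k (antipode k v * w) * z :=
    fun v w => by rw [antipode_mul_antidistrib, S2_apply, mul_assoc]
  simp only [LinearMap.comp_apply, LinearMap.mulRight_apply, h']
  rw [sw_antipode_mul t (F := fun x => l (antipode k x * z))]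
  simp

lemma trace_S2_hitL (h : IntegralPair t l) (f : H →ₗ[k] k) :
    LinearMap.trace k H (S2 k H ∘ₗ hitL f) = f t * l 1 := by
  rw [h.trace_eq]
  have h' : ∀ u w : H, l (antipode k w * S2 k H (hitL f u)) =
      sw k u (fun u₁ u₂ => f u₁ * l (antipode k (antipode k u₂ * w))) := fun u w => by
    rw [hitL_apply, map_sw, mul_sw, map_sw]
    refine sw_congr u fun u₁ u₂ => ?_
    rw [antipode_mul_antidistrib, ← S2_apply]
    simp
  simp only [LinearMap.comp_apply, h']
  rw [sw_assoc t (F := fun u v w => f u * l (antipode k (antipode k v * w))),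
    sw_right_antipode_mul t (F := fun u v => f u * l (antipode k v)), antipode_one]

lemma trace_mulRight_S2_eq_zero (h : IntegralPair t l) (hss : ¬ IsSemisimpleRing H) (z : H) :
    LinearMap.trace k H (LinearMap.mulRight k z ∘ₗ S2 k H) = 0 := by
  have hε : counit (R := k) t = 0 := by
    by_contra hε
    exact hss (isSemisimpleRing_of_counit_ne_zero h.mul_left hε)
  rw [h.trace_mulRight_S2, hε, zero_mul]

lemma trace_S2_hitL_eq_zero (h : IntegralPair t l) (hss : ¬ IsSemisimpleRing H) (β : H →ₐ[k] k) :
    LinearMap.trace k H (S2 k H ∘ₗ hitL β.toLinearMap) = 0 := by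
  have hε : counit (R := k) t = 0 := by
    by_contra hε
    exact hss (isSemisimpleRing_of_counit_ne_zero h.mul_left hε)
  have hβ : β t = 0 := by
    have h1 := congrArg β (h.mul_left t)
    rw [map_mul, map_smul, hε, zero_smul] at h1
    exact mul_self_eq_zero.1 h1
  rw [h.trace_S2_hitL, AlgHom.toLinearMap_apply, hβ, zero_mul]

end IntegralPair
end Traces

section Spectral

variable {k A : Type*} [Field k] [CharZero k] [Ring A] [Algebra k A] {N : ℕ} [NeZero N]

lemma pow_val_add {R : A} (hR : R ^ N = 1) (a b : ZMod N) :
    R ^ (a + b).val = R ^ a.val * R ^ b.val := by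
  rw [ZMod.val_add, ← pow_eq_pow_mod _ hR, pow_add]

lemma pow_val_mul {R : A} (hR : R ^ N = 1) (a b : ZMod N) :
    R ^ (a * b).val = (R ^ a.val) ^ b.val := by
  rw [ZMod.val_mul, ← pow_eq_pow_mod _ hR, pow_mul]

/-- The spectral projection of `R`, where `R ^ N = 1`, onto the eigenvalue `χ j`. -/
noncomputable def spec (χ : AddChar (ZMod N) k) (R : A) (j : ZMod N) : A :=
  (N : k)⁻¹ • ∑ m : ZMod N, χ (-(m * j)) • R ^ m.val

variable {χ : AddChar (ZMod N) k} {R : A}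

lemma pow_mul_spec (hR : R ^ N = 1) (a j : ZMod N) :
    R ^ a.val * spec χ R j = χ (a * j) • spec χ R j := by
  rw [spec, mul_smul_comm, smul_comm]
  congr 1
  rw [Finset.mul_sum, Finset.smul_sum, ← Equiv.sum_comp (Equiv.subRight a)]
  refine Finset.sum_congr rfl fun m _ => ?_
  rw [mul_smul_comm, smul_smul, ← pow_val_add hR, ← AddChar.map_add_eq_mul]
  simp only [Equiv.subRight_apply]
  congr 2
  · ring
  · ring_nf

lemma sum_char (hχ : χ.IsPrimitive) (b : ZMod N) :
    (N : k)⁻¹ * ∑ m : ZMod N, χ (m * b) = if b = 0 then 1 else 0 := by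
  rw [AddChar.sum_mulShift b hχ, ZMod.card]
  split_ifs <;> simp [NeZero.ne]

lemma spec_mul_spec (hχ : χ.IsPrimitive) (hR : R ^ N = 1) (i j : ZMod N) :
    spec χ R i * spec χ R j = if i = j then spec χ R j else 0 := by
  conv_lhs => rw [spec]
  rw [smul_mul_assoc, Finset.sum_mul]
  simp only [smul_mul_assoc, pow_mul_spec hR, smul_smul, ← AddChar.map_add_eq_mul]
  rw [← Finset.sum_smul, smul_smul]
  have h := sum_char hχ (j - i)
  simp only [show ∀ m : ZMod N, -(m * i) + m * j = m * (j - i) from fun m => by ring, h,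
    sub_eq_zero, eq_comm (a := j)]
  split_ifs <;> simp

lemma sum_spec (hχ : χ.IsPrimitive) : ∑ j, spec χ R j = 1 := by
  simp only [spec]
  rw [← Finset.smul_sum, Finset.sum_comm]
  simp only [← Finset.sum_smul]
  rw [Finset.smul_sum]
  have h : ∀ m : ZMod N, (N : k)⁻¹ • (∑ j : ZMod N, χ (-(m * j))) • R ^ m.val =
      if m = 0 then 1 else 0 := fun m => by
    have := sum_char hχ (-m)
    simp only [show ∀ j : ZMod N, j * -m = -(m * j) from fun j => by ring] at this
    rw [smul_smul, this]
    split_ifs with h1 h2 h2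
    · simp [h2]
    · simp_all
    · simp_all
    · simp
  simp [h]

lemma pow_eq_sum_spec (hχ : χ.IsPrimitive) (hR : R ^ N = 1) (a : ZMod N) :
    R ^ a.val = ∑ j, χ (a * j) • spec χ R j := by
  simp only [← pow_mul_spec hR]
  rw [← Finset.mul_sum, sum_spec hχ, mul_one]

lemma commute_spec {B : A} (h : Commute B R) (j : ZMod N) : Commute B (spec χ R j) :=
  (Commute.sum_right _ _ _ fun _ _ => (h.pow_right _).smul_right _).smul_right _

end Spectral

section Idempotents

variable {k V : Type*} [Field k] [CharZero k] [AddCommGroup V] [Module k V]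
  [FiniteDimensional k V]

lemma exists_trace_eq_natCast {E : Module.End k V} (hE : IsIdempotentElem E) :
    ∃ r : ℕ, LinearMap.trace k V E = r ∧ (r = 0 → E = 0) := by
  refine ⟨Module.finrank k (LinearMap.range E),
    (LinearMap.IsIdempotentElem.isProj_range E hE).trace, fun h => ?_⟩
  exact LinearMap.range_eq_bot.1 (Submodule.finrank_eq_zero.1 h)

/-- An involution commuting with an idempotent `E` splits it: `tr E = r + r'` and
`tr (σ E) = r - r'`. -/
lemma exists_trace_involution {E σ : Module.End k V} (hE : IsIdempotentElem E)
    (hσ : σ * σ = 1) (hc : Commute σ E) :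
    ∃ r r' : ℕ, LinearMap.trace k V E = r + r' ∧ LinearMap.trace k V (σ * E) = r - r' ∧
      (r = 0 → σ * E = -E) ∧ (r' = 0 → σ * E = E) := by
  have hEE : E * E = E := hE
  have h1 : σ * E * (σ * E) = E := by
    rw [mul_assoc, ← mul_assoc E, ← hc.eq, mul_assoc σ, hEE, ← mul_assoc, hσ, one_mul]
  have h2 : E * (σ * E) = σ * E := by rw [← mul_assoc, ← hc.eq, mul_assoc, hEE]
  have h3 : σ * E * E = σ * E := by rw [mul_assoc, hEE]
  have e : (2 : k)⁻¹ * 2⁻¹ * 2 = 2⁻¹ := by norm_num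
  have hP : IsIdempotentElem ((2 : k)⁻¹ • (E + σ * E)) := by
    rw [IsIdempotentElem, smul_mul_smul_comm, add_mul, mul_add, mul_add, hEE, h1, h2, h3,
      add_comm (σ * E) E, ← two_smul k (E + σ * E), smul_smul, e]
  have hP' : IsIdempotentElem ((2 : k)⁻¹ • (E - σ * E)) := by
    rw [IsIdempotentElem, smul_mul_smul_comm, sub_mul, mul_sub, mul_sub, hEE, h1, h2, h3,
      show E - σ * E - (σ * E - E) = (2 : k) • (E - σ * E) by rw [two_smul]; abel, smul_smul, e]
  obtain ⟨r, hr, hr0⟩ := exists_trace_eq_natCast hP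
  obtain ⟨r', hr', hr0'⟩ := exists_trace_eq_natCast hP'
  have h20 : (2 : k)⁻¹ ≠ 0 := by norm_num
  refine ⟨r, r', ?_, ?_, fun h => ?_, fun h => ?_⟩
  · rw [← hr, ← hr', ← map_add, ← smul_add]
    congr 1
    rw [show E + σ * E + (E - σ * E) = (2 : k) • E by rw [two_smul]; abel, smul_smul]
    norm_num
  · rw [← hr, ← hr', ← map_sub, ← smul_sub]
    congr 1
    rw [show E + σ * E - (E - σ * E) = (2 : k) • (σ * E) by rw [two_smul]; abel, smul_smul]
    norm_num
  · have := (smul_eq_zero.1 (hr0 h)).resolve_left h20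
    exact (neg_eq_of_add_eq_zero_right this).symm
  · have := (smul_eq_zero.1 (hr0' h)).resolve_left h20
    exact (sub_eq_zero.1 this).symm

/-- An involution with trace zero forces even dimension. -/
lemma even_finrank_of_involution {σ : Module.End k V} (hσ : σ * σ = 1)
    (ht : LinearMap.trace k V σ = 0) : Even (Module.finrank k V) := by
  obtain ⟨r, r', h1, h2, -⟩ := exists_trace_involution (E := (1 : Module.End k V))
    IsIdempotentElem.one hσ (Commute.one_right σ)
  rw [mul_one, ht] at h2
  rw [LinearMap.trace_one] at h1
  have h3 : r = r' := by exact_mod_cast (sub_eq_zero.1 h2.symm)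
  subst h3
  exact ⟨r, by exact_mod_cast h1⟩

end Idempotents

section Order

variable {k V : Type*} [Field k] [CharZero k] [AddCommGroup V] [Module k V]
  [FiniteDimensional k V] {N : ℕ} [NeZero N] {χ : AddChar (ZMod N) k}

lemma eq_of_convolution_eq {n : ℕ} (r : ZMod N → ℕ) (hpos : ∀ j, r j ≠ 0) (hsum : ∑ j, r j = n)
    (hconv : ∀ j, ∑ a, r a * r (j - a) = n * r j) : ∀ j, N * r j = n := by
  obtain ⟨j₀, -, hj₀⟩ := Finset.exists_max_image Finset.univ r ⟨0, Finset.mem_univ _⟩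
  have h1 : ∑ a, r a * (r j₀ - r (j₀ - a)) = 0 := by
    have h2 : ∑ a, r a * (r j₀ - r (j₀ - a)) + ∑ a, r a * r (j₀ - a) = n * r j₀ := by
      rw [← Finset.sum_add_distrib, ← hsum, Finset.sum_mul]
      refine Finset.sum_congr rfl fun a _ => ?_
      rw [← mul_add, Nat.sub_add_cancel (hj₀ _ (Finset.mem_univ _))]
    rw [hconv] at h2
    omega
  have h3 : ∀ j, r j = r j₀ := fun j => by
    have h4 := Finset.sum_eq_zero_iff.1 h1 (j₀ - j) (Finset.mem_univ _)
    rw [sub_sub_cancel] at h4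
    have h5 := (Nat.mul_eq_zero.1 h4).resolve_left (hpos _)
    have h6 := hj₀ j (Finset.mem_univ _)
    omega
  intro j
  rw [← hsum, Finset.sum_congr rfl fun i _ => (h3 i).trans (h3 j).symm]
  simp

lemma mul_trace_spec (hχ : χ.IsPrimitive) {R : Module.End k V} (hR : R ^ N = 1)
    (hne : ∀ j, spec χ R j ≠ 0)
    (htr : ∀ m : ℕ, LinearMap.trace k V (R ^ m) ^ 2 =
      Module.finrank k V * LinearMap.trace k V (R ^ m)) (j : ZMod N) :
    (N : k) * LinearMap.trace k V (spec χ R j) = Module.finrank k V ∧ N ∣ Module.finrank k V := by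
  have hid : ∀ j, IsIdempotentElem (spec χ R j) := fun j => by
    rw [IsIdempotentElem, spec_mul_spec hχ hR, if_pos rfl]
  choose r hr hr0 using fun j => exists_trace_eq_natCast (hid j)
  have hpow : ∀ m : ZMod N, LinearMap.trace k V (R ^ m.val) = ∑ j, χ (m * j) * r j := fun m => by
    rw [pow_eq_sum_spec hχ hR m, map_sum]
    simp [hr]
  have hinv : ∀ j, (r j : k) = (N : k)⁻¹ * ∑ m : ZMod N, χ (-(m * j)) *
      LinearMap.trace k V (R ^ m.val) := fun j => by
    rw [← hr, spec, map_smul, map_sum]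
    simp
  have hsum : ∑ j, r j = Module.finrank k V := by
    have h := hpow 0
    simp only [ZMod.val_zero, pow_zero, LinearMap.trace_one, zero_mul, AddChar.map_zero_eq_one,
      one_mul] at h
    exact_mod_cast h.symm
  have hconv : ∀ j, ∑ a, r a * r (j - a) = Module.finrank k V * r j := fun j => by
    have h : ∀ m : ZMod N, (Module.finrank k V : k) * LinearMap.trace k V (R ^ m.val) =
        ∑ a, ∑ b, (r a * r b : k) * χ (m * (a + b)) := fun m => by
      rw [← htr, hpow, sq, Finset.sum_mul_sum]
      refine Finset.sum_congr rfl fun a _ => Finset.sum_congr rfl fun b _ => ?_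
      rw [mul_add, AddChar.map_add_eq_mul]; ring
    have h' : (Module.finrank k V : k) * r j = ∑ a, ∑ b, (r a * r b : k) *
        ((N : k)⁻¹ * ∑ m : ZMod N, χ (m * (a + b - j))) := by
      rw [hinv j, mul_left_comm, Finset.mul_sum]
      simp only [mul_left_comm _ (χ _) _, h]
      simp only [Finset.mul_sum]
      rw [Finset.sum_comm]
      refine Finset.sum_congr rfl fun a _ => ?_
      rw [Finset.sum_comm]
      refine Finset.sum_congr rfl fun b _ => Finset.sum_congr rfl fun m _ => ?_
      rw [show m * (a + b - j) = -(m * j) + m * (a + b) by ring, AddChar.map_add_eq_mul]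
      ring
    have h'' : ∀ a b : ZMod N, a + b - j = 0 ↔ b = j - a := fun a b => by
      rw [sub_eq_zero, eq_sub_iff_add_eq, add_comm]
    simp only [sum_char hχ, h'', mul_ite, mul_one, mul_zero, Finset.sum_ite_eq',
      Finset.mem_univ, if_true, Finset.sum_ite_eq] at h'
    exact_mod_cast h'.symm
  have hfin := eq_of_convolution_eq r (fun j h => hne j (hr0 j h)) hsum hconv j
  exact ⟨by rw [hr]; exact_mod_cast hfin, ⟨_, hfin.symm⟩⟩

lemma spec_apply_ne_zero {R : Module.End k V} {v : V}
    (hv : LinearIndependent k (fun m : ZMod N => (R ^ m.val) v)) (j : ZMod N) :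
    spec χ R j v ≠ 0 := by
  intro h0
  rw [spec, LinearMap.smul_apply, smul_eq_zero, LinearMap.sum_apply] at h0
  have h1 := h0.resolve_left (by simp [NeZero.ne])
  have h2 := Fintype.linearIndependent_iff.1 hv _ h1 0
  simp at h2

/-- An operator commuting with `R` and fixing a cyclic vector of `R` is the identity. -/
lemma eq_one_of_commute {R T : Module.End k V} {v : V}
    (hv : LinearIndependent k (fun m : ZMod N => (R ^ m.val) v)) (hN : N = Module.finrank k V)
    (hRT : Commute R T) (hT : T v = v) : T = 1 := by
  have hspan := hv.span_eq_top_of_card_eq_finrank' (by rw [ZMod.card, hN])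
  refine LinearMap.ext_on_range hspan fun m => ?_
  have := LinearMap.congr_fun ((hRT.pow_left m.val).eq) v
  simp only [Module.End.mul_apply, hT] at this
  rw [← this]; rfl

end Order

section Main

variable {k V : Type*} [Field k] [CharZero k] [AddCommGroup V] [Module k V]
  [FiniteDimensional k V] {p : ℕ} [Fact p.Prime]

/-- Galois conjugation of integral relations among `p`-th roots of unity. -/
lemma sum_intCast_mul_pow_eq_zero {ω : k} (hω : IsPrimitiveRoot ω p) (D : ZMod p → ℤ)
    (hD : ∑ i, (D i : k) * ω ^ i.val = 0) {c : ZMod p} (hc : c ≠ 0) :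
    ∑ i, (D i : k) * (ω ^ c.val) ^ i.val = 0 := by
  let P : Polynomial ℤ := ∑ i, Polynomial.C (D i) * Polynomial.X ^ i.val
  have hP : ∀ z : k, Polynomial.aeval z P = ∑ i, (D i : k) * z ^ i.val := fun z => by
    simp [P]
  have hp : p.Prime := Fact.out
  have hcop : Nat.Coprime c.val p := by
    refine (Nat.coprime_comm.1 (hp.coprime_iff_not_dvd.2 fun h => hc ?_))
    have := Nat.eq_zero_of_dvd_of_lt h (ZMod.val_lt c)
    exact (ZMod.val_eq_zero c).1 this
  have hdvd : minpoly ℤ (ω ^ c.val) ∣ P := by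
    rw [← hω.minpoly_eq_pow_coprime hcop]
    exact minpoly.isIntegrallyClosed_dvd (hω.isIntegral hp.pos) (by rw [hP, hD])
  rw [← hP]
  obtain ⟨Q, hQ⟩ := hdvd
  rw [hQ, map_mul, minpoly.aeval, zero_mul]

lemma trace_involution_mul_pow {ω : k} (hω : IsPrimitiveRoot ω p) {σ W : Module.End k V}
    (hσ : σ * σ = 1) (hc : Commute σ W) (hW : W ^ p = 1)
    (ht : LinearMap.trace k V (σ * W) = 0) {c : ZMod p} (hc0 : c ≠ 0) :
    LinearMap.trace k V (σ * W ^ c.val) = 0 := by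
  let χ := AddChar.zmodChar p hω.pow_eq_one
  have hχ : χ.IsPrimitive := AddChar.zmodChar_primitive_of_primitive_root p hω
  have hD : ∀ j, ∃ z : ℤ, LinearMap.trace k V (σ * spec χ W j) = z := fun j => by
    obtain ⟨r, r', -, h2, -⟩ := exists_trace_involution (E := spec χ W j) (σ := σ)
      (by rw [IsIdempotentElem, spec_mul_spec hχ hW, if_pos rfl]) hσ (commute_spec hc j)
    exact ⟨r - r', by rw [h2]; push_cast; ring⟩
  choose D hD using hD
  have htr : ∀ c : ZMod p, LinearMap.trace k V (σ * W ^ c.val) =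
      ∑ i, (D i : k) * (ω ^ c.val) ^ i.val := fun c => by
    rw [pow_eq_sum_spec hχ hW c, Finset.mul_sum, map_sum]
    refine Finset.sum_congr rfl fun i _ => ?_
    rw [mul_smul_comm, map_smul, hD, smul_eq_mul, mul_comm, ← pow_val_mul hω.pow_eq_one]
    rfl
  rw [htr]
  refine sum_intCast_mul_pow_eq_zero hω D ?_ hc0
  have h1 := htr 1
  have hp1 : (1 : ZMod p).val = 1 := ZMod.val_one p
  simp only [hp1, pow_one, ht] at h1
  exact h1.symm

/-- If `T ^ (2p) = 1` and `T` commutes with `R` of order `p`, under the trace and multiplicity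
conditions satisfied by the squared antipode, then `T ^ p = 1`. -/
lemma pow_eq_one_of_trace {ω : k} (hω : IsPrimitiveRoot ω p) (hodd : Odd p)
    {T R : Module.End k V} (hTR : Commute T R) (hT : T ^ (2 * p) = 1) (hR : R ^ p = 1)
    (htr : ∀ m : ℕ, LinearMap.trace k V (T * R ^ m) = 0)
    (hspec : ∀ j, LinearMap.trace k V (spec (AddChar.zmodChar p hω.pow_eq_one) R j) = p)
    {v : V} (hv : T v = v)
    (hne : ∀ j, spec (AddChar.zmodChar p hω.pow_eq_one) R j v ≠ 0) : T ^ p = 1 := by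
  have hp : p.Prime := Fact.out
  set χ := AddChar.zmodChar p hω.pow_eq_one with hχ_def
  have hχ : χ.IsPrimitive := AddChar.zmodChar_primitive_of_primitive_root p hω
  set σ := T ^ p with hσ_def
  set Q := T ^ (p + 1) with hQ_def
  have hσσ : σ * σ = 1 := by rw [hσ_def, ← pow_add, ← two_mul, hT]
  have hQp : Q ^ p = 1 := by
    obtain ⟨s, hs⟩ := hodd
    rw [hQ_def, ← pow_mul, show (p + 1) * p = 2 * p * (s + 1) by rw [hs]; ring, pow_mul, hT,
      one_pow]
  have hσQ : σ * Q = T := by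
    rw [hσ_def, hQ_def, ← pow_add, show p + (p + 1) = 2 * p + 1 by ring, pow_succ, hT, one_mul]
  have hcσQ : Commute σ Q := Commute.pow_pow_self T _ _
  have hcσR : Commute σ R := hTR.pow_left _
  have hcQR : Commute Q R := hTR.pow_left _
  have hzero : ∀ a b : ZMod p, a ≠ 0 →
      LinearMap.trace k V (σ * (Q ^ a.val * R ^ b.val)) = 0 := fun a b ha => by
    have hb : b = (b / a) * a := (div_mul_cancel₀ b ha).symm
    have hcm : Commute Q (R ^ (b / a).val) := hcQR.pow_right _
    have h := trace_involution_mul_pow hω (W := Q * R ^ (b / a).val) hσσ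
      (hcσQ.mul_right (hcσR.pow_right _))
      (by rw [hcm.mul_pow, hQp, one_mul, ← pow_mul, mul_comm, pow_mul, hR, one_pow])
      (by rw [← mul_assoc, hσQ]; exact htr _) ha
    rwa [hcm.mul_pow, ← pow_val_mul hR, ← hb] at h
  have hkey : ∀ j, (p : k) * LinearMap.trace k V (σ * (spec χ Q 0 * spec χ R j)) =
      LinearMap.trace k V (σ * spec χ R j) := fun j => by
    have h1 : σ * (spec χ Q 0 * spec χ R j) = (p : k)⁻¹ • ∑ a : ZMod p,
        σ * (Q ^ a.val * spec χ R j) := by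
      conv_lhs => rw [spec]
      simp [Finset.sum_mul, Finset.mul_sum]
    have h2 : ∀ a : ZMod p, a ≠ 0 →
        LinearMap.trace k V (σ * (Q ^ a.val * spec χ R j)) = 0 := fun a ha => by
      rw [spec, mul_smul_comm, mul_smul_comm, map_smul, Finset.mul_sum, Finset.mul_sum, map_sum,
        Finset.sum_eq_zero, smul_zero]
      intro b _
      rw [mul_smul_comm, mul_smul_comm, map_smul, hzero a b ha, smul_zero]
    rw [h1, map_smul, map_sum, Fintype.sum_eq_single 0 h2, smul_eq_mul, ← mul_assoc,
      mul_inv_cancel₀ (by exact_mod_cast hp.ne_zero), one_mul, ZMod.val_zero, pow_zero, one_mul]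
  have hidR : ∀ j, IsIdempotentElem (spec χ R j) := fun j => by
    rw [IsIdempotentElem, spec_mul_spec hχ hR, if_pos rfl]
  have hidQ : IsIdempotentElem (spec χ Q 0) := by
    rw [IsIdempotentElem, spec_mul_spec hχ hQp, if_pos rfl]
  have hσv : σ v = v := by
    rw [hσ_def, Module.End.pow_apply, Function.iterate_fixed hv]
  have hfix : ∀ j, σ * spec χ R j = spec χ R j := fun j => by
    have hcσE : Commute σ (spec χ R j) := commute_spec hcσR j
    have hcQE : Commute (spec χ Q 0) (spec χ R j) :=
      (commute_spec (commute_spec hcQR j).symm 0).symm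
    obtain ⟨r, r', h1, h2, h3, h4⟩ := exists_trace_involution (hidR j) hσσ hcσE
    obtain ⟨s, s', -, h5, -⟩ := exists_trace_involution (E := spec χ Q 0 * spec χ R j)
      (hidQ.mul_of_commute hcQE (hidR j)) hσσ ((commute_spec hcσQ 0).mul_right hcσE)
    rw [hspec] at h1
    have h6 := hkey j
    rw [h2, h5] at h6
    have h1' : p = r + r' := by exact_mod_cast h1
    have h6' : (p : ℤ) * (s - s') = r - r' := by exact_mod_cast h6
    have hr0 : r ≠ 0 := fun h => by
      have h7 := LinearMap.congr_fun (h3 h) v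
      have h8 := LinearMap.congr_fun hcσE.eq v
      simp only [Module.End.mul_apply, hσv] at h8
      simp only [Module.End.mul_apply, LinearMap.neg_apply, h8] at h7
      rw [eq_neg_iff_add_eq_zero, ← two_smul k] at h7
      exact hne j ((smul_eq_zero.1 h7).resolve_left two_ne_zero)
    have hdvd : (p : ℤ) ∣ 2 * r := ⟨s - s' + 1, by rw [mul_add, h6', h1']; push_cast; ring⟩
    have hdvd' : p ∣ 2 * r := by exact_mod_cast hdvd
    have hpr : p ∣ r := (hp.dvd_mul.1 hdvd').resolve_left fun h => by
      have := (Nat.prime_dvd_prime_iff_eq hp Nat.prime_two).1 h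
      subst this
      exact absurd hodd (by decide)
    have := Nat.le_of_dvd (Nat.pos_of_ne_zero hr0) hpr
    exact h4 (by omega)
  calc σ = σ * ∑ j, spec χ R j := by rw [sum_spec hχ, mul_one]
    _ = ∑ j, spec χ R j := by rw [Finset.mul_sum]; exact Finset.sum_congr rfl fun j _ => hfix j
    _ = 1 := sum_spec hχ

end Main

section Cyclic

variable {k V : Type*} [Field k] [AddCommGroup V] [Module k V] [FiniteDimensional k V]

/-- An injective operator whose orbit of `v` lies in a linearly independent set and determines
its powers has finite order, with orbit of `v` linearly independent. -/
lemma orderOf_pos_and_linearIndependent {R : Module.End k V} {v : V} {X : Set V}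
    (hX : LinearIndepOn k id X) (hmem : ∀ i : ℕ, (R ^ i) v ∈ X)
    (hdet : ∀ i j : ℕ, (R ^ i) v = (R ^ j) v → R ^ i = R ^ j) (hinj : Function.Injective R) :
    0 < orderOf R ∧ LinearIndependent k (fun m : ZMod (orderOf R) => (R ^ m.val) v) := by
  have hpos : 0 < orderOf R := by
    have hfin : Finite X := hX.finite
    obtain ⟨i, j, hij, h⟩ := Finite.exists_ne_map_eq_of_infinite
      (fun i : ℕ => (⟨(R ^ i) v, hmem i⟩ : X))
    have h1 : R ^ i = R ^ j := hdet i j (congrArg Subtype.val h)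
    have hcancel : ∀ a b : ℕ, a < b → R ^ a = R ^ b → 0 < orderOf R := fun a b hab hR => by
      rw [orderOf_pos_iff, isOfFinOrder_iff_pow_eq_one]
      refine ⟨b - a, by omega, LinearMap.ext fun x => ?_⟩
      have hi : Function.Injective (R ^ a) := by
        rw [Module.End.coe_pow]; exact hinj.iterate a
      apply hi
      rw [← Module.End.mul_apply, ← pow_add, Nat.add_sub_cancel' hab.le, ← hR]
      rfl
    rcases lt_or_gt_of_ne hij with hlt | hlt
    · exact hcancel i j hlt h1
    · exact hcancel j i hlt h1.symm
  refine ⟨hpos, ?_⟩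
  have : NeZero (orderOf R) := ⟨hpos.ne'⟩
  refine LinearIndependent.comp hX (fun m : ZMod (orderOf R) => (⟨(R ^ m.val) v, hmem _⟩ : X)) ?_
  intro a b hab
  have h1 := hdet _ _ (congrArg Subtype.val hab)
  exact ZMod.val_injective _ (pow_injOn_Iio_orderOf (ZMod.val_lt a) (ZMod.val_lt b) h1)

variable [IsAlgClosed k] [CharZero k]

lemma pow_eq_one_of_cyclic {p : ℕ} (hp : p.Prime) (hodd : Odd p)
    (hdim : Module.finrank k V = p ^ 2) {R T : Module.End k V} {v : V} {X : Set V}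
    (hX : LinearIndepOn k id X) (hmem : ∀ i : ℕ, (R ^ i) v ∈ X)
    (hdet : ∀ i j : ℕ, (R ^ i) v = (R ^ j) v → R ^ i = R ^ j) (hinj : Function.Injective R)
    (hTR : Commute T R) (hT : T v = v)
    (htr : ∀ m : ℕ, LinearMap.trace k V (T * R ^ m) = 0)
    (hsq : ∀ m : ℕ, LinearMap.trace k V (R ^ m) ^ 2 =
      Module.finrank k V * LinearMap.trace k V (R ^ m)) :
    R ^ p = 1 ∧ (R = 1 ∨ (T ^ (2 * p) = 1 → T ^ p = 1)) := by
  obtain ⟨hpos, hv⟩ := orderOf_pos_and_linearIndependent hX hmem hdet hinj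
  have hR := pow_orderOf_eq_one R
  generalize orderOf R = N at hpos hv hR
  have : NeZero N := ⟨hpos.ne'⟩
  have : NeZero (N : k) := ⟨by exact_mod_cast hpos.ne'⟩
  obtain ⟨ω, hω⟩ := HasEnoughRootsOfUnity.exists_primitiveRoot k N
  have hχ := AddChar.zmodChar_primitive_of_primitive_root N hω
  have hne := spec_apply_ne_zero (χ := AddChar.zmodChar N hω.pow_eq_one) hv
  have hspec := mul_trace_spec hχ hR (fun j h0 => hne j (by rw [h0]; rfl)) hsq
  have hdvd := (hspec 0).2
  rw [hdim, Nat.dvd_prime_pow hp] at hdvd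
  have hN : N = 1 ∨ N = p ∨ N = p ^ 2 := by
    obtain ⟨i, hi, rfl⟩ := hdvd
    interval_cases i <;> simp
  clear hdvd
  rcases hN with rfl | rfl | rfl
  · rw [pow_one] at hR
    exact ⟨by rw [hR, one_pow], Or.inl hR⟩
  · have : Fact N.Prime := ⟨hp⟩
    refine ⟨hR, Or.inr fun h2 => ?_⟩
    have hp0 : (N : k) ≠ 0 := by exact_mod_cast hp.ne_zero
    refine pow_eq_one_of_trace hω hodd hTR h2 hR htr (fun j => ?_) hT hne
    have := (hspec j).1
    rw [hdim, Nat.cast_pow, sq] at this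
    exact mul_left_cancel₀ hp0 this
  · exfalso
    have h1 := eq_one_of_commute hv hdim.symm hTR.symm hT
    have h2 := htr 0
    rw [h1, pow_zero, mul_one, LinearMap.trace_one, hdim] at h2
    have : p ^ 2 = 0 := by exact_mod_cast h2
    exact hp.ne_zero (pow_eq_zero_iff two_ne_zero |>.1 this)

end Cyclic

section Hopf

variable {k H : Type*} [Field k] [Ring H] [HopfAlgebra k H]

lemma hitL_comp (f : H →ₗ[k] k) (g : H →ₗ[k] k) :
    hitL f ∘ₗ hitL g = hitL (f ∘ₗ hitL g) := by
  ext a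
  rw [LinearMap.comp_apply, hitL_apply, comul_hitL]
  · rfl
  · constructor <;> intros <;> simp [add_smul, smul_smul, mul_comm]

lemma hitL_counit : hitL (counit (R := k) (A := H)) = LinearMap.id := by
  ext a
  rw [hitL_apply, sw_counit_left a (F := fun y => y)]
  rfl

/-- Powers of the hit operator of a character are hit operators of characters. -/
lemma exists_hitL_pow (α : H →ₐ[k] k) (i : ℕ) :
    ∃ β : H →ₐ[k] k, (hitL α.toLinearMap : Module.End k H) ^ i = hitL β.toLinearMap := by
  induction i with
  | zero => exact ⟨Bialgebra.counitAlgHom k H, hitL_counit.symm⟩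
  | succ i ih =>
    obtain ⟨β, hβ⟩ := ih
    refine ⟨AlgHom.ofLinearMap (β.toLinearMap ∘ₗ hitL α.toLinearMap) ?_ ?_, ?_⟩
    · simp [hitL_one]
    · intro x y; simp [hitL_mul]
    · rw [pow_succ, hβ]
      exact hitL_comp _ _

lemma counit_comp_hitL (f : H →ₗ[k] k) : counit (R := k) ∘ₗ hitL f = f :=
  LinearMap.ext fun a => counit_hitL f a

lemma dualMap_pow {V : Type*} [AddCommGroup V] [Module k V] (L : Module.End k V) (i : ℕ) :
    (L.dualMap : Module.End k (Module.Dual k V)) ^ i = (L ^ i).dualMap := by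
  induction i with
  | zero => rfl
  | succ i ih => rw [pow_succ', ih, pow_succ]; rfl

lemma trace_dualMap {V : Type*} [AddCommGroup V] [Module k V] [FiniteDimensional k V]
    (L : Module.End k V) :
    LinearMap.trace k (Module.Dual k V) L.dualMap = LinearMap.trace k V L :=
  LinearMap.trace_transpose' L

variable [FiniteDimensional k H] [IsAlgClosed k] [CharZero k] {p : ℕ} {t : H} {l : H →ₗ[k] k}

lemma groupLike_pow_eq_one (hp : p.Prime) (hodd : Odd p) (hdim : Module.finrank k H = p ^ 2)
    (hss : ¬ IsSemisimpleRing H) (h : IntegralPair t l) {g : H} (hg : IsGroupLikeElem k g) :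
    g ^ p = 1 ∧ (g = 1 ∨ ((S2 k H : Module.End k H) ^ (2 * p) = 1 →
      (S2 k H : Module.End k H) ^ p = 1)) := by
  have hpow : ∀ i : ℕ, (LinearMap.mulRight k g : Module.End k H) ^ i =
      LinearMap.mulRight k (g ^ i) := fun i => LinearMap.pow_mulRight _ _ _ i
  have key := pow_eq_one_of_cyclic hp hodd hdim (R := LinearMap.mulRight k g) (T := S2 k H)
    (v := 1) (X := {a | IsGroupLikeElem k a}) linearIndepOn_isGroupLikeElem
    (fun i => by rw [hpow]; simpa using hg.pow)
    (fun i j hij => by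
      rw [hpow, hpow] at hij ⊢
      simp only [LinearMap.mulRight_apply, one_mul] at hij
      rw [hij])
    (fun x y hxy => by
      have := congrArg (· * antipode k g) hxy
      simpa [mul_assoc, groupLike_mul_antipode hg] using this)
    (mulRight_S2 hg).symm (by simp [S2_apply])
    (fun m => by
      rw [hpow, LinearMap.trace_mul_comm]
      exact h.trace_mulRight_S2_eq_zero hss _)
    (fun m => by rw [hpow]; exact trace_mulRight_sq hg.pow)
  have hval : ∀ z : H, (LinearMap.mulRight k z : Module.End k H) = 1 → z = 1 := fun z hz => by
    simpa using LinearMap.congr_fun hz 1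
  exact ⟨hval _ (by rw [← hpow]; exact key.1), key.2.imp_left (hval g)⟩

lemma hitL_pow_eq_one (hp : p.Prime) (hodd : Odd p) (hdim : Module.finrank k H = p ^ 2)
    (hss : ¬ IsSemisimpleRing H) (h : IntegralPair t l) (α : H →ₐ[k] k)
    (hα : Function.Injective (hitL α.toLinearMap)) :
    (hitL α.toLinearMap : Module.End k H) ^ p = 1 ∧ ((hitL α.toLinearMap : Module.End k H) = 1 ∨
      ((S2 k H : Module.End k H) ^ (2 * p) = 1 → (S2 k H : Module.End k H) ^ p = 1)) := by
  set L : Module.End k H := hitL α.toLinearMap with hL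
  have hdual : ∀ A : Module.End k H, (A.dualMap : Module.End k (Module.Dual k H)) = 1 → A = 1 :=
    fun A hA => LinearMap.ext fun x => Module.eval_apply_injective k <| LinearMap.ext fun f =>
      LinearMap.congr_fun (LinearMap.congr_fun hA f) x
  have hcounit : ∀ i : ℕ, ∃ β : H →ₐ[k] k, L ^ i = hitL β.toLinearMap ∧
      ((L.dualMap : Module.End k (Module.Dual k H)) ^ i) (counit (R := k)) = β.toLinearMap :=
    fun i => by
      obtain ⟨β, hβ⟩ := exists_hitL_pow α i
      refine ⟨β, hβ, ?_⟩
      rw [dualMap_pow, hL, hβ]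
      exact counit_comp_hitL _
  have key := pow_eq_one_of_cyclic hp hodd (V := Module.Dual k H)
    ((Subspace.dual_finrank_eq (K := k) (V := H)).trans hdim) (R := L.dualMap)
    (T := (S2 k H).dualMap) (v := counit (R := k))
    (X := Set.range (AlgHom.toLinearMap : (H →ₐ[k] k) → H →ₗ[k] k))
    (linearIndependent_toLinearMap k H k).linearIndepOn_id
    (fun i => by
      obtain ⟨β, -, hβ⟩ := hcounit i
      rw [hβ]; exact ⟨β, rfl⟩)
    (fun i j hij => by
      obtain ⟨β, hβ, hβ'⟩ := hcounit i
      obtain ⟨γ, hγ, hγ'⟩ := hcounit j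
      rw [hβ', hγ'] at hij
      rw [dualMap_pow, dualMap_pow, hβ, hγ, hij])
    (LinearMap.dualMap_injective_of_surjective (LinearMap.injective_iff_surjective.1 hα))
    (by
      have := congrArg LinearMap.dualMap (commute_hitL_S2 α).eq
      exact this)
    (LinearMap.ext fun a => algHom_S2 (Bialgebra.counitAlgHom k H) a)
    (fun m => by
      obtain ⟨β, hβ, -⟩ := hcounit m
      rw [dualMap_pow, LinearMap.trace_mul_comm, hβ]
      exact (trace_dualMap _).trans (h.trace_S2_hitL_eq_zero hss β))
    (fun m => by
      obtain ⟨β, hβ, -⟩ := hcounit m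
      rw [dualMap_pow, trace_dualMap, hβ, Subspace.dual_finrank_eq]
      exact trace_hitL_sq β)
  refine ⟨hdual _ (by rw [← dualMap_pow]; exact key.1), key.2.imp (hdual _) fun h1 h2 => ?_⟩
  refine hdual _ ?_
  rw [← dualMap_pow]
  refine h1 ?_
  rw [dualMap_pow, h2]; rfl

lemma S2_pow_prime (hp : p.Prime) (hodd : Odd p) (hdim : Module.finrank k H = p ^ 2)
    (hss : ¬ IsSemisimpleRing H) (h : IntegralPair t l) :
    (S2 k H : Module.End k H) ^ p = 1 ∧ S2 k H ≠ 1 := by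
  have htr : LinearMap.trace k H (S2 k H) = 0 := by
    have := h.trace_mulRight_S2_eq_zero hss 1
    rwa [LinearMap.mulRight_one, LinearMap.id_comp] at this
  have hα : Function.Injective (hitL h.modularChar.toLinearMap) := fun x y hxy => by
    rw [h.radford x, h.radford y, hxy]
  obtain ⟨hg, hg'⟩ := groupLike_pow_eq_one hp hodd hdim hss h h.isGroupLike_modularElem
  obtain ⟨hL, hL'⟩ := hitL_pow_eq_one hp hodd hdim hss h h.modularChar hα
  have h2p := h.S2_pow_eq_one hg hL
  constructor
  · rcases hg' with hg1 | hg'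
    · rcases hL' with hL1 | hL'
      · exfalso
        have h2 := h.S2_pow_eq_one (N := 1) (by rw [pow_one, hg1]) (by rw [pow_one, hL1])
        have heven := even_finrank_of_involution (σ := S2 k H) (by rw [← sq]; exact h2) htr
        rw [hdim] at heven
        exact Nat.not_even_iff_odd.2 hodd.pow heven
      · exact hL' h2p
    · exact hg' h2p
  · intro h1
    rw [h1, LinearMap.trace_one, hdim] at htr
    have : p ^ 2 = 0 := by exact_mod_cast htr
    exact hp.ne_zero (pow_eq_zero_iff two_ne_zero |>.1 this)

end Hopf

end HopfDimPSq

/-- from the proof of Theorem 6.5. If `H` is a non-semisimple Hopf algebra of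
dimension `p²`, `p` an odd prime, over an algebraically closed field of characteristic `0`,
then `S^{2p} = id` and the order of `S²` is `p`. -/
theorem stmt5 (k : Type*) [Field k] [IsAlgClosed k] [CharZero k]
    (p : ℕ) (hp : p.Prime) (hpodd : Odd p)
    (H : Type*) [Ring H] [HopfAlgebra k H] [FiniteDimensional k H]
    (hdim : Module.finrank k H = p ^ 2) (hss : ¬ IsSemisimpleRing H) :
    (HopfAlgebra.antipode (R := k) (A := H) : Module.End k H) ^ (2 * p) = 1 ∧
      orderOf ((HopfAlgebra.antipode (R := k) (A := H) : Module.End k H) ^ 2) = p := by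
  obtain ⟨t, l, h⟩ := HopfDimPSq.exists_integralPair k H
  obtain ⟨h1, h2⟩ := HopfDimPSq.S2_pow_prime hp hpodd hdim hss h
  have hS : (HopfAlgebra.antipode (R := k) (A := H) : Module.End k H) ^ 2 =
      HopfDimPSq.S2 k H := sq _
  have : Fact p.Prime := ⟨hp⟩
  rw [pow_mul, hS]
  exact ⟨h1, orderOf_eq_prime h1 h2⟩
end

section
/- Let p be an odd prime and H a Hopf algebra over k with antipode S such that the distinguished group-like element g of H and the distinguished group-like element α of H* both have order p. Then the trace of the linear map S^{2p} on H equals p²·d (as an element of k) for some integer d. -/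
open scoped TensorProduct

section TraceLemmas

variable {k V : Type*} [Field k] [AddCommGroup V] [Module k V]

theorem exists_int_trace_of_isIdempotentElem [FiniteDimensional k V] {E : Module.End k V}
    (hE : IsIdempotentElem E) :
    ∃ n : ℤ, LinearMap.trace k V E = n :=
  ⟨Module.finrank k (LinearMap.range E), by
    rw [(LinearMap.isProj_range_iff_isIdempotentElem E |>.2 hE).trace]; simp⟩

theorem exists_int_trace_of_pow_three_eq_self [CharZero k] [FiniteDimensional k V]
    {U : Module.End k V} (hU : U ^ 3 = U) :
    ∃ n : ℤ, LinearMap.trace k V U = n := by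
  have h4 : U ^ 4 = U ^ 2 := by rw [pow_succ, hU, sq]
  have h2 : (2 : k)⁻¹ * 2⁻¹ * 2 = 2⁻¹ := by norm_num
  have hadd : IsIdempotentElem ((2 : k)⁻¹ • (U ^ 2 + U)) := by
    have : (U ^ 2 + U) * (U ^ 2 + U) = (2 : k) • (U ^ 2 + U) := by
      rw [two_smul]
      linear_combination (norm := noncomm_ring) h4 + 2 * hU
    rw [IsIdempotentElem, smul_mul_smul_comm, this, smul_smul, h2]
  have hsub : IsIdempotentElem ((2 : k)⁻¹ • (U ^ 2 - U)) := by
    have : (U ^ 2 - U) * (U ^ 2 - U) = (2 : k) • (U ^ 2 - U) := by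
      rw [two_smul]
      linear_combination (norm := noncomm_ring) h4 - 2 * hU
    rw [IsIdempotentElem, smul_mul_smul_comm, this, smul_smul, h2]
  obtain ⟨m, hm⟩ := exists_int_trace_of_isIdempotentElem hadd
  obtain ⟨n, hn⟩ := exists_int_trace_of_isIdempotentElem hsub
  refine ⟨m - n, ?_⟩
  rw [Int.cast_sub, ← hm, ← hn, ← map_sub, ← smul_sub]
  congr 1
  rw [add_sub_sub_cancel, ← two_smul k U, smul_smul, inv_mul_cancel₀ two_ne_zero, one_smul]

/-- The averaging operator over the powers of an operator. -/
noncomputable def powAverage (p : ℕ) (Q : Module.End k V) : Module.End k V :=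
  (p : k)⁻¹ • ∑ i ∈ Finset.range p, Q ^ i

theorem mul_powAverage {p : ℕ} {Q : Module.End k V} (hQ : Q ^ p = 1) :
    Q * powAverage p Q = powAverage p Q := by
  have h : Q * ∑ i ∈ Finset.range p, Q ^ i = ∑ i ∈ Finset.range p, Q ^ i := by
    have := Finset.sum_range_succ' (fun i => Q ^ i) p
    rw [Finset.sum_range_succ, hQ, pow_zero] at this
    rw [Finset.mul_sum]
    simpa only [pow_succ'] using (add_right_cancel this).symm
  rw [powAverage, mul_smul_comm, h]

theorem Commute.powAverage_right {p : ℕ} {T Q : Module.End k V} (h : Commute T Q) :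
    Commute T (powAverage p Q) :=
  (Commute.sum_right _ _ _ fun i _ => h.pow_right i).smul_right _

variable [CharZero k]

theorem isIdempotentElem_powAverage {p : ℕ} (hp : p ≠ 0) {Q : Module.End k V} (hQ : Q ^ p = 1) :
    IsIdempotentElem (powAverage p Q) := by
  have h (i : ℕ) : Q ^ i * powAverage p Q = powAverage p Q := by
    induction i with
    | zero => simp
    | succ n ih => rw [pow_succ, mul_assoc, mul_powAverage hQ, ih]
  have hpk : (p : k) ≠ 0 := Nat.cast_ne_zero.2 hp
  rw [IsIdempotentElem]
  nth_rewrite 1 [powAverage]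
  rw [smul_mul_assoc, Finset.sum_mul, Finset.sum_congr rfl fun i _ => h i]
  rw [Finset.sum_const, Finset.card_range, ← Nat.cast_smul_eq_nsmul k, smul_smul,
    inv_mul_cancel₀ hpk, one_smul]

variable [FiniteDimensional k V]

theorem exists_int_trace_mul_of_isIdempotentElem {T E : Module.End k V} (hT : T ^ 2 = 1)
    (hE : IsIdempotentElem E) (hTE : Commute T E) :
    ∃ n : ℤ, LinearMap.trace k V (T * E) = n := by
  apply exists_int_trace_of_pow_three_eq_self
  rw [hTE.mul_pow, hE.pow_succ_eq 2, pow_succ, hT, one_mul]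

theorem exists_int_sum_trace_eq {p : ℕ} (hp : p ≠ 0) {T A B : Module.End k V} (hT : T ^ 2 = 1)
    (hA : A ^ p = 1) (hB : B ^ p = 1) (hTA : Commute T A) (hTB : Commute T B)
    (hAB : Commute A B) :
    ∃ n : ℤ, ∑ a ∈ Finset.range p, ∑ b ∈ Finset.range p,
      LinearMap.trace k V (T * (A ^ a * B ^ b)) = (p : k) ^ 2 * n := by
  have hE : IsIdempotentElem (powAverage p A * powAverage p B) :=
    (isIdempotentElem_powAverage hp hA).mul_of_commute
      (hAB.symm.powAverage_right.symm.powAverage_right)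
      (isIdempotentElem_powAverage hp hB)
  obtain ⟨n, hn⟩ := exists_int_trace_mul_of_isIdempotentElem hT hE
    (hTA.powAverage_right.mul_right hTB.powAverage_right)
  refine ⟨n, ?_⟩
  have hpk : (p : k) ≠ 0 := Nat.cast_ne_zero.2 hp
  rw [← hn, powAverage, powAverage, smul_mul_smul_comm, Finset.sum_mul_sum, mul_smul_comm,
    map_smul, smul_eq_mul, Finset.mul_sum, map_sum]
  simp_rw [Finset.mul_sum, map_sum]
  field_simp

theorem trace_mul_pow_eq_of_trace_mul_eq_int [IsAlgClosed k] {p : ℕ} (hp : p.Prime)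
    {T R : Module.End k V} (hT : T ^ 2 = 1) (hR : R ^ p = 1) (hTR : Commute T R) {n : ℤ}
    (hn : LinearMap.trace k V (T * R) = n) {i : ℕ} (hi : ¬ p ∣ i) :
    LinearMap.trace k V (T * R ^ i) = n := by
  have : NeZero (p : k) := ⟨Nat.cast_ne_zero.2 hp.ne_zero⟩
  have : NeZero p := ⟨hp.ne_zero⟩
  obtain ⟨ω, hω⟩ := HasEnoughRootsOfUnity.exists_primitiveRoot k p
  have hω0 : ω ≠ 0 := hω.ne_zero hp.ne_zero
  have hpow (j : ℕ) : ((ω⁻¹ ^ j) • R) ^ p = 1 := by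
    rw [smul_pow, hR, ← pow_mul, mul_comm, pow_mul, inv_pow, hω.pow_eq_one]; simp
  have hint (j : ℕ) : ∃ t : ℤ, LinearMap.trace k V (T * powAverage p ((ω⁻¹ ^ j) • R)) = t :=
    exists_int_trace_mul_of_isIdempotentElem hT (isIdempotentElem_powAverage hp.ne_zero (hpow j))
      (hTR.smul_right _).powAverage_right
  choose t ht using hint
  have hsum : ∑ j ∈ Finset.range p, powAverage p ((ω⁻¹ ^ j) • R) = 1 := by
    simp_rw [powAverage, ← Finset.smul_sum]
    rw [Finset.sum_comm, Finset.sum_eq_single 0]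
    · simp [← Nat.cast_smul_eq_nsmul k, smul_smul, NeZero.ne]
    · intro i hi h0
      simp_rw [smul_pow, ← Finset.sum_smul, ← pow_mul, mul_comm _ i, pow_mul]
      have hi' : i.Coprime p := (Nat.coprime_of_lt_prime h0 (Finset.mem_range.1 hi) hp).symm
      rw [(hω.inv.pow_of_coprime i hi').geom_sum_eq_zero hp.one_lt, zero_smul]
    · intro h
      exact absurd (Finset.mem_range.2 hp.pos) h
  have heig (i j : ℕ) : R ^ i * powAverage p ((ω⁻¹ ^ j) • R) =
      (ω ^ i) ^ j • powAverage p ((ω⁻¹ ^ j) • R) := by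
    induction i with
    | zero => simp
    | succ i ih =>
      have h1 := mul_powAverage (hpow j)
      rw [smul_mul_assoc, inv_pow, inv_smul_eq_iff₀ (pow_ne_zero _ hω0)] at h1
      rw [inv_pow] at ih ⊢
      rw [pow_succ, mul_assoc, h1, mul_smul_comm, ih, smul_smul]
      ring_nf
  have htr (i : ℕ) : LinearMap.trace k V (T * R ^ i) =
      ∑ j ∈ Finset.range p, (t j : k) * (ω ^ i) ^ j := by
    rw [← mul_one (R ^ i), ← hsum, Finset.mul_sum, Finset.mul_sum, map_sum]
    refine Finset.sum_congr rfl fun j _ => ?_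
    rw [heig, mul_smul_comm, map_smul, ht, smul_eq_mul, mul_comm]
  let f : Polynomial ℤ :=
    ∑ j ∈ Finset.range p, Polynomial.C (t j) * Polynomial.X ^ j - Polynomial.C n
  have hf (x : k) : Polynomial.aeval x f = ∑ j ∈ Finset.range p, (t j : k) * x ^ j - n := by
    simp [f]
  have hfω : Polynomial.aeval ω f = 0 := by
    rw [hf, ← hn, ← pow_one R, htr 1, pow_one, sub_self]
  have hcop : i.Coprime p := ((hp.coprime_iff_not_dvd).2 hi).symm
  have hdvd := minpoly.isIntegrallyClosed_dvd (hω.isIntegral hp.pos) hfω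
  rw [hω.minpoly_eq_pow_coprime hcop] at hdvd
  have h0 : Polynomial.aeval (ω ^ i) f = 0 :=
    Polynomial.aeval_eq_zero_of_dvd_aeval_eq_zero hdvd (minpoly.aeval _ _)
  rw [hf, sub_eq_zero] at h0
  rw [htr, h0]

end TraceLemmas

section SemiconjTrace

variable {k V : Type*} [Field k] [AddCommGroup V] [Module k V]

theorem LinearMap.trace_eq_of_semiconjBy {f U W : Module.End k V} (hf : IsUnit f)
    (h : SemiconjBy f U W) : LinearMap.trace k V U = LinearMap.trace k V W := by
  obtain ⟨u, rfl⟩ := hf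
  rw [← LinearMap.trace_conj k U u, h.eq, mul_assoc, Units.mul_inv, mul_one]

theorem LinearMap.trace_mul_trace_eq_of_semiconjBy [FiniteDimensional k V]
    {f : Module.End k (V ⊗[k] V)} (hf : IsUnit f)
    {a b c d : Module.End k V} (h : SemiconjBy f (TensorProduct.map a b) (TensorProduct.map c d)) :
    LinearMap.trace k V a * LinearMap.trace k V b =
      LinearMap.trace k V c * LinearMap.trace k V d := by
  rw [← LinearMap.trace_tensorProduct', ← LinearMap.trace_tensorProduct',
    LinearMap.trace_eq_of_semiconjBy hf h]

end SemiconjTrace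

theorem sum_range_pow_mul_eq {M : Type*} [Semiring M] {p a : ℕ} (hp : p.Prime) (ha : ¬ p ∣ a)
    {R : M} (hR : R ^ p = 1) :
    ∑ d ∈ Finset.range p, R ^ (a * d) = ∑ d ∈ Finset.range p, R ^ d := by
  have hmem : ∀ d ∈ Finset.range p, a * d % p ∈ Finset.range p := fun d _ =>
    Finset.mem_range.2 (Nat.mod_lt _ hp.pos)
  have hinj : Set.InjOn (fun d => a * d % p) (Finset.range p) := by
    intro x hx y hy hxy
    have hxy' : a * x ≡ a * y [MOD p] := hxy
    have := Nat.ModEq.cancel_left_of_coprime ((hp.coprime_iff_not_dvd).2 ha) hxy'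
    exact this.eq_of_lt_of_lt (Finset.mem_range.1 hx) (Finset.mem_range.1 hy)
  refine Finset.sum_bij (fun d _ => a * d % p) hmem (fun x hx y hy h => hinj hx hy h)
    (fun b hb => ?_) (fun d _ => pow_eq_pow_mod _ hR)
  obtain ⟨d, hd, h⟩ := Finset.surj_on_of_inj_on_of_card_le (fun d _ => a * d % p) hmem
    (fun x y hx hy h => hinj hx hy h) le_rfl b hb
  exact ⟨d, hd, h.symm⟩

section TraceDivisibility

variable {k V : Type*} [Field k] [IsAlgClosed k] [CharZero k] [AddCommGroup V] [Module k V]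
  [FiniteDimensional k V]

/-- If `T` is an involution, `C` and `Q` have order dividing `p`, the traces of `T * C ^ a` vanish
for `p ∤ a`, and each `Tr (T * C ^ a * Q ^ b)` is either `0` or `Tr (T * C ^ a)`, then the vanishing
of `Tr (T * Q)` forces `p ^ 2` to divide `Tr T`. -/
theorem exists_int_trace_eq_sq_mul_of_trace_mul_eq_zero {p : ℕ} (hp : p.Prime)
    {T C Q : Module.End k V} (hT : T ^ 2 = 1) (hC : C ^ p = 1) (hQ : Q ^ p = 1)
    (hTC : Commute T C) (hTQ : Commute T Q) (hCQ : Commute C Q)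
    (htC : ∀ a, ¬ p ∣ a → LinearMap.trace k V (T * C ^ a) = 0)
    (hdich : ∀ a b,
      LinearMap.trace k V (T * C ^ a * Q ^ b) * LinearMap.trace k V (T * C ^ a * Q ^ b) =
        LinearMap.trace k V (T * C ^ a) * LinearMap.trace k V (T * C ^ a * Q ^ b))
    (htQ : LinearMap.trace k V (T * Q) = 0) :
    ∃ d : ℤ, LinearMap.trace k V T = (p : k) ^ 2 * d := by
  obtain ⟨n, hn⟩ := exists_int_sum_trace_eq hp.ne_zero hT hC hQ hTC hTQ hCQ
  have hzero (a b : ℕ) (ha : ¬ p ∣ a) : LinearMap.trace k V (T * C ^ a * Q ^ b) = 0 := by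
    have := hdich a b
    rwa [htC a ha, zero_mul, mul_self_eq_zero] at this
  refine ⟨n, ?_⟩
  rw [← hn, Finset.sum_eq_single 0, Finset.sum_eq_single 0]
  · simp
  · intro b hb hb0
    have := trace_mul_pow_eq_of_trace_mul_eq_int hp hT hQ hTQ (n := 0) (by simpa using htQ)
      (Nat.not_dvd_of_pos_of_lt (Nat.pos_of_ne_zero hb0) (Finset.mem_range.1 hb))
    simpa using this
  · intro h
    exact absurd (Finset.mem_range.2 hp.pos) h
  · intro a ha ha0
    refine Finset.sum_eq_zero fun b _ => ?_
    rw [← mul_assoc]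
    exact hzero a b
      (Nat.not_dvd_of_pos_of_lt (Nat.pos_of_ne_zero ha0) (Finset.mem_range.1 ha))
  · intro h
    exact absurd (Finset.mem_range.2 hp.pos) h

/-- If `T` is an involution, `D` and `A` have order dividing `p`, all traces
`Tr (T * D ^ a * A ^ b)` are `0` or `Tr T`, being `Tr T` on the two coordinate axes and `0` at
`(p - 1, 1)`, then `p ^ 2`
divides `Tr T`. -/
theorem exists_int_trace_eq_sq_mul_of_trace_mul_eq {p : ℕ} (hp : p.Prime)
    {T D A : Module.End k V} (hT : T ^ 2 = 1) (hD : D ^ p = 1) (hA : A ^ p = 1)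
    (hTD : Commute T D) (hTA : Commute T A) (hDA : Commute D A)
    (htD : LinearMap.trace k V (T * D) = LinearMap.trace k V T)
    (htA : LinearMap.trace k V (T * A) = LinearMap.trace k V T)
    (hdich : ∀ b, LinearMap.trace k V (T * (D * A ^ b)) = 0 ∨
      LinearMap.trace k V (T * (D * A ^ b)) = LinearMap.trace k V T)
    (hzero : LinearMap.trace k V (T * (D ^ (p - 1) * A)) = 0) :
    ∃ d : ℤ, LinearMap.trace k V T = (p : k) ^ 2 * d := by
  obtain ⟨x, hx⟩ := exists_int_trace_of_pow_three_eq_self (U := T) (by rw [pow_succ, hT, one_mul])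
  obtain ⟨n, hn⟩ := exists_int_sum_trace_eq hp.ne_zero hT hD hA hTD hTA hDA
  obtain ⟨q, rfl⟩ : ∃ q, p = q + 1 := ⟨p - 1, by have := hp.pos; omega⟩
  rw [Nat.add_sub_cancel] at hzero
  have hq : ¬ (q + 1) ∣ q := Nat.not_dvd_of_pos_of_lt (by have := hp.two_le; omega) (by omega)
  have hpow (b : ℕ) : (D * A ^ b) ^ (q + 1) = 1 := by
    rw [(hDA.pow_right b).mul_pow, hD, ← pow_mul, mul_comm, pow_mul, hA, one_pow, one_mul]
  have hinv {R : Module.End k V} (hR : R ^ (q + 1) = 1) : R ^ (q * q) = R := by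
    obtain rfl | ⟨r, rfl⟩ : q = 0 ∨ ∃ r, q = r + 1 := by
      rcases q with _ | r
      · exact Or.inl rfl
      · exact Or.inr ⟨r, rfl⟩
    · exact absurd hp (by decide)
    · rw [show (r + 1) * (r + 1) = (r + 1 + 1) * r + 1 by ring, pow_succ, pow_mul, hR, one_pow,
        one_mul]
  have hlast : LinearMap.trace k V (T * (D * A ^ q)) = 0 := by
    have := trace_mul_pow_eq_of_trace_mul_eq_int hp hT (R := D ^ q * A)
      (by rw [(hDA.pow_left q).mul_pow, hA, ← pow_mul, mul_comm, pow_mul, hD, one_pow, one_mul])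
      ((hTD.pow_right q).mul_right hTA) (n := 0) (by simpa using hzero) hq
    rwa [(hDA.pow_left q).mul_pow, ← pow_mul, hinv hD, Int.cast_zero] at this
  have hind (b : ℕ) : ∃ e : ℕ, e ≤ 1 ∧ (b = 0 → e = 1) ∧ (b = q → x ≠ 0 → e = 0) ∧
      LinearMap.trace k V (T * (D * A ^ b)) = ((e * x : ℤ) : k) := by
    by_cases hb : LinearMap.trace k V (T * (D * A ^ b)) = LinearMap.trace k V T
    · refine ⟨1, le_rfl, fun _ => rfl, ?_, by rw [hb, hx]; simp⟩
      rintro rfl hx0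
      rw [hlast, hx] at hb
      exact absurd (Int.cast_eq_zero.1 hb.symm) hx0
    · refine ⟨0, zero_le_one, ?_, fun _ _ => rfl, by simpa using (hdich b).resolve_right hb⟩
      rintro rfl
      exact absurd (by simpa using htD) hb
  choose e he1 he0 heq hetr using hind
  have hrow (a : ℕ) (ha : ¬ (q + 1) ∣ a) : ∑ b ∈ Finset.range (q + 1),
      LinearMap.trace k V (T * (D ^ a * A ^ b)) =
        ∑ b ∈ Finset.range (q + 1), ((e b * x : ℤ) : k) := by
    rw [← map_sum, ← Finset.mul_sum, ← Finset.mul_sum, ← sum_range_pow_mul_eq hp ha hA,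
      Finset.mul_sum, Finset.mul_sum, map_sum]
    refine Finset.sum_congr rfl fun b _ => ?_
    rw [← trace_mul_pow_eq_of_trace_mul_eq_int hp hT (hpow b)
      (hTD.mul_right (hTA.pow_right b)) (hetr b) ha, (hDA.pow_right b).mul_pow, ← pow_mul,
      mul_comm b a]
  have hcol : ∑ b ∈ Finset.range (q + 1), LinearMap.trace k V (T * (D ^ 0 * A ^ b)) =
      ((q + 1 : ℕ) * x : ℤ) := by
    rw [Finset.sum_congr rfl (g := fun _ => (x : k))]
    · simp
    · intro b hb
      rcases Nat.eq_zero_or_pos b with rfl | hb0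
      · simpa using hx
      · simpa using trace_mul_pow_eq_of_trace_mul_eq_int hp hT hA hTA (htA.trans hx)
          (Nat.not_dvd_of_pos_of_lt hb0 (Finset.mem_range.1 hb))
  set r : ℕ := ∑ b ∈ Finset.range (q + 1), e b with hr
  have hsum : x * ((q + 1 : ℕ) + q * r) = (q + 1 : ℕ) ^ 2 * n := by
    have : ((x * ((q + 1 : ℕ) + q * r) : ℤ) : k) = (((q + 1 : ℕ) ^ 2 * n : ℤ) : k) := by
      have h1 : ∑ b ∈ Finset.range (q + 1), ((e b * x : ℤ) : k) = (r * x : ℤ) := by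
        rw [← Int.cast_sum, ← Finset.sum_mul, hr, Nat.cast_sum]
      rw [Finset.sum_range_succ', hcol, Finset.sum_congr rfl fun a ha => (hrow (a + 1)
        (Nat.not_dvd_of_pos_of_lt a.succ_pos (by simpa using ha))).trans h1] at hn
      rw [Finset.sum_const, Finset.card_range, nsmul_eq_mul] at hn
      push_cast at hn ⊢
      rw [← hn]
      ring
    exact_mod_cast this
  by_cases hx0 : x = 0
  · exact ⟨0, by rw [hx, hx0]; simp⟩
  have hr1 : 1 ≤ r := by
    rw [← he0 0 rfl]
    exact Finset.single_le_sum (f := e) (fun _ _ => Nat.zero_le _) (Finset.mem_range.2 hp.pos)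
  have hrq : r ≤ q := by
    rw [hr, Finset.sum_range_succ, heq q rfl hx0, add_zero]
    exact (Finset.sum_le_card_nsmul _ _ 1 fun b _ => he1 b).trans (by simp)
  have hndvd : ¬ ((q + 1 : ℕ) : ℤ) ∣ (q + 1 : ℕ) + q * r := by
    intro h
    have h2 : (q + 1) ∣ q * r := by
      have := (Int.dvd_add_right (dvd_refl _)).1 h
      exact_mod_cast this
    rcases hp.dvd_mul.1 h2 with h3 | h3
    · exact hq h3
    · exact Nat.not_dvd_of_pos_of_lt hr1 (by omega) h3
  have hcop : IsCoprime (((q + 1 : ℕ) : ℤ) ^ 2) ((q + 1 : ℕ) + q * r) :=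
    ((Prime.coprime_iff_not_dvd (Nat.prime_iff_prime_int.1 hp)).2 hndvd).pow_left
  obtain ⟨d, hd⟩ := hcop.dvd_of_dvd_mul_right (Dvd.intro _ hsum.symm)
  exact ⟨d, by rw [hx, hd]; push_cast; ring⟩

end TraceDivisibility

section TraceOfAntipodePower

variable {k V : Type*} [Field k] [IsAlgClosed k] [CharZero k] [AddCommGroup V] [Module k V]
  [FiniteDimensional k V]

/-- An operator-theoretic form of the main theorem. In the application `V` is a Hopf algebra with
antipode `S`, `f` is the canonical map `x ⊗ y ↦ (x ⊗ 1) Δ(y)`, `L` and `R` are the left and right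
multiplications by a group-like element, `A` and `B` are the two actions of a character. -/
theorem exists_int_trace_pow_eq_sq_mul {p : ℕ} (hp : p.Prime) (hodd : Odd p)
    {f : Module.End k (V ⊗[k] V)} (hf : IsUnit f) {S L R D A B : Module.End k V}
    (hS : S ^ (4 * p) = 1) (hR : R ^ p = 1) (hD : D ^ p = 1) (hA : A ^ p = 1) (hB : B ^ p = 1)
    (hfS : Commute f (TensorProduct.map (S ^ 2) (S ^ 2)))
    (hfR : SemiconjBy f (TensorProduct.map 1 R) (TensorProduct.map R R))
    (hfL : Commute f (TensorProduct.map L 1))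
    (hfD : Commute f (TensorProduct.map D D))
    (hfA : SemiconjBy f (TensorProduct.map A A) (TensorProduct.map A 1))
    (hfB : Commute f (TensorProduct.map 1 B))
    (hSR : Commute (S ^ 2) R) (hSA : Commute (S ^ 2) A) (hSD : Commute S D)
    (hDA : Commute D A) (hDB : Commute D B) (hAB : Commute A B)
    (hDLR : D = L * R ^ (p - 1)) (hLSR : L * S * R = S) (hBSA : B * S * A = S)
    (hRadford : S ^ 4 * A = D * B) (htr : LinearMap.trace k V (S ^ (4 * p - 2)) = 0) :
    ∃ d : ℤ, LinearMap.trace k V (S ^ (2 * p)) = (p : k) ^ 2 * d := by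
  obtain ⟨q, rfl⟩ : ∃ q, p = q + 1 := ⟨p - 1, by have := hp.pos; omega⟩
  rw [Nat.add_sub_cancel] at hDLR
  have hq : ¬ (q + 1) ∣ q := Nat.not_dvd_of_pos_of_lt (by have := hp.two_le; omega) (by omega)
  have hq2 : ¬ (q + 1) ∣ 2 := by
    intro h
    have := (Nat.prime_dvd_prime_iff_eq hp Nat.prime_two).1 h
    rw [this] at hodd
    exact absurd hodd (by decide)
  obtain ⟨m, hm⟩ := hodd
  have hSunit : IsUnit S := IsUnit.of_pow_eq_one hS (by omega)
  set T : Module.End k V := S ^ (2 * (q + 1)) with hTdef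
  have hT : T ^ 2 = 1 := by rw [hTdef, ← pow_mul, ← hS]; congr 1; ring
  have hTS2 : T = (S ^ 2) ^ (q + 1) := by rw [hTdef, pow_mul]
  -- the operator `S ^ (2 p - 2)`
  set C : Module.End k V := (S ^ 2) ^ q with hCdef
  have hC : C ^ (q + 1) = 1 := by
    rw [hCdef, ← pow_mul, ← pow_mul, show 2 * (q * (q + 1)) = 4 * (q + 1) * m by
      have : q = 2 * m := by omega
      subst this; ring, pow_mul, hS, one_pow]
  have hTX {X : Module.End k V} (hX : Commute (S ^ 2) X) : Commute T X :=
    hTS2 ▸ hX.pow_left _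
  have hTC : Commute T C := hTX ((Commute.refl _).pow_right _)
  have htC (a : ℕ) (ha : ¬ (q + 1) ∣ a) : LinearMap.trace k V (T * C ^ a) = 0 := by
    have := trace_mul_pow_eq_of_trace_mul_eq_int hp hT hC hTC (n := 0) (by
      rw [hTS2, hCdef, ← pow_add, ← pow_mul, Int.cast_zero, ← htr]
      congr 2; omega) ha
    simpa using this
  -- operators compatible with `f`, and the resulting trace identities
  have hfpow {X : Module.End k V} (hX : Commute f (TensorProduct.map X X)) (a : ℕ) :
      Commute f (TensorProduct.map (X ^ a) (X ^ a)) := by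
    rw [← TensorProduct.map_pow]; exact hX.pow_right a
  have hfT0 : Commute f (TensorProduct.map T T) := hTS2 ▸ hfpow hfS _
  have hfC : Commute f (TensorProduct.map C C) := hfpow hfS _
  have hfT {X : Module.End k V} (hX : Commute f (TensorProduct.map X X)) (a : ℕ) :
      Commute f (TensorProduct.map (T * X ^ a) (T * X ^ a)) := by
    rw [TensorProduct.map_mul]; exact hfT0.mul_right (hfpow hX a)
  have hfR' (b : ℕ) :
      SemiconjBy f (TensorProduct.map 1 (R ^ b)) (TensorProduct.map (R ^ b) (R ^ b)) := by
    have := hfR.pow_right b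
    rwa [TensorProduct.map_pow, TensorProduct.map_pow, one_pow] at this
  have hfA' (b : ℕ) :
      SemiconjBy f (TensorProduct.map (A ^ b) (A ^ b)) (TensorProduct.map (A ^ b) 1) := by
    have := hfA.pow_right b
    rwa [TensorProduct.map_pow, TensorProduct.map_pow, one_pow] at this
  have hfB' (b : ℕ) : Commute f (TensorProduct.map 1 (B ^ b)) := by
    have := hfB.pow_right b
    rwa [TensorProduct.map_pow, one_pow] at this
  have hdichR {φ : Module.End k V} (hφ : Commute f (TensorProduct.map φ φ)) (b : ℕ) :
      LinearMap.trace k V φ * LinearMap.trace k V (φ * R ^ b) =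
        LinearMap.trace k V (φ * R ^ b) * LinearMap.trace k V (φ * R ^ b) := by
    apply LinearMap.trace_mul_trace_eq_of_semiconjBy hf
    have := SemiconjBy.mul_right hφ (hfR' b)
    rwa [← TensorProduct.map_mul, ← TensorProduct.map_mul, mul_one] at this
  have hdichLR {φ : Module.End k V} (hφ : Commute f (TensorProduct.map φ φ)) (b : ℕ) :
      LinearMap.trace k V (φ * L) * LinearMap.trace k V (φ * R ^ b) =
        LinearMap.trace k V (φ * (L * R ^ b)) * LinearMap.trace k V (φ * R ^ b) := by
    apply LinearMap.trace_mul_trace_eq_of_semiconjBy hf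
    have := SemiconjBy.mul_right hφ (SemiconjBy.mul_right hfL (hfR' b))
    rwa [← TensorProduct.map_mul, ← TensorProduct.map_mul, ← TensorProduct.map_mul,
      ← TensorProduct.map_mul, one_mul, mul_one] at this
  have hdichA {φ : Module.End k V} (hφ : Commute f (TensorProduct.map φ φ)) (b : ℕ) :
      LinearMap.trace k V (φ * A ^ b) * LinearMap.trace k V (φ * A ^ b) =
        LinearMap.trace k V (φ * A ^ b) * LinearMap.trace k V φ := by
    apply LinearMap.trace_mul_trace_eq_of_semiconjBy hf
    have := SemiconjBy.mul_right hφ (hfA' b)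
    rwa [← TensorProduct.map_mul, ← TensorProduct.map_mul, mul_one] at this
  have hdichAB {φ : Module.End k V} (hφ : Commute f (TensorProduct.map φ φ)) (b : ℕ) :
      LinearMap.trace k V (φ * A) * LinearMap.trace k V (φ * (B ^ b * A)) =
        LinearMap.trace k V (φ * A) * LinearMap.trace k V (φ * B ^ b) := by
    apply LinearMap.trace_mul_trace_eq_of_semiconjBy hf
    have := SemiconjBy.mul_right hφ (SemiconjBy.mul_right (hfB' b) hfA)
    rwa [← TensorProduct.map_mul, ← TensorProduct.map_mul, ← TensorProduct.map_mul,
      ← TensorProduct.map_mul, one_mul, mul_one] at this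
  by_cases h0R : LinearMap.trace k V (T * R) = 0
  · exact exists_int_trace_eq_sq_mul_of_trace_mul_eq_zero hp hT hC hR hTC (hTX hSR)
      (hSR.pow_left _) htC (fun a b => (hdichR (hfT hfC a) b).symm) h0R
  by_cases h0A : LinearMap.trace k V (T * A) = 0
  · exact exists_int_trace_eq_sq_mul_of_trace_mul_eq_zero hp hT hC hA hTC (hTX hSA)
      (hSA.pow_left _) htC (fun a b => (hdichA (hfT hfC a) b).trans (mul_comm _ _)) h0A
  obtain ⟨x, hx⟩ := exists_int_trace_of_pow_three_eq_self (U := T) (by rw [pow_succ, hT, one_mul])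
  have htR : LinearMap.trace k V (T * R) = LinearMap.trace k V T := by
    have := hdichR hfT0 1
    rw [pow_one] at this
    exact (mul_right_cancel₀ h0R this).symm
  have htA : LinearMap.trace k V (T * A) = LinearMap.trace k V T := by
    have := hdichA hfT0 1
    rw [pow_one] at this
    exact mul_left_cancel₀ h0A this
  have hx0 : LinearMap.trace k V T ≠ 0 := htR ▸ h0R
  have htRq : LinearMap.trace k V (T * R ^ q) = LinearMap.trace k V T := by
    rw [hx, trace_mul_pow_eq_of_trace_mul_eq_int hp hT hR (hTX hSR) (htR.trans hx) hq]
  have hTS : Commute S T := hTdef ▸ Commute.self_pow _ _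
  have htL : LinearMap.trace k V (T * L) = LinearMap.trace k V T := by
    rw [← htRq]
    refine (LinearMap.trace_eq_of_semiconjBy hSunit (SemiconjBy.mul_right hTS ?_)).symm
    rw [SemiconjBy]
    nth_rewrite 1 [← hLSR]
    rw [mul_assoc, ← pow_succ', hR, mul_one]
  have htD : LinearMap.trace k V (T * D) = LinearMap.trace k V T := by
    have := hdichLR hfT0 q
    rw [← hDLR, htRq, htL] at this
    exact (mul_right_cancel₀ hx0 this).symm
  have hTD : Commute T D := hTX (hSD.pow_left 2)
  have htDpow (a : ℕ) (ha : ¬ (q + 1) ∣ a) :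
      LinearMap.trace k V (T * D ^ a) = LinearMap.trace k V T := by
    rw [hx, trace_mul_pow_eq_of_trace_mul_eq_int hp hT hD hTD (htD.trans hx) ha]
  refine exists_int_trace_eq_sq_mul_of_trace_mul_eq hp hT hD hA hTD (hTX hSA) hDA htD htA
    (fun b => ?_) ?_
  · have := hdichA (hfT hfD 1) b
    rw [pow_one, htD, mul_assoc] at this
    by_cases h : LinearMap.trace k V (T * (D * A ^ b)) = 0
    · exact Or.inl h
    · exact Or.inr (mul_left_cancel₀ h this)
  · rw [Nat.add_sub_cancel]
    by_contra hne
    rw [← mul_assoc] at hne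
    have h1 : LinearMap.trace k V (T * D ^ q * A) = LinearMap.trace k V T := by
      have := hdichA (hfT hfD q) 1
      rw [pow_one, htDpow q hq] at this
      exact mul_left_cancel₀ hne this
    have h2 := mul_left_cancel₀ hne (hdichAB (hfT hfD q) q)
    have h3 : LinearMap.trace k V (T * D ^ q * B ^ q) = LinearMap.trace k V (T * D ^ q * A) := by
      refine (LinearMap.trace_eq_of_semiconjBy hSunit
        (SemiconjBy.mul_right (hTS.mul_right (hSD.pow_right q)) ?_)).symm
      rw [SemiconjBy]
      nth_rewrite 2 [← hBSA]
      rw [← mul_assoc, ← mul_assoc, ← pow_succ, hB, one_mul]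
    have h4 : D ^ q * (B ^ q * A) = C ^ 2 := by
      have hC4 : C ^ 2 * S ^ 4 = 1 := by
        rw [hCdef, ← pow_mul, ← pow_mul, ← pow_add, ← hS]; congr 1; ring
      have hSA4 : Commute (S ^ 4) A := by
        have := hSA.pow_left 2
        rwa [← pow_mul] at this
      calc D ^ q * (B ^ q * A) = C ^ 2 * S ^ 4 * (D ^ q * B ^ q * A) := by
            rw [hC4, one_mul, mul_assoc]
        _ = C ^ 2 * (S ^ 4 * A * (D ^ q * B ^ q)) := by
            rw [((hDA.pow_left q).mul_left (hAB.symm.pow_left q)).eq]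
            simp only [mul_assoc]
        _ = C ^ 2 := by
            rw [hRadford, ← hDB.mul_pow, ← pow_succ', hDB.mul_pow, hD, hB, one_mul, mul_one]
    rw [mul_assoc, h4, htC 2 hq2, h3, h1] at h2
    exact hx0 h2.symm

end TraceOfAntipodePower

section HopfOperators

open Coalgebra HopfAlgebra WithConv

variable {k H : Type*} [Field k] [Ring H]

section Bialgebra

variable [Bialgebra k H]

/-- The canonical endomorphism `x ⊗ y ↦ (x ⊗ 1) Δ(y)` of `H ⊗ H`. -/
noncomputable def canonicalMap (k H : Type*) [Field k] [Ring H] [Bialgebra k H] :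
    Module.End k (H ⊗[k] H) :=
  LinearMap.mul' k (H ⊗[k] H) ∘ₗ
    TensorProduct.map (Algebra.TensorProduct.includeLeft : H →ₐ[k] H ⊗[k] H).toLinearMap comul

@[simp]
theorem canonicalMap_tmul (x y : H) :
    canonicalMap k H (x ⊗ₜ y) = (x ⊗ₜ[k] (1 : H)) * comul y := rfl

/-- The operator `h ↦ f(h₁) h₂`. -/
noncomputable def hitLeft (f : Module.Dual k H) : Module.End k H :=
  (TensorProduct.lid k H).toLinearMap ∘ₗ TensorProduct.map f LinearMap.id ∘ₗ comul

/-- The operator `h ↦ h₁ f(h₂)`. -/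
noncomputable def hitRight (f : Module.Dual k H) : Module.End k H :=
  (TensorProduct.rid k H).toLinearMap ∘ₗ TensorProduct.map LinearMap.id f ∘ₗ comul

theorem hitLeft_apply (f : Module.Dual k H) (h : H) :
    hitLeft f h = TensorProduct.lid k H (TensorProduct.map f LinearMap.id (comul h)) := rfl

theorem hitRight_apply (f : Module.Dual k H) (h : H) :
    hitRight f h = TensorProduct.rid k H (TensorProduct.map LinearMap.id f (comul h)) := rfl

theorem hitLeft_counit : hitLeft (counit : Module.Dual k H) = 1 := by
  ext h
  have := rTensor_counit_comul (R := k) h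
  rw [LinearMap.rTensor] at this
  rw [hitLeft_apply, this]; simp

theorem hitRight_counit : hitRight (counit : Module.Dual k H) = 1 := by
  ext h
  have := lTensor_counit_comul (R := k) h
  rw [LinearMap.lTensor] at this
  rw [hitRight_apply, this]; simp

theorem comul_hitLeft (f : Module.Dual k H) (h : H) :
    comul (R := k) (hitLeft f h) = TensorProduct.map (hitLeft f) LinearMap.id (comul h) := by
  have h1 : (comul : H →ₗ[k] H ⊗[k] H) ∘ₗ (TensorProduct.lid k H).toLinearMap ∘ₗ
      TensorProduct.map f LinearMap.id =
      (TensorProduct.lid k (H ⊗[k] H)).toLinearMap ∘ₗ TensorProduct.map f LinearMap.id ∘ₗ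
        comul.lTensor H := by
    ext x y; simp
  have h2 (t : H ⊗[k] H) (y : H) : TensorProduct.lid k (H ⊗[k] H) (TensorProduct.map f LinearMap.id
      (TensorProduct.assoc k H H H (t ⊗ₜ y))) =
      TensorProduct.lid k H (TensorProduct.map f LinearMap.id t) ⊗ₜ y := by
    induction t with
    | zero => simp
    | add a b ha hb => simp only [TensorProduct.add_tmul, map_add, ha, hb]
    | tmul a b => simp [TensorProduct.smul_tmul']
  have h3 : (TensorProduct.lid k (H ⊗[k] H)).toLinearMap ∘ₗ TensorProduct.map f LinearMap.id ∘ₗ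
      (TensorProduct.assoc k H H H).toLinearMap ∘ₗ comul.rTensor H =
      TensorProduct.map (hitLeft f) LinearMap.id := by
    ext x y; simpa [hitLeft_apply] using h2 (comul x) y
  rw [← h3]
  simpa [hitLeft_apply] using congr($h1 (comul h))

theorem comul_hitRight (f : Module.Dual k H) (h : H) :
    comul (R := k) (hitRight f h) = TensorProduct.map LinearMap.id (hitRight f) (comul h) := by
  have h1 : (comul : H →ₗ[k] H ⊗[k] H) ∘ₗ (TensorProduct.rid k H).toLinearMap ∘ₗ
      TensorProduct.map LinearMap.id f =
      (TensorProduct.rid k (H ⊗[k] H)).toLinearMap ∘ₗ TensorProduct.map LinearMap.id f ∘ₗ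
        comul.rTensor H := by
    ext x y; simp
  have h2 (t : H ⊗[k] H) (y : H) : TensorProduct.rid k (H ⊗[k] H) (TensorProduct.map LinearMap.id f
      ((TensorProduct.assoc k H H H).symm (y ⊗ₜ t))) =
      y ⊗ₜ TensorProduct.rid k H (TensorProduct.map LinearMap.id f t) := by
    induction t with
    | zero => simp
    | add a b ha hb => simp only [TensorProduct.tmul_add, map_add, ha, hb]
    | tmul a b => simp
  have h3 : (TensorProduct.rid k (H ⊗[k] H)).toLinearMap ∘ₗ TensorProduct.map LinearMap.id f ∘ₗ
      (TensorProduct.assoc k H H H).symm.toLinearMap ∘ₗ comul.lTensor H =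
      TensorProduct.map LinearMap.id (hitRight f) := by
    ext x y; simpa [hitRight_apply] using h2 (comul y) x
  rw [← h3]
  simpa [hitRight_apply] using congr($h1 (comul h))

theorem apply_hitLeft (f c : Module.Dual k H) (h : H) : c (hitLeft f h) = conv f c h := by
  have : c ∘ₗ (TensorProduct.lid k H).toLinearMap ∘ₗ TensorProduct.map f LinearMap.id =
      LinearMap.mul' k k ∘ₗ TensorProduct.map f c := by ext x y; simp
  exact congr($this (comul h))

theorem apply_hitRight (f c : Module.Dual k H) (h : H) : c (hitRight f h) = conv c f h := by
  have : c ∘ₗ (TensorProduct.rid k H).toLinearMap ∘ₗ TensorProduct.map LinearMap.id f =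
      LinearMap.mul' k k ∘ₗ TensorProduct.map c f := by ext x y; simp [mul_comm]
  exact congr($this (comul h))

theorem hitLeft_mul_hitLeft (f c : Module.Dual k H) :
    hitLeft c * hitLeft f = hitLeft (conv f c) := by
  ext h
  rw [Module.End.mul_apply, hitLeft_apply c, comul_hitLeft,
    ← LinearMap.comp_apply (f := TensorProduct.map _ _),
    ← TensorProduct.map_comp, LinearMap.id_comp, hitLeft_apply (conv f c)]
  congr 3
  ext x
  exact apply_hitLeft f c x

theorem hitRight_mul_hitRight (f c : Module.Dual k H) :
    hitRight c * hitRight f = hitRight (conv c f) := by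
  ext h
  rw [Module.End.mul_apply, hitRight_apply c, comul_hitRight,
    ← LinearMap.comp_apply (f := TensorProduct.map _ _),
    ← TensorProduct.map_comp, LinearMap.id_comp, hitRight_apply (conv c f)]
  congr 3
  ext x
  exact apply_hitRight f c x

theorem hitLeft_convPow (f : Module.Dual k H) (n : ℕ) : hitLeft (convPow f n) = hitLeft f ^ n := by
  induction n with
  | zero => exact hitLeft_counit
  | succ n ih => rw [convPow, ← hitLeft_mul_hitLeft, ih, pow_succ]

theorem hitRight_convPow (f : Module.Dual k H) (n : ℕ) :
    hitRight (convPow f n) = hitRight f ^ n := by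
  induction n with
  | zero => exact hitRight_counit
  | succ n ih => rw [convPow, ← hitRight_mul_hitRight, ih, pow_succ']

theorem commute_hitLeft_hitRight (f c : Module.Dual k H) : Commute (hitLeft f) (hitRight c) := by
  ext h
  rw [Module.End.mul_apply, Module.End.mul_apply, hitLeft_apply f, comul_hitRight]
  have : (TensorProduct.lid k H).toLinearMap ∘ₗ TensorProduct.map f LinearMap.id ∘ₗ
      TensorProduct.map LinearMap.id (hitRight c) =
      hitRight c ∘ₗ (TensorProduct.lid k H).toLinearMap ∘ₗ
        TensorProduct.map f LinearMap.id := by ext x y; simp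
  exact congr($this (comul h))

theorem hitLeft_mul (α : H →ₐ[k] k) (x y : H) :
    hitLeft α.toLinearMap (x * y) = hitLeft α.toLinearMap x * hitLeft α.toLinearMap y := by
  exact map_mul (((Algebra.TensorProduct.lid k H).toAlgHom.comp
    (Algebra.TensorProduct.map α (AlgHom.id k H))).comp (Bialgebra.comulAlgHom k H)) x y

theorem hitRight_mul (α : H →ₐ[k] k) (x y : H) :
    hitRight α.toLinearMap (x * y) = hitRight α.toLinearMap x * hitRight α.toLinearMap y := by
  exact map_mul (((Algebra.TensorProduct.rid k k H).toAlgHom.comp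
    (Algebra.TensorProduct.map (AlgHom.id k H) α)).comp (Bialgebra.comulAlgHom k H)) x y

theorem map_mul_of_map_mul {a b : Module.End k H} (ha : ∀ x y, a (x * y) = a x * a y)
    (hb : ∀ x y, b (x * y) = b x * b y) (s t : H ⊗[k] H) :
    TensorProduct.map a b (s * t) = TensorProduct.map a b s * TensorProduct.map a b t := by
  induction s with
  | zero => simp
  | add s s' hs hs' => simp only [add_mul, map_add, hs, hs']
  | tmul x y =>
    induction t with
    | zero => simp
    | add t t' ht ht' => simp only [mul_add, map_add, ht, ht']
    | tmul z w => simp [ha, hb]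

theorem semiconjBy_canonicalMap_hitLeft (α : H →ₐ[k] k) :
    SemiconjBy (canonicalMap k H)
      (TensorProduct.map (hitLeft α.toLinearMap) (hitLeft α.toLinearMap))
      (TensorProduct.map (hitLeft α.toLinearMap) 1) := by
  refine TensorProduct.ext' fun x y => ?_
  simp only [Module.End.mul_apply, TensorProduct.map_tmul, canonicalMap_tmul]
  rw [map_mul_of_map_mul (hitLeft_mul α) (fun _ _ => rfl), comul_hitLeft]
  rfl

theorem commute_canonicalMap_hitRight (f : Module.Dual k H) :
    Commute (canonicalMap k H) (TensorProduct.map 1 (hitRight f)) := by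
  refine TensorProduct.ext' fun x y => ?_
  simp only [Module.End.mul_apply, TensorProduct.map_tmul, canonicalMap_tmul, Module.End.one_apply]
  rw [comul_hitRight]
  generalize comul (R := k) y = t
  induction t with
  | zero => simp
  | add s s' hs hs' => simp only [mul_add, map_add, hs, hs']
  | tmul x y => simp

theorem commute_canonicalMap_mulLeft (g : H) :
    Commute (canonicalMap k H) (TensorProduct.map (LinearMap.mulLeft k g) 1) := by
  refine TensorProduct.ext' fun x y => ?_
  simp only [Module.End.mul_apply, TensorProduct.map_tmul, canonicalMap_tmul, Module.End.one_apply]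
  generalize comul (R := k) y = t
  induction t with
  | zero => simp
  | add s s' hs hs' => simp only [mul_add, map_add, hs, hs']
  | tmul x y => simp [mul_assoc]

theorem semiconjBy_canonicalMap_mulRight {g : H} (hg : comul g = g ⊗ₜ[k] g) :
    SemiconjBy (canonicalMap k H) (TensorProduct.map 1 (LinearMap.mulRight k g))
      (TensorProduct.map (LinearMap.mulRight k g) (LinearMap.mulRight k g)) := by
  refine TensorProduct.ext' fun x y => ?_
  simp only [Module.End.mul_apply, TensorProduct.map_tmul, canonicalMap_tmul, Module.End.one_apply,
    LinearMap.mulRight_apply, Bialgebra.comul_mul, hg]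
  rw [← mul_assoc]
  generalize (x ⊗ₜ[k] (1 : H)) * comul y = t
  induction t with
  | zero => simp
  | add s s' hs hs' => simp only [add_mul, map_add, hs, hs']
  | tmul x y => simp

/-- Operators that are both multiplicative and comultiplicative commute with `canonicalMap`. -/
theorem commute_canonicalMap_map {φ : Module.End k H} (hmul : ∀ x y, φ (x * y) = φ x * φ y)
    (hone : φ 1 = 1) (hcomul : ∀ x, comul (φ x) = TensorProduct.map φ φ (comul x)) :
    Commute (canonicalMap k H) (TensorProduct.map φ φ) := by
  refine TensorProduct.ext' fun x y => ?_
  simp only [Module.End.mul_apply, TensorProduct.map_tmul, canonicalMap_tmul]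
  rw [map_mul_of_map_mul hmul hmul, hcomul, TensorProduct.map_tmul, hone]

theorem hitLeft_of_comul_eq {g : H} (hg : comul g = g ⊗ₜ[k] g) (f : Module.Dual k H) :
    hitLeft f g = f g • g := by
  rw [hitLeft_apply, hg]; simp

theorem hitRight_of_comul_eq {g : H} (hg : comul g = g ⊗ₜ[k] g) (f : Module.Dual k H) :
    hitRight f g = f g • g := by
  rw [hitRight_apply, hg]; simp

end Bialgebra

end HopfOperators

section HopfAntipode

open Coalgebra HopfAlgebra WithConv

variable {k H : Type*} [Field k] [Ring H]

section Inclusions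

variable (k H) [Algebra k H]

/-- The linear inclusion `x ↦ x ⊗ 1`. -/
noncomputable abbrev inclLeft : H →ₗ[k] H ⊗[k] H :=
  (Algebra.TensorProduct.includeLeft : H →ₐ[k] H ⊗[k] H).toLinearMap

/-- The linear inclusion `x ↦ 1 ⊗ x`. -/
noncomputable abbrev inclRight : H →ₗ[k] H ⊗[k] H :=
  (Algebra.TensorProduct.includeRight : H →ₐ[k] H ⊗[k] H).toLinearMap

end Inclusions

variable [HopfAlgebra k H]

theorem toConv_inclLeft_mul_toConv_inclRight :
    toConv (inclLeft k H) * toConv (inclRight k H) = toConv (comul : H →ₗ[k] H ⊗[k] H) := by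
  ext x
  have : LinearMap.mul' k (H ⊗[k] H) ∘ₗ TensorProduct.map (inclLeft k H) (inclRight k H) =
      LinearMap.id := by ext x y; simp
  exact congr($this (comul x))

theorem toConv_algHom_comp_mul {A B : Type*} [Semiring A] [Algebra k A] [Semiring B] [Algebra k B]
    (φ : A →ₐ[k] B) {a b : H →ₗ[k] A} (h : toConv a * toConv b = 1) :
    toConv (φ.toLinearMap ∘ₗ a) * toConv (φ.toLinearMap ∘ₗ b) = 1 := by
  apply ofConv_injective
  refine (LinearMap.algHom_comp_convMul_distrib φ (toConv a) (toConv b)).symm.trans ?_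
  rw [h]
  ext x
  simp [LinearMap.convOne_def]

theorem toConv_comul_mul_toConv_inclRight_comp_antipode :
    toConv (comul : H →ₗ[k] H ⊗[k] H) * toConv (inclRight k H ∘ₗ antipode k) =
      toConv (inclLeft k H) := by
  rw [← toConv_inclLeft_mul_toConv_inclRight, mul_assoc]
  have := toConv_algHom_comp_mul (Algebra.TensorProduct.includeRight : H →ₐ[k] H ⊗[k] H)
    (LinearMap.id_mul_antipode (R := k) (C := H))
  rw [LinearMap.comp_id] at this
  rw [this, mul_one]

theorem toConv_inclLeft_comp_antipode_mul_toConv_comul :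
    toConv (inclLeft k H ∘ₗ antipode k) * toConv (comul : H →ₗ[k] H ⊗[k] H) =
      toConv (inclRight k H) := by
  rw [← toConv_inclLeft_mul_toConv_inclRight, ← mul_assoc]
  have := toConv_algHom_comp_mul (Algebra.TensorProduct.includeLeft : H →ₐ[k] H ⊗[k] H)
    (LinearMap.antipode_mul_id (R := k) (C := H))
  rw [LinearMap.comp_id] at this
  rw [this, one_mul]

/-- The identity `Δ(b₁) (1 ⊗ S(b₂)) = b ⊗ 1`. -/
theorem mul'_map_comul_inclRight_comp_antipode (b : H) :
    LinearMap.mul' k (H ⊗[k] H)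
      (TensorProduct.map comul (inclRight k H ∘ₗ antipode k) (comul b)) = b ⊗ₜ 1 :=
  congr(ofConv $(toConv_comul_mul_toConv_inclRight_comp_antipode (k := k) (H := H)) b)

/-- The identity `(S(a₁) ⊗ 1) Δ(a₂) = 1 ⊗ a`. -/
theorem mul'_map_inclLeft_comp_antipode_comul (a : H) :
    LinearMap.mul' k (H ⊗[k] H)
      (TensorProduct.map (inclLeft k H ∘ₗ antipode k) comul (comul a)) = 1 ⊗ₜ a :=
  congr(ofConv $(toConv_inclLeft_comp_antipode_mul_toConv_comul (k := k) (H := H)) a)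

/-- The antipode is anti-comultiplicative. -/
theorem comul_antipode (x : H) :
    comul (antipode k x) =
      TensorProduct.map (antipode k) (antipode k) (TensorProduct.comm k H H (comul x)) := by
  have hleft := toConv_algHom_comp_mul (Algebra.TensorProduct.includeLeft : H →ₐ[k] H ⊗[k] H)
    (LinearMap.antipode_mul_id (R := k) (C := H))
  have hright := toConv_algHom_comp_mul (Algebra.TensorProduct.includeRight : H →ₐ[k] H ⊗[k] H)
    (LinearMap.antipode_mul_id (R := k) (C := H))
  rw [LinearMap.comp_id] at hleft hright
  have hinv : toConv (inclRight k H ∘ₗ antipode k) * toConv (inclLeft k H ∘ₗ antipode k) *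
      toConv (comul : H →ₗ[k] H ⊗[k] H) = 1 := by
    rw [← toConv_inclLeft_mul_toConv_inclRight, mul_assoc, ← mul_assoc _ (toConv (inclLeft k H)),
      hleft, one_mul, hright]
  have heq := left_inv_eq_right_inv hinv (LinearMap.comul_right_inv (R := k) (C := H))
  have hcomm : LinearMap.mul' k (H ⊗[k] H) ∘ₗ
      TensorProduct.map (inclRight k H ∘ₗ antipode k) (inclLeft k H ∘ₗ antipode k) =
      TensorProduct.map (antipode k) (antipode k) ∘ₗ (TensorProduct.comm k H H).toLinearMap := by
    ext x y; simp
  exact (congr(ofConv $heq x)).symm.trans congr($hcomm (comul x))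

theorem comul_antipode_sq (x : H) :
    comul (((antipode k : Module.End k H) ^ 2) x) =
      TensorProduct.map ((antipode k : Module.End k H) ^ 2) ((antipode k : Module.End k H) ^ 2)
        (comul x) := by
  rw [sq, Module.End.mul_apply, comul_antipode, comul_antipode]
  generalize comul (R := k) x = t
  induction t with
  | zero => simp
  | add s t hs ht => simp only [map_add, hs, ht]
  | tmul x y => simp

theorem antipode_sq_mul (x y : H) :
    ((antipode k : Module.End k H) ^ 2) (x * y) =
      ((antipode k : Module.End k H) ^ 2) x * ((antipode k : Module.End k H) ^ 2) y := by
  simp [sq, antipode_mul_antidistrib]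

theorem isUnit_canonicalMap [FiniteDimensional k H] : IsUnit (canonicalMap k H) := by
  rw [LinearMap.isUnit_iff_range_eq_top, eq_top_iff]
  intro t _
  have hinv (x : H) : canonicalMap k H ∘ₗ
      TensorProduct.map (LinearMap.mulLeft k x ∘ₗ antipode k) LinearMap.id =
      LinearMap.mulLeft k (x ⊗ₜ[k] (1 : H)) ∘ₗ LinearMap.mul' k (H ⊗[k] H) ∘ₗ
        TensorProduct.map (inclLeft k H ∘ₗ antipode k) comul := by
    refine TensorProduct.ext' fun a b => ?_
    simp [← mul_assoc]
  induction t with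
  | zero => exact zero_mem _
  | add s t hs ht => exact add_mem (hs trivial) (ht trivial)
  | tmul x y =>
    refine ⟨_, congr($(hinv x) (comul y)).trans ?_⟩
    simp only [LinearMap.comp_apply]
    rw [mul'_map_inclLeft_comp_antipode_comul]
    simp

end HopfAntipode

section Integrals

open Coalgebra HopfAlgebra

variable {k H : Type*} [Field k] [Ring H] [HopfAlgebra k H] {l : Module.Dual k H} {g L : H}

theorem hitLeft_of_isRightIntegralDual (hl : IsRightIntegralDual k l) (h : H) :
    hitLeft l h = l h • 1 := by
  rw [← sub_eq_zero, ← Module.forall_dual_apply_eq_zero_iff k]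
  intro f
  rw [map_sub, apply_hitLeft, hl f]
  simp [mul_comm]

theorem hitRight_of_conv_eq_smul (hg : ∀ f : Module.Dual k H, conv f l = f g • l) (h : H) :
    hitRight l h = l h • g := by
  rw [← sub_eq_zero, ← Module.forall_dual_apply_eq_zero_iff k]
  intro f
  rw [map_sub, apply_hitRight, hg f]
  simp [mul_comm]

theorem lid_map_mul_tmul (f : Module.Dual k H) (t : H ⊗[k] H) (y : H) :
    TensorProduct.lid k H (TensorProduct.map f LinearMap.id (t * (1 ⊗ₜ[k] y))) =
      TensorProduct.lid k H (TensorProduct.map f LinearMap.id t) * y := by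
  induction t with
  | zero => simp
  | add s t hs ht => simp only [add_mul, map_add, hs, ht]
  | tmul a b => simp

theorem rid_map_tmul_mul (f : Module.Dual k H) (t : H ⊗[k] H) (x : H) :
    TensorProduct.rid k H (TensorProduct.map LinearMap.id f ((x ⊗ₜ[k] 1) * t)) =
      x * TensorProduct.rid k H (TensorProduct.map LinearMap.id f t) := by
  induction t with
  | zero => simp
  | add s t hs ht => simp only [mul_add, map_add, hs, ht]
  | tmul a b => simp

theorem lid_map_comp_mulRight (f : Module.Dual k H) (t : H ⊗[k] H) (b : H) :
    TensorProduct.lid k H (TensorProduct.map f LinearMap.id (t * (b ⊗ₜ[k] 1))) =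
      TensorProduct.lid k H (TensorProduct.map (f ∘ₗ LinearMap.mulRight k b) LinearMap.id t) := by
  induction t with
  | zero => simp
  | add s t hs ht => simp only [add_mul, map_add, hs, ht]
  | tmul x y => simp

theorem rid_map_comp_mulLeft (f : Module.Dual k H) (t : H ⊗[k] H) (a : H) :
    TensorProduct.rid k H (TensorProduct.map LinearMap.id f ((1 ⊗ₜ[k] a) * t)) =
      TensorProduct.rid k H (TensorProduct.map LinearMap.id (f ∘ₗ LinearMap.mulLeft k a) t) := by
  induction t with
  | zero => simp
  | add s t hs ht => simp only [mul_add, map_add, hs, ht]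
  | tmul x y => simp

/-- The identity `λ(a₁ b) a₂ = λ(a b₁) S(b₂)` for a right integral `λ` of the dual. -/
theorem lid_map_comp_mulRight_comul (hl : IsRightIntegralDual k l) (a b : H) :
    TensorProduct.lid k H
        (TensorProduct.map (l ∘ₗ LinearMap.mulRight k b) LinearMap.id (comul a)) =
      TensorProduct.lid k H
        (TensorProduct.map (l ∘ₗ LinearMap.mulLeft k a) (antipode k) (comul b)) := by
  have h : (TensorProduct.lid k H).toLinearMap ∘ₗ TensorProduct.map l LinearMap.id ∘ₗ
      LinearMap.mulLeft k (comul a) ∘ₗ LinearMap.mul' k (H ⊗[k] H) ∘ₗ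
      TensorProduct.map comul (inclRight k H ∘ₗ antipode k) =
      (TensorProduct.lid k H).toLinearMap ∘ₗ
        TensorProduct.map (l ∘ₗ LinearMap.mulLeft k a) (antipode k) := by
    refine TensorProduct.ext' fun x y => ?_
    have := hitLeft_of_isRightIntegralDual hl (a * x)
    rw [hitLeft_apply, Bialgebra.comul_mul] at this
    simp only [LinearMap.comp_apply, TensorProduct.map_tmul, LinearMap.mul'_apply,
      LinearMap.mulLeft_apply, ← mul_assoc, LinearEquiv.coe_coe, AlgHom.toLinearMap_apply,
      Algebra.TensorProduct.includeRight_apply]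
    rw [lid_map_mul_tmul, this]
    simp
  refine Eq.trans ?_ congr($h (comul b))
  simp only [LinearMap.comp_apply, mul'_map_comul_inclRight_comp_antipode]
  exact (lid_map_comp_mulRight l (comul a) b).symm

/-- The identity `S(a₁) g λ(a₂ b) = b₁ λ(a b₂)`, where `β * λ = β(g) λ` for all `β`. -/
theorem rid_map_comp_mulRight_comul (hg : ∀ f : Module.Dual k H, conv f l = f g • l) (a b : H) :
    TensorProduct.rid k H (TensorProduct.map (LinearMap.mulRight k g ∘ₗ antipode k)
        (l ∘ₗ LinearMap.mulRight k b) (comul a)) =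
      TensorProduct.rid k H
        (TensorProduct.map LinearMap.id (l ∘ₗ LinearMap.mulLeft k a) (comul b)) := by
  have h : (TensorProduct.rid k H).toLinearMap ∘ₗ TensorProduct.map LinearMap.id l ∘ₗ
      LinearMap.mulRight k (comul b) ∘ₗ LinearMap.mul' k (H ⊗[k] H) ∘ₗ
      TensorProduct.map (inclLeft k H ∘ₗ antipode k) comul =
      (TensorProduct.rid k H).toLinearMap ∘ₗ
        TensorProduct.map (LinearMap.mulRight k g ∘ₗ antipode k)
          (l ∘ₗ LinearMap.mulRight k b) := by
    refine TensorProduct.ext' fun x y => ?_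
    have := hitRight_of_conv_eq_smul hg (y * b)
    rw [hitRight_apply, Bialgebra.comul_mul] at this
    simp only [LinearMap.comp_apply, TensorProduct.map_tmul, LinearMap.mul'_apply,
      LinearMap.mulRight_apply, mul_assoc, LinearEquiv.coe_coe, AlgHom.toLinearMap_apply,
      Algebra.TensorProduct.includeLeft_apply]
    rw [rid_map_tmul_mul, this]
    simp
  refine (congr($h (comul a))).symm.trans ?_
  simp only [LinearMap.comp_apply, mul'_map_inclLeft_comp_antipode_comul]
  exact rid_map_comp_mulLeft l (comul b) a

theorem apply_hitRight_mul (hl : IsRightIntegralDual k l) (f : Module.Dual k H) {a : H}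
    (ha : ∀ b, l (a * b) = 0) (b : H) : l (hitRight f a * b) = 0 := by
  have h : (l ∘ₗ LinearMap.mulRight k b) ∘ₗ (TensorProduct.rid k H).toLinearMap ∘ₗ
      TensorProduct.map LinearMap.id f = f ∘ₗ (TensorProduct.lid k H).toLinearMap ∘ₗ
        TensorProduct.map (l ∘ₗ LinearMap.mulRight k b) LinearMap.id := by
    ext x y; simp [mul_comm]
  have hzero : l ∘ₗ LinearMap.mulLeft k a = 0 := by ext b; exact ha b
  refine (congr($h (comul a))).trans ?_
  simp only [LinearMap.comp_apply, LinearEquiv.coe_coe]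
  rw [lid_map_comp_mulRight_comul hl, hzero]
  simp

/-- A right integral of the dual is a nondegenerate functional. -/
theorem eq_zero_of_forall_apply_mul_eq_zero [FiniteDimensional k H]
    (hl : IsRightIntegralDual k l) (hl0 : l ≠ 0) {a : H} (ha : ∀ b, l (a * b) = 0) : a = 0 := by
  have hcounit {a : H} (ha : ∀ b, l (a * b) = 0) : counit (R := k) a = 0 := by
    obtain ⟨c, hc⟩ : ∃ c, l c ≠ 0 := by
      by_contra! h
      exact hl0 (LinearMap.ext h)
    let e := Module.finBasis k H
    have hsum : comul (R := k) a = ∑ i, hitRight (e.coord i) a ⊗ₜ e i := by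
      have (t : H ⊗[k] H) : t = ∑ i, TensorProduct.rid k H
          (TensorProduct.map LinearMap.id (e.coord i) t) ⊗ₜ e i := by
        induction t with
        | zero => simp
        | add s t hs ht =>
          simp only [map_add, TensorProduct.add_tmul, Finset.sum_add_distrib, ← hs, ← ht]
        | tmul x y =>
          simp only [TensorProduct.map_tmul, TensorProduct.rid_tmul, LinearMap.id_apply,
            TensorProduct.smul_tmul, ← TensorProduct.tmul_sum, Module.Basis.coord_apply,
            e.sum_repr]
      exact this _
    have hS := mul_antipode_lTensor_comul_apply (R := k) a
    rw [hsum, LinearMap.lTensor, map_sum, map_sum] at hS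
    have := congr(l ($hS * c))
    simp only [TensorProduct.map_tmul, LinearMap.mul'_apply, LinearMap.id_apply, Finset.sum_mul,
      map_sum, mul_assoc, apply_hitRight_mul hl _ ha, Finset.sum_const_zero,
      ← Algebra.smul_def, map_smul, smul_eq_mul] at this
    exact (mul_eq_zero.1 this.symm).resolve_right hc
  rw [← Module.forall_dual_apply_eq_zero_iff k]
  intro f
  have hf := hcounit (apply_hitRight_mul hl f ha)
  have hconv := apply_hitLeft (counit : Module.Dual k H) f a
  rw [hitLeft_counit, Module.End.one_apply] at hconv
  rw [hconv, ← apply_hitRight f counit a]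
  exact hf

theorem exists_apply_mul_eq [FiniteDimensional k H] (hl : IsRightIntegralDual k l) (hl0 : l ≠ 0)
    (f : Module.Dual k H) : ∃ a, ∀ x, l (a * x) = f x := by
  let j : H →ₗ[k] Module.Dual k H := LinearMap.mk₂ k (fun a x => l (a * x))
    (by simp [add_mul]) (by simp) (by simp [mul_add]) (by simp)
  have hj : Function.Injective j := by
    rw [← LinearMap.ker_eq_bot, LinearMap.ker_eq_bot']
    exact fun a ha => eq_zero_of_forall_apply_mul_eq_zero hl hl0 fun b => congr($ha b)
  obtain ⟨a, ha⟩ :=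
    (LinearMap.injective_iff_surjective_of_finrank_eq_finrank
      (Subspace.dual_finrank_eq (K := k) (V := H)).symm).1 hj f
  exact ⟨a, fun x => congr($ha x)⟩

theorem apply_isLeftIntegral_ne_zero [FiniteDimensional k H] (hl : IsRightIntegralDual k l)
    (hl0 : l ≠ 0) (hL : IsLeftIntegral k L) (hL0 : L ≠ 0) : l L ≠ 0 := by
  intro h
  refine hL0 ((Module.forall_dual_apply_eq_zero_iff k L).1 fun f => ?_)
  obtain ⟨a, ha⟩ := exists_apply_mul_eq hl hl0 f
  rw [← ha, hL a, map_smul, h, smul_zero]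

end Integrals

section Radford

open Coalgebra HopfAlgebra

variable {k H : Type*} [Field k] [Ring H] [HopfAlgebra k H] {l : Module.Dual k H} {g L : H}
  {α : H →ₐ[k] k}

theorem antipode_lid_map_comul (hl : IsRightIntegralDual k l) (hL : IsLeftIntegral k L) (a : H) :
    antipode k (TensorProduct.lid k H
      (TensorProduct.map (l ∘ₗ LinearMap.mulLeft k a) LinearMap.id (comul L))) = l L • a := by
  have h : l ∘ₗ LinearMap.mulRight k L = l L • (counit : H →ₗ[k] k) := by
    ext x; simp [hL x, mul_comm]
  have hmap : antipode k ∘ₗ (TensorProduct.lid k H).toLinearMap ∘ₗ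
      TensorProduct.map (l ∘ₗ LinearMap.mulLeft k a) LinearMap.id =
      (TensorProduct.lid k H).toLinearMap ∘ₗ
        TensorProduct.map (l ∘ₗ LinearMap.mulLeft k a) (antipode k) := by
    ext x y; simp
  refine (congr($hmap (comul L))).trans ?_
  refine (lid_map_comp_mulRight_comul hl a L).symm.trans ?_
  rw [h, TensorProduct.map_smul_left, LinearMap.smul_apply, map_smul, ← hitLeft_apply,
    hitLeft_counit, Module.End.one_apply]

theorem lid_map_mulRight_comul (hl : IsRightIntegralDual k l) (hL : ∀ a : H, L * a = α a • L)
    (b : H) :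
    TensorProduct.lid k H
        (TensorProduct.map (l ∘ₗ LinearMap.mulRight k b) LinearMap.id (comul L)) =
      l L • antipode k (hitLeft α.toLinearMap b) := by
  have h : l ∘ₗ LinearMap.mulLeft k L = l L • α.toLinearMap := by
    ext x; simp [hL x, mul_comm]
  have hmap : (TensorProduct.lid k H).toLinearMap ∘ₗ
        TensorProduct.map α.toLinearMap (antipode k) =
      antipode k ∘ₗ (TensorProduct.lid k H).toLinearMap ∘ₗ
        TensorProduct.map α.toLinearMap LinearMap.id := by
    ext x y; simp
  rw [lid_map_comp_mulRight_comul hl, h, TensorProduct.map_smul_left, LinearMap.smul_apply,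
    map_smul]
  exact congr(l L • $hmap (comul b))

theorem rid_map_mulLeft_comul (hg : ∀ f : Module.Dual k H, conv f l = f g • l)
    (hL : IsLeftIntegral k L) (a : H) :
    TensorProduct.rid k H
        (TensorProduct.map LinearMap.id (l ∘ₗ LinearMap.mulLeft k a) (comul L)) =
      l L • (antipode k a * g) := by
  have h : l ∘ₗ LinearMap.mulRight k L = l L • (counit : H →ₗ[k] k) := by
    ext x; simp [hL x, mul_comm]
  have hmap : (TensorProduct.rid k H).toLinearMap ∘ₗ
        TensorProduct.map (LinearMap.mulRight k g ∘ₗ antipode k) (counit : H →ₗ[k] k) =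
      (LinearMap.mulRight k g ∘ₗ antipode k) ∘ₗ (TensorProduct.rid k H).toLinearMap ∘ₗ
        TensorProduct.map LinearMap.id counit := by
    ext x y; simp
  rw [← rid_map_comp_mulRight_comul hg, h, TensorProduct.map_smul_right, LinearMap.smul_apply,
    map_smul]
  refine (congr(l L • $hmap (comul a))).trans ?_
  simp only [LinearMap.comp_apply, LinearEquiv.coe_coe]
  rw [← hitRight_apply, hitRight_counit]
  simp

theorem rid_map_mulRight_comul (hg : ∀ f : Module.Dual k H, conv f l = f g • l)
    (hL : ∀ a : H, L * a = α a • L) (b : H) :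
    TensorProduct.rid k H (TensorProduct.map (LinearMap.mulRight k g ∘ₗ antipode k)
        (l ∘ₗ LinearMap.mulRight k b) (comul L)) =
      l L • hitRight α.toLinearMap b := by
  have h : l ∘ₗ LinearMap.mulLeft k L = l L • α.toLinearMap := by
    ext x; simp [hL x, mul_comm]
  rw [rid_map_comp_mulRight_comul hg, h, TensorProduct.map_smul_right, LinearMap.smul_apply,
    map_smul, hitRight_apply]

/-- The Radford formula for the fourth power of the antipode. -/
theorem antipode_mul_antipode_pow_four_mul [FiniteDimensional k H]
    (hl : IsRightIntegralDual k l) (hl0 : l ≠ 0)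
    (hg : ∀ f : Module.Dual k H, conv f l = f g • l) (hL0 : L ≠ 0) (hL : IsLeftIntegral k L)
    (hα : ∀ a : H, L * a = α a • L) (b : H) :
    antipode k g * ((antipode k : Module.End k H) ^ 4) (hitLeft α.toLinearMap b) * g =
      hitRight α.toLinearMap b := by
  have hc := apply_isLeftIntegral_ne_zero hl hl0 hL hL0
  obtain ⟨t, ht⟩ := exists_apply_mul_eq hl hl0 (l ∘ₗ LinearMap.mulRight k b)
  replace ht : l ∘ₗ LinearMap.mulRight k b = l ∘ₗ LinearMap.mulLeft k t :=
    LinearMap.ext fun x => (ht x).symm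
  have ht2 : t = antipode k (antipode k (hitLeft α.toLinearMap b)) := by
    have := antipode_lid_map_comul hl hL t
    rw [← ht, lid_map_mulRight_comul hl hα, map_smul] at this
    exact (smul_right_injective H hc this).symm
  have hmap : (TensorProduct.rid k H).toLinearMap ∘ₗ
        TensorProduct.map (LinearMap.mulRight k g ∘ₗ antipode k) (l ∘ₗ LinearMap.mulLeft k t) =
      (LinearMap.mulRight k g ∘ₗ antipode k) ∘ₗ (TensorProduct.rid k H).toLinearMap ∘ₗ
        TensorProduct.map LinearMap.id (l ∘ₗ LinearMap.mulLeft k t) := by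
    ext x y; simp
  have hB := rid_map_mulRight_comul hg hα b
  rw [ht] at hB
  have hB' := (congr($hmap (comul L))).symm.trans hB
  simp only [LinearMap.comp_apply, LinearEquiv.coe_coe] at hB'
  rw [rid_map_mulLeft_comul hg hL, map_smul, map_smul] at hB'
  rw [← smul_right_injective H hc hB', ht2]
  simp [pow_succ, antipode_mul_antidistrib]

/-- If the left integral has zero counit, then the trace of `S⁻²` vanishes. -/
theorem trace_sq_eq_zero_of_counit_eq_zero [FiniteDimensional k H]
    (hl : IsRightIntegralDual k l) (hl0 : l ≠ 0) (hL0 : L ≠ 0) (hL : IsLeftIntegral k L)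
    (hL1 : counit (R := k) L = 0) {M : Module.End k H}
    (hSM : (antipode k : Module.End k H) * M = 1) (hMS : M * (antipode k : Module.End k H) = 1) :
    LinearMap.trace k H (M * M) = 0 := by
  have hc := apply_isLeftIntegral_ne_zero hl hl0 hL hL0
  let φ : H →ₗ[k] Module.Dual k H := LinearMap.mk₂ k (fun x a => l (a * x))
    (by simp [mul_add]) (by simp) (by simp [add_mul]) (by simp)
  have happly (t : H ⊗[k] H) (a : H) : dualTensorHom k H H (TensorProduct.map φ M t) a =
      M (TensorProduct.lid k H
        (TensorProduct.map (l ∘ₗ LinearMap.mulLeft k a) LinearMap.id t)) := by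
    induction t with
    | zero => simp
    | add s t hs ht => simp only [map_add, LinearMap.add_apply, hs, ht]
    | tmul x y => simp [φ]
  have htrace (t : H ⊗[k] H) : LinearMap.trace k H (dualTensorHom k H H (TensorProduct.map φ M t)) =
      l (LinearMap.mul' k H (TensorProduct.map M LinearMap.id (TensorProduct.comm k H H t))) := by
    induction t with
    | zero => simp
    | add s t hs ht => simp only [map_add, hs, ht]
    | tmul x y => rw [LinearMap.trace_eq_contract_apply]; simp [φ]
  have hMapply (x : H) : antipode k (M x) = x := congr($hSM x)
  have hinner (t : H ⊗[k] H) : antipode k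
      (LinearMap.mul' k H (TensorProduct.map M LinearMap.id (TensorProduct.comm k H H t))) =
      LinearMap.mul' k H ((antipode k).rTensor H t) := by
    induction t with
    | zero => simp
    | add s t hs ht => simp only [map_add, hs, ht]
    | tmul x y => simp [antipode_mul_antidistrib, hMapply]
  have hzero : LinearMap.mul' k H
      (TensorProduct.map M LinearMap.id (TensorProduct.comm k H H (comul L))) = 0 := by
    have := hinner (comul L)
    rw [mul_antipode_rTensor_comul_apply, hL1, map_zero] at this
    have hM := congr(M $this)
    rw [map_zero, ← Module.End.mul_apply, hMS, Module.End.one_apply] at hM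
    exact hM
  have heq : dualTensorHom k H H (TensorProduct.map φ M (comul L)) = l L • (M * M) := by
    ext a
    have := congr(M $(antipode_lid_map_comul hl hL a))
    rw [← Module.End.mul_apply, hMS, Module.End.one_apply] at this
    rw [happly, this]
    simp
  have := htrace (comul L)
  rw [heq, hzero, map_zero, map_smul, smul_eq_zero] at this
  exact this.resolve_left hc

theorem counit_eq_zero_of_ne (hL0 : L ≠ 0) (hL : IsLeftIntegral k L)
    (hα : ∀ a : H, L * a = α a • L) (hne : α.toLinearMap ≠ counit) : counit (R := k) L = 0 := by
  by_contra h
  refine hne (LinearMap.ext fun a => ?_)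
  have h1 : L * (a * L) = L * a * L := (mul_assoc _ _ _).symm
  rw [hα a, hL a, mul_smul_comm, smul_mul_assoc, hL L, smul_smul, smul_smul] at h1
  have := smul_left_injective k hL0 h1
  exact (mul_right_cancel₀ h this).symm

end Radford

section Distinguished

open Coalgebra HopfAlgebra WithConv

variable {k H : Type*} [Field k] [Ring H] [HopfAlgebra k H]

theorem hitRight_antipode (f : Module.Dual k H) (x : H) :
    hitRight f (antipode k x) = antipode k (hitLeft (f ∘ₗ antipode k) x) := by
  rw [hitRight_apply, comul_antipode, hitLeft_apply]
  generalize comul (R := k) x = t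
  induction t with
  | zero => simp
  | add s t hs ht => simp only [map_add, hs, ht]
  | tmul x y => simp

theorem hitLeft_antipode (f : Module.Dual k H) (x : H) :
    hitLeft f (antipode k x) = antipode k (hitRight (f ∘ₗ antipode k) x) := by
  rw [hitLeft_apply, comul_antipode, hitRight_apply]
  generalize comul (R := k) x = t
  induction t with
  | zero => simp
  | add s t hs ht => simp only [map_add, hs, ht]
  | tmul x y => simp

theorem conv_comp_antipode_right (α : H →ₐ[k] k) :
    conv α.toLinearMap (α.toLinearMap ∘ₗ antipode k) = counit :=
  congr(ofConv $(toConv_algHom_comp_mul α (LinearMap.id_mul_antipode (R := k) (C := H))))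

theorem conv_comp_antipode_left (α : H →ₐ[k] k) :
    conv (α.toLinearMap ∘ₗ antipode k) α.toLinearMap = counit :=
  congr(ofConv $(toConv_algHom_comp_mul α (LinearMap.antipode_mul_id (R := k) (C := H))))

theorem hitRight_mul_antipode_mul_hitLeft (α : H →ₐ[k] k) :
    hitRight α.toLinearMap * (antipode k : Module.End k H) * hitLeft α.toLinearMap =
      antipode k := by
  ext x
  rw [Module.End.mul_apply, Module.End.mul_apply, hitRight_antipode,
    ← Module.End.mul_apply (hitLeft _),
    hitLeft_mul_hitLeft, conv_comp_antipode_right, hitLeft_counit, Module.End.one_apply]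

theorem hitLeft_mul_antipode_mul_hitRight (α : H →ₐ[k] k) :
    hitLeft α.toLinearMap * (antipode k : Module.End k H) * hitRight α.toLinearMap =
      antipode k := by
  ext x
  rw [Module.End.mul_apply, Module.End.mul_apply, hitLeft_antipode,
    ← Module.End.mul_apply (hitRight _),
    hitRight_mul_hitRight, conv_comp_antipode_left, hitRight_counit, Module.End.one_apply]

theorem commute_antipode_sq_hitLeft (α : H →ₐ[k] k) :
    Commute ((antipode k : Module.End k H) ^ 2) (hitLeft α.toLinearMap) := by
  have h1 := hitRight_mul_antipode_mul_hitLeft (k := k) α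
  have h2 := hitLeft_mul_antipode_mul_hitRight (k := k) α
  calc (antipode k : Module.End k H) ^ 2 * hitLeft α.toLinearMap
      = (hitLeft α.toLinearMap * (antipode k : Module.End k H) * hitRight α.toLinearMap) *
          (antipode k : Module.End k H) * hitLeft α.toLinearMap := by rw [h2, sq]
    _ = hitLeft α.toLinearMap * (antipode k : Module.End k H) *
          (hitRight α.toLinearMap * (antipode k : Module.End k H) * hitLeft α.toLinearMap) := by
        simp only [mul_assoc]
    _ = hitLeft α.toLinearMap * (antipode k : Module.End k H) ^ 2 := by rw [h1, sq, mul_assoc]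

theorem counit_eq_one_of_isGroupLike {g : H} (hg : IsGroupLike k g) : counit (R := k) g = 1 := by
  have h := hitLeft_of_comul_eq hg.2 counit
  rw [hitLeft_counit, Module.End.one_apply] at h
  exact (smul_left_injective k hg.1 (by simpa using h)).symm

theorem mul_antipode_of_isGroupLike {g : H} (hg : IsGroupLike k g) : g * antipode k g = 1 := by
  have h := mul_antipode_lTensor_comul_apply (R := k) g
  rw [hg.2, counit_eq_one_of_isGroupLike hg] at h
  simpa using h

theorem antipode_eq_of_mul_eq_one {g g' : H} (hg : IsGroupLike k g) (h : g' * g = 1) :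
    antipode k g = g' :=
  (left_inv_eq_right_inv h (mul_antipode_of_isGroupLike hg)).symm

theorem antipode_eq_of_mul_eq_one' {g g' : H} (hg : IsGroupLike k g) (h : g' * g = 1) :
    antipode k g' = g := by
  have h1 := congr(antipode k $h)
  rw [antipode_mul_antidistrib, antipode_one, antipode_eq_of_mul_eq_one hg h] at h1
  have h2 : g' = antipode k g := (antipode_eq_of_mul_eq_one hg h).symm
  exact (left_inv_eq_right_inv (h2 ▸ mul_antipode_of_isGroupLike hg) h1).symm

/-- Left multiplication by the first element composed with right multiplication by the second;
this is conjugation when the two elements are inverse to each other. -/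
noncomputable def conjEnd (k : Type*) {H : Type*} [Field k] [Ring H] [Algebra k H] (g g' : H) :
    Module.End k H :=
  LinearMap.mulLeft k g * LinearMap.mulRight k g'

@[simp]
theorem conjEnd_apply (g g' x : H) : conjEnd k g g' x = g * x * g' := by
  simp [conjEnd, mul_assoc]

theorem conjEnd_mul {g g' : H} (h : g' * g = 1) (x y : H) :
    conjEnd k g g' (x * y) = conjEnd k g g' x * conjEnd k g g' y := by
  simp only [conjEnd_apply, mul_assoc]
  rw [← mul_assoc g' g, h, one_mul]

theorem comul_conjEnd {g g' : H} (hg : comul g = g ⊗ₜ[k] g) (hg' : comul g' = g' ⊗ₜ[k] g')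
    (x : H) :
    comul (conjEnd k g g' x) = TensorProduct.map (conjEnd k g g') (conjEnd k g g') (comul x) := by
  rw [conjEnd_apply, Bialgebra.comul_mul, Bialgebra.comul_mul, hg, hg']
  generalize comul (R := k) x = t
  induction t with
  | zero => simp
  | add s t hs ht => simp only [map_add, mul_add, add_mul, hs, ht]
  | tmul x y => simp

theorem commute_conjEnd_hitLeft {g g' : H} (hg : comul g = g ⊗ₜ[k] g)
    (hg' : comul g' = g' ⊗ₜ[k] g') (h : g' * g = 1) (α : H →ₐ[k] k) :
    Commute (conjEnd k g g') (hitLeft α.toLinearMap) := by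
  ext x
  have hα : α g' * α g = 1 := by rw [← map_mul, h, map_one]
  simp [hitLeft_mul, hitLeft_of_comul_eq hg, hitLeft_of_comul_eq hg', smul_smul, hα]

theorem commute_conjEnd_hitRight {g g' : H} (hg : comul g = g ⊗ₜ[k] g)
    (hg' : comul g' = g' ⊗ₜ[k] g') (h : g' * g = 1) (α : H →ₐ[k] k) :
    Commute (conjEnd k g g') (hitRight α.toLinearMap) := by
  ext x
  have hα : α g' * α g = 1 := by rw [← map_mul, h, map_one]
  simp [hitRight_mul, hitRight_of_comul_eq hg, hitRight_of_comul_eq hg', smul_smul, hα]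

theorem comul_pow_of_comul_eq {g : H} (hg : comul g = g ⊗ₜ[k] g) (n : ℕ) :
    comul (g ^ n) = (g ^ n) ⊗ₜ[k] (g ^ n) := by
  rw [Bialgebra.comul_pow, hg, Algebra.TensorProduct.tmul_pow]

end Distinguished

/-- Lemma 5.3. Let `p` be an odd prime and `H` a Hopf algebra over an
algebraically closed field of characteristic `0` such that the distinguished group-like
element `g` of `H` and the distinguished group-like element `α` of `H*` both have order `p`
(the order of `α` is taken with respect to the convolution product, whose unit is the counit).
Then `Tr(S^{2p}) = p² d` for some integer `d`. -/
theorem stmt6 (k : Type*) [Field k] [IsAlgClosed k] [CharZero k]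
    (p : ℕ) (hp : p.Prime) (hpodd : Odd p)
    (H : Type*) [Ring H] [HopfAlgebra k H] [FiniteDimensional k H]
    (g : H) (hg : IsDistinguishedGroupLike k g) (hgord : orderOf g = p)
    (α : H →ₐ[k] k) (hα : IsDistinguishedGroupLikeDual k α)
    (hαord : sInf {m : ℕ | 0 < m ∧
      convPow (α.toLinearMap : Module.Dual k H) m = (Coalgebra.counit : H →ₗ[k] k)} = p) :
    ∃ d : ℤ,
      LinearMap.trace k H ((HopfAlgebra.antipode (R := k) (A := H) : Module.End k H) ^ (2 * p))
        = (p : k) ^ 2 * (d : k) := by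
  obtain ⟨hgl, l, hl0, hl, hlg⟩ := hg
  obtain ⟨L, hL0, hL, hLα⟩ := hα
  have hgp : g ^ p = 1 := hgord ▸ pow_orderOf_eq_one g
  have hpow : g ^ (p - 1) * g = 1 := by rw [← pow_succ, Nat.sub_add_cancel hp.one_le, hgp]
  have hpow' : g * g ^ (p - 1) = 1 := by rw [← pow_succ', Nat.sub_add_cancel hp.one_le, hgp]
  have hgΔ := hgl.2
  have hgΔ' := comul_pow_of_comul_eq hgΔ (p - 1)
  have hSg := antipode_eq_of_mul_eq_one hgl hpow
  have hSg' := antipode_eq_of_mul_eq_one' hgl hpow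
  have hmem : 0 < p ∧ convPow α.toLinearMap p = (Coalgebra.counit : H →ₗ[k] k) := by
    have := Nat.sInf_mem (Nat.nonempty_of_pos_sInf (hαord ▸ hp.pos))
    rwa [hαord] at this
  have hne : α.toLinearMap ≠ Coalgebra.counit := by
    intro h
    have hone : convPow α.toLinearMap 1 = (Coalgebra.counit : H →ₗ[k] k) := by
      ext x
      have := apply_hitLeft (Coalgebra.counit : Module.Dual k H) Coalgebra.counit x
      rw [hitLeft_counit, Module.End.one_apply] at this
      rw [h, this]
      rfl
    have : p ≤ 1 := hαord ▸ Nat.sInf_le ⟨one_pos, hone⟩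
    exact absurd hp.one_lt (by omega)
  have hA : hitLeft α.toLinearMap ^ p = 1 := by
    rw [← hitLeft_convPow, hmem.2, hitLeft_counit]
  have hB : hitRight α.toLinearMap ^ p = 1 := by
    rw [← hitRight_convPow, hmem.2, hitRight_counit]
  have hDpow : conjEnd k g (g ^ (p - 1)) ^ p = 1 := by
    rw [conjEnd, (LinearMap.commute_mulLeft_right g _).mul_pow, LinearMap.pow_mulLeft,
      LinearMap.pow_mulRight, ← pow_mul, mul_comm (p - 1), pow_mul, hgp, one_pow]
    ext x
    simp
  have hDA := commute_conjEnd_hitLeft hgΔ hgΔ' hpow α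
  have hDB := commute_conjEnd_hitRight hgΔ hgΔ' hpow α
  have hSA := commute_antipode_sq_hitLeft (k := k) α
  have hRadford : (HopfAlgebra.antipode k : Module.End k H) ^ 4 * hitLeft α.toLinearMap =
      conjEnd k g (g ^ (p - 1)) * hitRight α.toLinearMap := by
    ext b
    rw [Module.End.mul_apply, Module.End.mul_apply,
      ← antipode_mul_antipode_pow_four_mul hl hl0 hlg hL0 hL hLα b, conjEnd_apply, hSg]
    simp only [mul_assoc, hpow', mul_one]
    rw [← mul_assoc, hpow', one_mul]
  have hS : (HopfAlgebra.antipode k : Module.End k H) ^ (4 * p) = 1 := by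
    have hcomm : Commute ((HopfAlgebra.antipode k : Module.End k H) ^ 4)
        (hitLeft α.toLinearMap) := by
      simpa [← pow_mul] using hSA.pow_left 2
    have := congr($hRadford ^ p)
    rwa [hcomm.mul_pow, hDB.mul_pow, hA, hB, hDpow, mul_one, mul_one, ← pow_mul] at this
  have hpp := hp.pos
  have htr : LinearMap.trace k H
      ((HopfAlgebra.antipode k : Module.End k H) ^ (4 * p - 2)) = 0 := by
    have := trace_sq_eq_zero_of_counit_eq_zero hl hl0 hL0 hL
      (counit_eq_zero_of_ne hL0 hL hLα hne)
      (M := (HopfAlgebra.antipode k : Module.End k H) ^ (4 * p - 1))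
      (by rw [← pow_succ', Nat.sub_add_cancel (by omega), hS])
      (by rw [← pow_succ, Nat.sub_add_cancel (by omega), hS])
    rwa [← pow_add, show 4 * p - 1 + (4 * p - 1) = 4 * p + (4 * p - 2) by omega, pow_add, hS,
      one_mul] at this
  refine exists_int_trace_pow_eq_sq_mul hp hpodd (isUnit_canonicalMap (k := k) (H := H))
    (L := LinearMap.mulLeft k g) (R := LinearMap.mulRight k g)
    (D := conjEnd k g (g ^ (p - 1))) (A := hitLeft α.toLinearMap) (B := hitRight α.toLinearMap)
    hS ?_ hDpow hA hB (commute_canonicalMap_map antipode_sq_mul (by simp [sq]) comul_antipode_sq)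
    (semiconjBy_canonicalMap_mulRight hgΔ) (commute_canonicalMap_mulLeft g)
    (commute_canonicalMap_map (conjEnd_mul hpow) (by simp [hpow']) (comul_conjEnd hgΔ hgΔ'))
    (semiconjBy_canonicalMap_hitLeft α) (commute_canonicalMap_hitRight _) ?_ hSA ?_ hDA hDB
    (commute_hitLeft_hitRight _ _) ?_ ?_ (hitRight_mul_antipode_mul_hitLeft α) hRadford htr
  · rw [LinearMap.pow_mulRight, hgp]
    simp [Module.End.one_eq_id]
  · ext x
    simp [sq, HopfAlgebra.antipode_mul_antidistrib, hSg, hSg']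
  · ext x
    simp [HopfAlgebra.antipode_mul_antidistrib, hSg, hSg', mul_assoc]
  · rw [LinearMap.pow_mulRight, conjEnd]
  · ext x
    simp only [Module.End.mul_apply, LinearMap.mulLeft_apply, LinearMap.mulRight_apply,
      HopfAlgebra.antipode_mul_antidistrib, hSg]
    rw [← mul_assoc, hpow', one_mul]
end
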